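/- (Łojasiewicz inequality I) Let M = (M_0, M_1, M_2, …) be an increasing sequence of positive real numbers with M_0 = 1 that is logarithmically convex, satisfies ∑_{k≥0} M_k/((k+1)M_{k+1}) = ∞, and satisfies sup_{j≥1} (M_{j+1}/M_j)^{1/j} < ∞. Let U ⊆ ℝ^N be a connected open set and let f, g ∈ C^ℝ_M(U). If K ⊆ U is compact and there is a neighborhood of K on which {x : g(x) = 0} ⊆ {x : f(x) = 0}, then there exist a constant C > 0, a positive rational α, and an open neighborhood W of K in U such that |g(x)| ≥ C·|f(x)|^α for all x ∈ W. -/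

import Mathlib

/-- The `i`-th partial derivative of a function on Euclidean space. -/
noncomputable def pd {ι : Type} [Fintype ι] [DecidableEq ι] {W : Type} [NormedAddCommGroup W]
    [NormedSpace ℝ W] (i : ι) (f : EuclideanSpace ℝ ι → W) : EuclideanSpace ℝ ι → W :=
  fun x => fderiv ℝ f x (EuclideanSpace.single i 1)

/-- The multi-index derivative `D^α f`. -/
noncomputable def mderiv {ι : Type} [Fintype ι] [DecidableEq ι] {W : Type} [NormedAddCommGroup W]
    [NormedSpace ℝ W] (α : ι → ℕ) (f : EuclideanSpace ℝ ι → W) : EuclideanSpace ℝ ι → W :=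
  (Finset.univ : Finset ι).toList.foldr (fun i g => (pd i)^[α i] g) f

/-- Membership in the real Denjoy-Carleman class `C^ℝ_M(U)`: `f` is `C^∞` on `U` and on every
compact `K ⊆ U` there are `A, B > 0` with `|(1/α!) D^α f(x)| ≤ A B^{|α|} M_{|α|}`. -/
def CRM {ι : Type} [Fintype ι] [DecidableEq ι] (M : ℕ → ℝ)
    (U : Set (EuclideanSpace ℝ ι)) (f : EuclideanSpace ℝ ι → ℝ) : Prop :=
  ContDiffOn ℝ (⊤ : ℕ∞) f U ∧
  ∀ K : Set (EuclideanSpace ℝ ι), K ⊆ U → IsCompact K →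
    ∃ A B : ℝ, 0 < A ∧ 0 < B ∧ ∀ x ∈ K, ∀ α : ι → ℕ,
      (1 / (∏ i, ((α i).factorial : ℝ))) * |mderiv α f x| ≤
        A * B ^ (∑ i, α i) * M (∑ i, α i)

/-!
Since the space of ultrafilters is compact, it suffices to compare `f` and `g` along a single
ultrafilter that converges to a point of `K`. Resolution of singularities along one ultrafilter
requires no gluing of charts: at each local blowing-up, power substitution or translation one
follows the only chart that the ultrafilter sees.

By the Denjoy-Carleman theorem a nonzero germ has a nonvanishing derivative of some order `d + 1`
along a line. The implicit function theorem allows a Tschirnhausen translation that removes the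
derivative of order `d`, and Hadamard division then writes the germ as a polynomial of degree
`d + 1` in one variable `t` without term of degree `d`, with a unit as leading coefficient. By
induction on the dimension the remaining coefficients become comparable monomials times units in
the other variables, so that a common factor `s` can be extracted with weights. Where `t = O(s)`,
blowing up `t = s t'` lowers the order, as the term of degree `d` is missing; where `s = o(t)`, the
germ is a power of `t` times a unit.

Once `f` and `g` are monomials times units, the inclusion of zero sets says that each coordinate
occurring in the monomial of `g` occurs in that of `f`, whence `g` divides a power of `f`.
-/

universe u

namespace DenjoyCarleman

open Set Filter Topology
open scoped ContDiff Nat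

/-- A normalised, increasing, logarithmically convex weight sequence. -/
class IsWeight (M : ℕ → ℝ) : Prop where
  pos : ∀ j, 0 < M j
  monotone : Monotone M
  zero : M 0 = 1
  ratio_le_ratio_succ : ∀ j, M (j + 1) / M j ≤ M (j + 2) / M (j + 1)

/-- A weight sequence whose Denjoy-Carleman class is stable under differentiation. -/
class IsRegularWeight (M : ℕ → ℝ) : Prop extends IsWeight M where
  exists_ratio_root_le : ∃ C : ℝ, ∀ j : ℕ, 1 ≤ j → (M (j + 1) / M j) ^ ((1 : ℝ) / j) ≤ C

/-- A regular weight sequence that satisfies the Denjoy-Carleman condition, so that its class is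
quasianalytic. -/
class IsQuasianalyticWeight (M : ℕ → ℝ) : Prop extends IsRegularWeight M where
  tsum_eq_top : ∑' k : ℕ, ENNReal.ofReal (M k / (((k : ℝ) + 1) * M (k + 1))) = ⊤

section Weight

variable (M : ℕ → ℝ) [IsWeight M]

lemma weight_pos (j : ℕ) : 0 < M j := IsWeight.pos j

lemma ratio_monotone : Monotone fun j => M (j + 1) / M j :=
  monotone_nat_of_le_succ IsWeight.ratio_le_ratio_succ

lemma weight_mul_le (a b : ℕ) : M a * M b ≤ M (a + b) := by
  induction b with
  | zero => simp [IsWeight.zero (M := M)]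
  | succ b ih =>
    have hratio : M (b + 1) * M (a + b) ≤ M (a + b + 1) * M b :=
      (div_le_div_iff₀ (weight_pos M _) (weight_pos M _)).1
        (ratio_monotone M (Nat.le_add_left b a))
    refine le_of_mul_le_mul_right ?_ (weight_pos M b)
    calc M a * M (b + 1) * M b = M (b + 1) * (M a * M b) := by ring
      _ ≤ M (b + 1) * M (a + b) := by gcongr; exact (weight_pos M _).le
      _ ≤ M (a + (b + 1)) * M b := hratio

end Weight

lemma exists_weight_succ_le (M : ℕ → ℝ) [IsRegularWeight M] :
    ∃ C : ℝ, 1 ≤ C ∧ ∀ j, M (j + 1) ≤ C ^ (j + 1) * M j := by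
  obtain ⟨C, hC⟩ := IsRegularWeight.exists_ratio_root_le (M := M)
  set D := max (max C 1) (M 1)
  have hD : 1 ≤ D := (le_max_right _ _).trans (le_max_left _ _)
  refine ⟨D, hD, fun j => ?_⟩
  rcases j.eq_zero_or_pos with rfl | hj
  · simp [IsWeight.zero (M := M), D]
  · have hratio : 0 ≤ M (j + 1) / M j := (div_pos (weight_pos M _) (weight_pos M _)).le
    have hroot : (M (j + 1) / M j) ^ ((1 : ℝ) / j) ≤ D :=
      (hC j hj).trans ((le_max_left _ _).trans (le_max_left _ _))
    have hpow := pow_le_pow_left₀ (Real.rpow_nonneg hratio _) hroot j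
    rw [one_div, Real.rpow_inv_natCast_pow hratio hj.ne', div_le_iff₀ (weight_pos M j)] at hpow
    refine hpow.trans ?_
    gcongr
    exacts [(weight_pos M j).le, j.le_succ]

section InvSq

/-- The summable factor `1 / (n + 1) ^ 2`. Inserted into derivative bounds it makes them stable
under the Leibniz rule, because its convolution square is bounded by a multiple of itself. -/
noncomputable def invSq (n : ℕ) : ℝ := 1 / ((n : ℝ) + 1) ^ 2

lemma invSq_pos (n : ℕ) : 0 < invSq n := by unfold invSq; positivity

lemma invSq_zero : invSq 0 = 1 := by simp [invSq]

lemma invSq_le_one (n : ℕ) : invSq n ≤ 1 := by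
  rw [invSq, div_le_one (by positivity)]
  exact one_le_pow₀ (by linarith [n.cast_nonneg (α := ℝ)])

lemma succ_le_two_pow (n : ℕ) : (n : ℝ) + 1 ≤ 2 ^ n := by
  exact_mod_cast n.lt_two_pow_self

lemma one_le_four_pow_mul_invSq (n : ℕ) : 1 ≤ 4 ^ n * invSq n := by
  rw [invSq, mul_one_div, one_le_div (by positivity)]
  calc ((n : ℝ) + 1) ^ 2 ≤ (2 ^ n) ^ 2 := by gcongr; exact succ_le_two_pow n
    _ = 4 ^ n := by rw [← pow_mul, mul_comm, pow_mul]; norm_num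

lemma sum_range_invSq_le (n : ℕ) : ∑ j ∈ Finset.range n, invSq j ≤ 2 := by
  have hIoo : Finset.Ioo 0 (n + 1) = Finset.Ico 1 (n + 1) := rfl
  have h := sum_Ioo_inv_sq_le (α := ℝ) 0 (n + 1)
  rw [hIoo, Finset.sum_Ico_eq_sum_range] at h
  simpa [invSq, add_comm] using h

lemma invSq_mul_invSq_le (a b : ℕ) :
    invSq a * invSq b ≤ 2 * invSq (a + b + 1) * (invSq a + invSq b) := by
  have hsum : ((a + b + 1 : ℕ) : ℝ) + 1 = ((a : ℝ) + 1) + ((b : ℝ) + 1) := by push_cast; ring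
  unfold invSq
  rw [hsum]
  set x : ℝ := (a : ℝ) + 1
  set y : ℝ := (b : ℝ) + 1
  have hx : 0 < x := by positivity
  have hy : 0 < y := by positivity
  calc 1 / x ^ 2 * (1 / y ^ 2) = (x + y) ^ 2 / ((x + y) ^ 2 * (x ^ 2 * y ^ 2)) := by field_simp
    _ ≤ 2 * (x ^ 2 + y ^ 2) / ((x + y) ^ 2 * (x ^ 2 * y ^ 2)) := by gcongr; exact add_sq_le
    _ = 2 * (1 / (x + y) ^ 2) * (1 / x ^ 2 + 1 / y ^ 2) := by field_simp; ring

open Finset in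
lemma sum_antidiagonal_invSq_mul_invSq_le (n : ℕ) :
    ∑ p ∈ antidiagonal n, invSq p.1 * invSq p.2 ≤ 8 * invSq (n + 1) := by
  have hle : ∀ p ∈ antidiagonal n,
      invSq p.1 * invSq p.2 ≤ 2 * invSq (n + 1) * (invSq p.1 + invSq p.2) := fun p hp => by
    simpa only [mem_antidiagonal.1 hp] using invSq_mul_invSq_le p.1 p.2
  have hswap : ∑ p ∈ antidiagonal n, invSq p.2 = ∑ p ∈ antidiagonal n, invSq p.1 :=
    Nat.sum_antidiagonal_swap (f := fun p => invSq p.1)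
  have hfst : ∑ p ∈ antidiagonal n, invSq p.1 ≤ 2 := by
    rw [Nat.sum_antidiagonal_eq_sum_range_succ fun i _ => invSq i]
    exact sum_range_invSq_le _
  calc ∑ p ∈ antidiagonal n, invSq p.1 * invSq p.2
      ≤ ∑ p ∈ antidiagonal n, 2 * invSq (n + 1) * (invSq p.1 + invSq p.2) := sum_le_sum hle
    _ = 2 * invSq (n + 1) * (2 * ∑ p ∈ antidiagonal n, invSq p.1) := by
        rw [← mul_sum, sum_add_distrib, hswap, two_mul (∑ p ∈ _, _)]
    _ ≤ 2 * invSq (n + 1) * (2 * 2) := by gcongr; linarith [invSq_pos (n + 1)]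
    _ = 8 * invSq (n + 1) := by ring

end InvSq

lemma choose_mul_factorial_mul_factorial_le (a b c : ℕ) :
    (a + b).choose a * ((c + a)! * b !) ≤ (c + (a + b))! := by
  have hchoose : (a + b).choose a ≤ (c + (a + b)).choose (c + a) := by
    rw [← add_assoc, Nat.choose_symm_add, Nat.choose_symm_add]
    exact Nat.choose_le_choose b (by omega)
  calc (a + b).choose a * ((c + a)! * b !)
      ≤ (c + (a + b)).choose (c + a) * ((c + a)! * b !) := by gcongr
    _ = (c + (a + b))! := by
        rw [← add_assoc, ← mul_assoc, Nat.choose_symm_add,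
          Nat.add_choose_mul_factorial_mul_factorial]

section Leibniz

variable {E F G H : Type*} [NormedAddCommGroup E] [NormedSpace ℝ E] [NormedAddCommGroup F]
  [NormedSpace ℝ F] [NormedAddCommGroup G] [NormedSpace ℝ G] [NormedAddCommGroup H]
  [NormedSpace ℝ H]

lemma iteratedFDeriv_eq_of_eqOn {f g : E → F} {s : Set E} (hs : IsOpen s) (h : EqOn f g s) (n : ℕ)
    {y : E} (hy : y ∈ s) : iteratedFDeriv ℝ n f y = iteratedFDeriv ℝ n g y :=
  ((h.eventuallyEq_of_mem (hs.mem_nhds hy)).iteratedFDeriv ℝ n).eq_of_nhds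

open Finset in
lemma norm_iteratedFDeriv_bilinear_le (L : E →L[ℝ] F →L[ℝ] G) {f : H → E} {g : H → F} {s : Set H}
    (hs : IsOpen s) (hf : ContDiffOn ℝ ∞ f s) (hg : ContDiffOn ℝ ∞ g s) {y : H} (hy : y ∈ s)
    (n : ℕ) :
    ‖iteratedFDeriv ℝ n (fun z => L (f z) (g z)) y‖ ≤ ‖L‖ * ∑ p ∈ antidiagonal n,
      n.choose p.1 * ‖iteratedFDeriv ℝ p.1 f y‖ * ‖iteratedFDeriv ℝ p.2 g y‖ := by
  have h := L.norm_iteratedFDerivWithin_le_of_bilinear hf hg hs.uniqueDiffOn hy (n := n)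
    (by exact_mod_cast le_top)
  rw [Nat.sum_antidiagonal_eq_sum_range_succ
    fun i j => n.choose i * ‖iteratedFDeriv ℝ i f y‖ * ‖iteratedFDeriv ℝ j g y‖]
  simpa only [iteratedFDerivWithin_of_isOpen _ hs hy] using h

open Finset in
lemma norm_iteratedFDeriv_bilinear_le_of_le (M : ℕ → ℝ) [IsWeight M] (L : E →L[ℝ] F →L[ℝ] G)
    {f : H → E} {g : H → F} {s : Set H} (hs : IsOpen s) (hf : ContDiffOn ℝ ∞ f s)
    (hg : ContDiffOn ℝ ∞ g s) {y : H} (hy : y ∈ s) {P Q : ℕ → ℝ} (hP : ∀ i, 0 ≤ P i)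
    (hQ : ∀ j, 0 ≤ Q j) (c n : ℕ)
    (hfP : ∀ i ≤ n, ‖iteratedFDeriv ℝ i f y‖ ≤ P i * ((c + i)! * M (c + i)))
    (hgQ : ∀ j ≤ n, ‖iteratedFDeriv ℝ j g y‖ ≤ Q j * (j ! * M j)) :
    ‖iteratedFDeriv ℝ n (fun z => L (f z) (g z)) y‖ ≤
      ‖L‖ * ((∑ p ∈ antidiagonal n, P p.1 * Q p.2) * ((c + n)! * M (c + n))) := by
  have hM : ∀ j, 0 ≤ M j := fun j => (weight_pos M j).le
  refine (norm_iteratedFDeriv_bilinear_le L hs hf hg hy n).trans ?_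
  rw [sum_mul]
  refine mul_le_mul_of_nonneg_left (sum_le_sum fun ⟨i, j⟩ hp => ?_) (norm_nonneg L)
  obtain rfl : i + j = n := mem_antidiagonal.1 hp
  have hPi := hP i
  have hQj := hQ j
  have hMi := hM (c + i)
  have hMj := hM j
  have hfact : ((i + j).choose i : ℝ) * ((c + i)! * j !) ≤ (c + (i + j))! := by
    exact_mod_cast choose_mul_factorial_mul_factorial_le i j c
  have hweight : M (c + i) * M j ≤ M (c + (i + j)) := by
    simpa only [add_assoc] using weight_mul_le M (c + i) j
  calc ((i + j).choose i : ℝ) * ‖iteratedFDeriv ℝ i f y‖ * ‖iteratedFDeriv ℝ j g y‖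
      ≤ (i + j).choose i * (P i * ((c + i)! * M (c + i))) * (Q j * (j ! * M j)) := by
        gcongr
        exacts [hfP i (by omega), hgQ j (by omega)]
    _ = P i * Q j * ((i + j).choose i * ((c + i)! * j !) * (M (c + i) * M j)) := by ring
    _ ≤ P i * Q j * ((c + (i + j))! * M (c + (i + j))) := by
        gcongr

end Leibniz

section Class

variable {E F : Type*} [NormedAddCommGroup E] [NormedSpace ℝ E] [NormedAddCommGroup F]
  [NormedSpace ℝ F]

/-- Denjoy-Carleman bounds with constants `A ≥ 0` and `B ≥ 1` for the iterated Fréchet derivatives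
of `f` on the set `s`, which is open in all applications. -/
structure UltradiffBoundOn (M : ℕ → ℝ) (f : E → F) (s : Set E) (A B : ℝ) : Prop where
  contDiffOn : ContDiffOn ℝ ∞ f s
  nonneg : 0 ≤ A
  one_le : 1 ≤ B
  norm_le : ∀ n : ℕ, ∀ y ∈ s, ‖iteratedFDeriv ℝ n f y‖ ≤ A * B ^ n * (n ! * M n)

/-- `f` is ultradifferentiable at `x`: it is of Denjoy-Carleman class `M` on a neighbourhood of
`x`. -/
def UltradiffAt (M : ℕ → ℝ) (f : E → F) (x : E) : Prop :=
  ∃ s : Set E, IsOpen s ∧ x ∈ s ∧ ∃ A B : ℝ, UltradiffBoundOn M f s A B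

variable {M : ℕ → ℝ} {f g : E → F} {s t : Set E} {x : E} {A B : ℝ}

lemma UltradiffBoundOn.congr (hf : UltradiffBoundOn M f s A B) (hs : IsOpen s) (h : EqOn g f s) :
    UltradiffBoundOn M g s A B where
  contDiffOn := hf.contDiffOn.congr h
  nonneg := hf.nonneg
  one_le := hf.one_le
  norm_le n y hy := by
    rw [iteratedFDeriv_eq_of_eqOn hs h n hy]
    exact hf.norm_le n y hy

lemma UltradiffBoundOn.mono (hf : UltradiffBoundOn M f s A B) (h : t ⊆ s) :
    UltradiffBoundOn M f t A B :=
  ⟨hf.contDiffOn.mono h, hf.nonneg, hf.one_le, fun n y hy => hf.norm_le n y (h hy)⟩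

lemma UltradiffBoundOn.mono_right [IsWeight M] {B' : ℝ} (hf : UltradiffBoundOn M f s A B)
    (hB : B ≤ B') : UltradiffBoundOn M f s A B' where
  contDiffOn := hf.contDiffOn
  nonneg := hf.nonneg
  one_le := hf.one_le.trans hB
  norm_le n y hy := by
    have hA := hf.nonneg
    have hB0 : 0 ≤ B := by linarith [hf.one_le]
    have hMn := weight_pos M n
    exact (hf.norm_le n y hy).trans (by gcongr)

lemma UltradiffAt.congr (hf : UltradiffAt M f x) (h : g =ᶠ[𝓝 x] f) : UltradiffAt M g x := by
  obtain ⟨s, hs, hx, A, B, hb⟩ := hf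
  obtain ⟨t, ht, hto, hxt⟩ := eventually_nhds_iff.1 h
  exact ⟨s ∩ t, hs.inter hto, ⟨hx, hxt⟩, A, B,
    (hb.mono inter_subset_left).congr (hs.inter hto) fun y hy => ht y hy.2⟩

lemma UltradiffAt.contDiffAt (hf : UltradiffAt M f x) : ContDiffAt ℝ ∞ f x := by
  obtain ⟨s, hs, hx, A, B, hb⟩ := hf
  exact hb.contDiffOn.contDiffAt (hs.mem_nhds hx)

lemma UltradiffAt.continuousAt (hf : UltradiffAt M f x) : ContinuousAt f x :=
  hf.contDiffAt.continuousAt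

lemma UltradiffAt.eventually (hf : UltradiffAt M f x) : ∀ᶠ y in 𝓝 x, UltradiffAt M f y := by
  obtain ⟨s, hs, hx, A, B, hb⟩ := hf
  filter_upwards [hs.mem_nhds hx] with y hy using ⟨s, hs, hy, A, B, hb⟩

lemma UltradiffAt.exists_common_bound [IsWeight M] {G : Type*} [NormedAddCommGroup G]
    [NormedSpace ℝ G] {g : E → G} (hf : UltradiffAt M f x) (hg : UltradiffAt M g x) :
    ∃ s : Set E, IsOpen s ∧ x ∈ s ∧ ∃ A A' B : ℝ,
      UltradiffBoundOn M f s A B ∧ UltradiffBoundOn M g s A' B := by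
  obtain ⟨s, hs, hxs, A, B, hb⟩ := hf
  obtain ⟨t, ht, hxt, A', B', hb'⟩ := hg
  exact ⟨s ∩ t, hs.inter ht, ⟨hxs, hxt⟩, A, A', max B B',
    (hb.mono inter_subset_left).mono_right (le_max_left _ _),
    (hb'.mono inter_subset_right).mono_right (le_max_right _ _)⟩

lemma UltradiffBoundOn.exists_fderiv [IsRegularWeight M] (hf : UltradiffBoundOn M f s A B)
    (hs : IsOpen s) : ∃ A' B' : ℝ, UltradiffBoundOn M (fderiv ℝ f) s A' B' := by
  obtain ⟨C, hC1, hC⟩ := exists_weight_succ_le M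
  have hA := hf.nonneg
  have hB := hf.one_le
  refine ⟨A * B * C, B * 2 * C, hf.contDiffOn.fderiv_of_isOpen hs (by simp), by positivity,
    one_le_mul_of_one_le_of_one_le (by linarith) hC1, fun n y hy => ?_⟩
  have hMn := weight_pos M (n + 1)
  rw [norm_iteratedFDeriv_fderiv]
  calc ‖iteratedFDeriv ℝ (n + 1) f y‖ ≤ A * B ^ (n + 1) * ((n + 1)! * M (n + 1)) :=
        hf.norm_le (n + 1) y hy
    _ = A * B ^ (n + 1) * (((n : ℝ) + 1) * n ! * M (n + 1)) := by
        rw [Nat.factorial_succ]; push_cast; rfl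
    _ ≤ A * B ^ (n + 1) * (2 ^ n * n ! * (C ^ (n + 1) * M n)) := by
        gcongr
        exacts [succ_le_two_pow n, hC n]
    _ = A * B * C * (B * 2 * C) ^ n * (n ! * M n) := by rw [mul_pow, mul_pow]; ring

lemma UltradiffAt.fderiv_right [IsRegularWeight M] (hf : UltradiffAt M f x) :
    UltradiffAt M (fderiv ℝ f) x := by
  obtain ⟨s, hs, hx, A, B, hb⟩ := hf
  obtain ⟨A', B', hb'⟩ := hb.exists_fderiv hs
  exact ⟨s, hs, hx, A', B', hb'⟩

lemma ultradiffAt_of_hasFDerivAt [IsWeight M] {f' : E → E →L[ℝ] F} (hf' : UltradiffAt M f' x)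
    (h : ∀ᶠ y in 𝓝 x, HasFDerivAt f (f' y) y) : UltradiffAt M f x := by
  obtain ⟨t, ht, hxt, A, B, hb⟩ := hf'
  have hbdd : ∀ᶠ y in 𝓝 x, ‖f y‖ < ‖f x‖ + 1 :=
    h.self_of_nhds.continuousAt.norm.eventually_lt_const (by linarith)
  obtain ⟨s, hs, hso, hxs⟩ := eventually_nhds_iff.1 (hbdd.and (h.and (ht.eventually_mem hxt)))
  have hfderiv : EqOn (fderiv ℝ f) f' s := fun y hy => (hs y hy).2.1.fderiv
  have hst : s ⊆ t := fun y hy => (hs y hy).2.2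
  have hA := hb.nonneg
  have hB := hb.one_le
  refine ⟨s, hso, hxs, max A (‖f x‖ + 1), B, ?_, le_max_of_le_left hA, hB, fun n y hy => ?_⟩
  · rw [contDiffOn_infty_iff_fderiv_of_isOpen hso]
    exact ⟨fun y hy => (hs y hy).2.1.differentiableAt.differentiableWithinAt,
      (hb.contDiffOn.mono hst).congr hfderiv⟩
  · rcases n with _ | n
    · have hfy : ‖f y‖ ≤ max A (‖f x‖ + 1) := (hs y hy).1.le.trans (le_max_right _ _)
      simpa [IsWeight.zero (M := M)] using hfy
    · have hM := weight_pos M n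
      rw [← norm_iteratedFDeriv_fderiv, iteratedFDeriv_eq_of_eqOn hso hfderiv n hy]
      refine (hb.norm_le n y (hst hy)).trans ?_
      gcongr
      exacts [le_max_left _ _, n.le_succ, n.le_succ, IsWeight.monotone n.le_succ]

end Class

section Composition

variable {M : ℕ → ℝ} {E : Type*} {F G : Type u} [NormedAddCommGroup E] [NormedSpace ℝ E]
  [NormedAddCommGroup F] [NormedSpace ℝ F] [NormedAddCommGroup G] [NormedSpace ℝ G]
  {s : Set E} {t : Set F} {f : E → F}

open Finset in
lemma norm_iteratedFDeriv_succ_comp_le [IsWeight M] {g : F → G} (hs : IsOpen s) (ht : IsOpen t)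
    (hmap : MapsTo f s t) (hf : ContDiffOn ℝ ∞ f s) (hg : ContDiffOn ℝ ∞ g t)
    {y : E} (hy : y ∈ s) {P Q : ℕ → ℝ} (hP : ∀ i, 0 ≤ P i) (hQ : ∀ j, 0 ≤ Q j) (c n : ℕ)
    (hgP : ∀ i ≤ n, ‖iteratedFDeriv ℝ i (fderiv ℝ g ∘ f) y‖ ≤ P i * ((c + i)! * M (c + i)))
    (hfQ : ∀ j ≤ n, ‖iteratedFDeriv ℝ j (fderiv ℝ f) y‖ ≤ Q j * (j ! * M j)) :
    ‖iteratedFDeriv ℝ (n + 1) (g ∘ f) y‖ ≤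
      (∑ p ∈ antidiagonal n, P p.1 * Q p.2) * ((c + n)! * M (c + n)) := by
  have hchain : EqOn (fderiv ℝ (g ∘ f))
      (fun z => ContinuousLinearMap.compL ℝ E F G ((fderiv ℝ g ∘ f) z) (fderiv ℝ f z)) s := by
    intro z hz
    have hfz := (hf.contDiffAt (hs.mem_nhds hz)).differentiableAt (by simp)
    have hgz := (hg.contDiffAt (ht.mem_nhds (hmap hz))).differentiableAt (by simp)
    simp [fderiv_comp z hgz hfz]
  have hdf : ContDiffOn ℝ ∞ (fderiv ℝ f) s := hf.fderiv_of_isOpen hs (by simp)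
  have hdg : ContDiffOn ℝ ∞ (fderiv ℝ g) t := hg.fderiv_of_isOpen ht (by simp)
  have hM := weight_pos M (c + n)
  rw [← norm_iteratedFDeriv_fderiv, iteratedFDeriv_eq_of_eqOn hs hchain n hy]
  refine (norm_iteratedFDeriv_bilinear_le_of_le M _ hs (hdg.comp hf hmap) hdf hy hP hQ c n
    hgP hfQ).trans (mul_le_of_le_one_left ?_ (ContinuousLinearMap.norm_compL_le ℝ E F G))
  exact mul_nonneg (sum_nonneg fun p _ => mul_nonneg (hP _) (hQ _)) (by positivity)

/- The shift `k` makes the induction go through: `fderiv ℝ g` satisfies the hypothesis on `g` with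
`k + 1` in place of `k`, and `D (g ∘ f) = (D g ∘ f) · D f`. -/
open Finset in
lemma norm_iteratedFDeriv_comp_le_of_norm_fderiv_le [IsWeight M] (hs : IsOpen s) (ht : IsOpen t)
    (hmap : MapsTo f s t) (hf : ContDiffOn ℝ ∞ f s) {R S D : ℝ} (hR : 0 ≤ R) (hS : 0 ≤ S)
    (hD : 0 ≤ D) (hRS : 8 * R * D ≤ S) {n : ℕ} (hfD : ∀ m < n, ∀ y ∈ s,
      ‖iteratedFDeriv ℝ m (fderiv ℝ f) y‖ ≤ D * S ^ m * invSq m * (m ! * M m)) :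
    ∀ m ≤ n, ∀ (G : Type u) [NormedAddCommGroup G] [NormedSpace ℝ G] (g : F → G) (k : ℕ) (A : ℝ),
      0 ≤ A → ContDiffOn ℝ ∞ g t →
      (∀ j : ℕ, ∀ y ∈ t, ‖iteratedFDeriv ℝ j g y‖ ≤ A * R ^ (k + j) * ((k + j)! * M (k + j))) →
      ∀ y ∈ s, ‖iteratedFDeriv ℝ m (g ∘ f) y‖ ≤
        A * R ^ k * S ^ m * invSq m * ((k + m)! * M (k + m)) := by
  intro m
  induction m using Nat.strong_induction_on with | _ m ih
  intro hmn G _ _ g k A hA hg hgA y hy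
  rcases m with _ | m
  · simpa [invSq_zero] using hgA 0 (f y) (hmap hy)
  have hdgA (j : ℕ) (z : F) (hz : z ∈ t) : ‖iteratedFDeriv ℝ j (fderiv ℝ g) z‖ ≤
      A * R ^ (k + 1 + j) * ((k + 1 + j)! * M (k + 1 + j)) := by
    rw [norm_iteratedFDeriv_fderiv, show k + 1 + j = k + (j + 1) by ring]
    exact hgA (j + 1) z hz
  have hleibniz := norm_iteratedFDeriv_succ_comp_le hs ht hmap hf hg hy
    (P := fun i => A * R ^ (k + 1) * S ^ i * invSq i) (Q := fun j => D * S ^ j * invSq j)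
    (fun i => by have := invSq_pos i; positivity) (fun j => by have := invSq_pos j; positivity)
    (k + 1) m
    (fun i hi => ih i (by omega) (by omega) (F →L[ℝ] G) (fderiv ℝ g) (k + 1) A hA
      (hg.fderiv_of_isOpen ht (by simp)) hdgA y hy)
    (fun j hj => hfD j (by omega) y hy)
  have hsum : ∑ p ∈ antidiagonal m,
      A * R ^ (k + 1) * S ^ p.1 * invSq p.1 * (D * S ^ p.2 * invSq p.2) ≤
        A * R ^ (k + 1) * D * S ^ m * (8 * invSq (m + 1)) := by
    refine le_trans (le_of_eq ?_) (mul_le_mul_of_nonneg_left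
      (sum_antidiagonal_invSq_mul_invSq_le m) (by positivity))
    rw [mul_sum]
    refine sum_congr rfl fun p hp => ?_
    rw [← mem_antidiagonal.1 hp, pow_add]
    ring
  have hMkm := weight_pos M (k + (m + 1))
  have hinv := invSq_pos (m + 1)
  rw [show k + 1 + m = k + (m + 1) by ring] at hleibniz
  calc _ ≤ A * R ^ (k + 1) * D * S ^ m * (8 * invSq (m + 1)) *
          ((k + (m + 1))! * M (k + (m + 1))) := hleibniz.trans (by gcongr)
    _ = A * R ^ k * S ^ m * invSq (m + 1) * ((k + (m + 1))! * M (k + (m + 1))) *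
          (8 * R * D) := by ring
    _ ≤ A * R ^ k * S ^ m * invSq (m + 1) * ((k + (m + 1))! * M (k + (m + 1))) * S := by gcongr
    _ = A * R ^ k * S ^ (m + 1) * invSq (m + 1) * ((k + (m + 1))! * M (k + (m + 1))) := by ring

lemma UltradiffAt.comp [IsRegularWeight M] {g : F → G} {x : E} (hg : UltradiffAt M g (f x))
    (hf : UltradiffAt M f x) : UltradiffAt M (g ∘ f) x := by
  have hcont := hf.continuousAt
  obtain ⟨t, ht, hxt, A, R, hgb⟩ := hg
  obtain ⟨s, hs, hxs, _, _, hfb⟩ := hf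
  obtain ⟨D, B, hdf⟩ := hfb.exists_fderiv hs
  obtain ⟨s', hs', hso', hxs'⟩ := eventually_nhds_iff.1
    ((hs.eventually_mem hxs).and (hcont.eventually (ht.eventually_mem hxt)))
  have hmap : MapsTo f s' t := fun y hy => (hs' y hy).2
  have hf' : ContDiffOn ℝ ∞ f s' := hfb.contDiffOn.mono fun y hy => (hs' y hy).1
  have hA := hgb.nonneg
  have hD := hdf.nonneg
  have hR := hgb.one_le
  have hB := hdf.one_le
  set S := max (4 * B) (8 * R * D)
  have hBS : 4 * B ≤ S := le_max_left _ _
  have hdfS (m : ℕ) (z : E) (hz : z ∈ s') : ‖iteratedFDeriv ℝ m (fderiv ℝ f) z‖ ≤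
      D * S ^ m * invSq m * (m ! * M m) := by
    have hMm := weight_pos M m
    have hinv := invSq_pos m
    calc ‖iteratedFDeriv ℝ m (fderiv ℝ f) z‖ ≤ D * B ^ m * (m ! * M m) :=
          hdf.norm_le m z (hs' z hz).1
      _ ≤ D * B ^ m * (m ! * M m) * (4 ^ m * invSq m) :=
          le_mul_of_one_le_right (by positivity) (one_le_four_pow_mul_invSq m)
      _ = D * (4 * B) ^ m * invSq m * (m ! * M m) := by rw [mul_pow]; ring
      _ ≤ D * S ^ m * invSq m * (m ! * M m) := by gcongr
  refine ⟨s', hso', hxs', A, S, hgb.contDiffOn.comp hf' hmap, hA, by linarith, fun n y hy => ?_⟩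
  have hcomp := norm_iteratedFDeriv_comp_le_of_norm_fderiv_le hso' ht hmap hf' (by linarith)
    (by linarith) hD (le_max_right _ _) (fun m _ => hdfS m) n le_rfl G g 0 A hA hgb.contDiffOn
    (by simpa using hgb.norm_le) y hy
  have hMn := weight_pos M n
  calc ‖iteratedFDeriv ℝ n (g ∘ f) y‖ ≤ A * S ^ n * invSq n * (n ! * M n) := by simpa using hcomp
    _ ≤ A * S ^ n * 1 * (n ! * M n) := by gcongr; exact invSq_le_one n
    _ = A * S ^ n * (n ! * M n) := by rw [mul_one]

end Composition

section ODE

variable {M : ℕ → ℝ} {E F : Type u} [NormedAddCommGroup E] [NormedSpace ℝ E]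
  [NormedAddCommGroup F] [NormedSpace ℝ F] {s : Set E} {t : Set F} {f : E → F}

lemma contDiffOn_infty_of_hasFDerivAt_comp {H : F → E →L[ℝ] F} (hs : IsOpen s)
    (hmap : MapsTo f s t) (hH : ContDiffOn ℝ ∞ H t)
    (hode : ∀ y ∈ s, HasFDerivAt f (H (f y)) y) : ContDiffOn ℝ ∞ f s := by
  rw [contDiffOn_infty]
  intro n
  induction n with
  | zero => exact contDiffOn_zero.2 fun y hy => (hode y hy).continuousAt.continuousWithinAt
  | succ n ih =>
    push_cast
    rw [contDiffOn_succ_iff_fderiv_of_isOpen hs]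
    refine ⟨fun y hy => (hode y hy).differentiableAt.differentiableWithinAt, by simp, ?_⟩
    exact ((hH.of_le (by exact_mod_cast le_top)).comp ih hmap).congr
      fun y hy => (hode y hy).fderiv

/- Since `D f = H ∘ f`, bounds on the derivatives of `D f` of order `< n` bound the one of order
`n`. -/
lemma norm_iteratedFDeriv_comp_le_of_ode [IsWeight M] {H : F → E →L[ℝ] F} (hs : IsOpen s)
    (ht : IsOpen t) (hmap : MapsTo f s t) {D R S : ℝ} (hH : UltradiffBoundOn M H t D R)
    (hS : 0 ≤ S) (hRS : 8 * R * D ≤ S) (hode : ∀ y ∈ s, HasFDerivAt f (H (f y)) y) (n : ℕ) :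
    ∀ y ∈ s, ‖iteratedFDeriv ℝ n (H ∘ f) y‖ ≤ D * S ^ n * invSq n * (n ! * M n) := by
  induction n using Nat.strong_induction_on with | _ n ih
  intro y hy
  have hfderiv : EqOn (fderiv ℝ f) (H ∘ f) s := fun z hz => (hode z hz).fderiv
  have hf := contDiffOn_infty_of_hasFDerivAt_comp hs hmap hH.contDiffOn hode
  have ih' (m : ℕ) (hm : m < n) (z : E) (hz : z ∈ s) :
      ‖iteratedFDeriv ℝ m (fderiv ℝ f) z‖ ≤ D * S ^ m * invSq m * (m ! * M m) := by
    rw [iteratedFDeriv_eq_of_eqOn hs hfderiv m hz]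
    exact ih m hm z hz
  simpa using norm_iteratedFDeriv_comp_le_of_norm_fderiv_le hs ht hmap hf
    (by linarith [hH.one_le]) hS hH.nonneg hRS ih' n le_rfl _ H 0 D hH.nonneg hH.contDiffOn
    (by simpa using hH.norm_le) y hy

lemma ultradiffAt_of_ode [IsWeight M] {H : F → E →L[ℝ] F} {x : E} (hH : UltradiffAt M H (f x))
    (hode : ∀ᶠ y in 𝓝 x, HasFDerivAt f (H (f y)) y) : UltradiffAt M f x := by
  have hcont := hode.self_of_nhds.continuousAt
  obtain ⟨t, ht, hxt, D, R, hHb⟩ := hH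
  obtain ⟨s, hs, hso, hxs⟩ := eventually_nhds_iff.1
    (hode.and (hcont.eventually (ht.eventually_mem hxt)))
  have hmap : MapsTo f s t := fun y hy => (hs y hy).2
  have hode' : ∀ y ∈ s, HasFDerivAt f (H (f y)) y := fun y hy => (hs y hy).1
  have hf := contDiffOn_infty_of_hasFDerivAt_comp hso hmap hHb.contDiffOn hode'
  have hD := hHb.nonneg
  set S := max 1 (8 * R * D)
  have hS : 1 ≤ S := le_max_left _ _
  refine ultradiffAt_of_hasFDerivAt (f' := H ∘ f) ⟨s, hso, hxs, D, S,
    hHb.contDiffOn.comp hf hmap, hD, hS, fun n y hy => ?_⟩ hode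
  have hM := weight_pos M n
  calc ‖iteratedFDeriv ℝ n (H ∘ f) y‖ ≤ D * S ^ n * invSq n * (n ! * M n) :=
        norm_iteratedFDeriv_comp_le_of_ode hso ht hmap hHb (by linarith) (le_max_right _ _)
          hode' n y hy
    _ ≤ D * S ^ n * 1 * (n ! * M n) := by gcongr; exact invSq_le_one n
    _ = D * S ^ n * (n ! * M n) := by rw [mul_one]

end ODE

section Algebra

variable {M : ℕ → ℝ} {E F G : Type*} [NormedAddCommGroup E] [NormedSpace ℝ E]
  [NormedAddCommGroup F] [NormedSpace ℝ F] [NormedAddCommGroup G] [NormedSpace ℝ G] {x : E}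

lemma ultradiffAt_const [IsWeight M] (c : F) : UltradiffAt M (fun _ : E => c) x := by
  refine ⟨univ, isOpen_univ, mem_univ _, ‖c‖, 1, contDiffOn_const, norm_nonneg _, le_rfl,
    fun n y _ => ?_⟩
  rcases n with _ | n
  · simp [IsWeight.zero (M := M)]
  · have hM := weight_pos M (n + 1)
    rw [iteratedFDeriv_const_of_ne n.succ_ne_zero, Pi.zero_apply, norm_zero]
    positivity

lemma ultradiffAt_clm [IsWeight M] (L : E →L[ℝ] F) : UltradiffAt M L x :=
  ultradiffAt_of_hasFDerivAt (ultradiffAt_const L) (Eventually.of_forall fun _ => L.hasFDerivAt)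

lemma ultradiffAt_id [IsWeight M] : UltradiffAt M (fun y : E => y) x :=
  ultradiffAt_clm (ContinuousLinearMap.id ℝ E)

lemma UltradiffAt.clm_comp (L : F →L[ℝ] G) {f : E → F} (hf : UltradiffAt M f x) :
    UltradiffAt M (fun y => L (f y)) x := by
  obtain ⟨s, hs, hxs, A, B, hb⟩ := hf
  have hA := hb.nonneg
  refine ⟨s, hs, hxs, ‖L‖ * A, B, L.contDiff.comp_contDiffOn hb.contDiffOn, by positivity,
    hb.one_le, fun n y hy => ?_⟩
  calc ‖iteratedFDeriv ℝ n (L ∘ f) y‖ ≤ ‖L‖ * ‖iteratedFDeriv ℝ n f y‖ :=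
        L.norm_iteratedFDeriv_comp_left (hb.contDiffOn.contDiffAt (hs.mem_nhds hy))
          (by exact_mod_cast le_top)
    _ ≤ ‖L‖ * (A * B ^ n * (n ! * M n)) := by gcongr; exact hb.norm_le n y hy
    _ = ‖L‖ * A * B ^ n * (n ! * M n) := by ring

lemma UltradiffAt.add [IsWeight M] {f g : E → F} (hf : UltradiffAt M f x)
    (hg : UltradiffAt M g x) : UltradiffAt M (fun y => f y + g y) x := by
  obtain ⟨s, hs, hxs, A, A', B, hfb, hgb⟩ := hf.exists_common_bound hg
  refine ⟨s, hs, hxs, A + A', B, hfb.contDiffOn.add hgb.contDiffOn,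
    add_nonneg hfb.nonneg hgb.nonneg, hfb.one_le, fun n y hy => ?_⟩
  rw [fun_iteratedFDeriv_add_apply
    ((hfb.contDiffOn.contDiffAt (hs.mem_nhds hy)).of_le (by exact_mod_cast le_top))
    ((hgb.contDiffOn.contDiffAt (hs.mem_nhds hy)).of_le (by exact_mod_cast le_top)),
    add_mul, add_mul]
  exact norm_add_le_of_le (hfb.norm_le n y hy) (hgb.norm_le n y hy)

open Finset in
lemma UltradiffAt.bilinear [IsWeight M] {H : Type*} [NormedAddCommGroup H] [NormedSpace ℝ H]
    (L : F →L[ℝ] G →L[ℝ] H) {f : E → F} {g : E → G} (hf : UltradiffAt M f x)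
    (hg : UltradiffAt M g x) : UltradiffAt M (fun y => L (f y) (g y)) x := by
  obtain ⟨s, hs, hxs, A, A', B, hfb, hgb⟩ := hf.exists_common_bound hg
  have hA := hfb.nonneg
  have hA' := hgb.nonneg
  have hB := hfb.one_le
  refine ⟨s, hs, hxs, ‖L‖ * (A * A'), 2 * B,
    L.isBoundedBilinearMap.contDiff.comp₂_contDiffOn hfb.contDiffOn hgb.contDiffOn,
    by positivity, by linarith, fun n y hy => ?_⟩
  have hleibniz := norm_iteratedFDeriv_bilinear_le_of_le M L hs hfb.contDiffOn hgb.contDiffOn hy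
    (P := fun i => A * B ^ i) (Q := fun j => A' * B ^ j) (fun i => by positivity)
    (fun j => by positivity) 0 n (by simpa using fun i _ => hfb.norm_le i y hy)
    (fun j _ => hgb.norm_le j y hy)
  have hsum : ∑ p ∈ antidiagonal n, A * B ^ p.1 * (A' * B ^ p.2) = (n + 1) * (A * A' * B ^ n) := by
    have hterm : ∀ p ∈ antidiagonal n, A * B ^ p.1 * (A' * B ^ p.2) = A * A' * B ^ n :=
      fun p hp => by rw [← mem_antidiagonal.1 hp, pow_add]; ring
    rw [sum_congr rfl hterm, sum_const, Nat.card_antidiagonal, nsmul_eq_mul]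
    push_cast
    rfl
  have hM := weight_pos M n
  calc ‖iteratedFDeriv ℝ n (fun y => L (f y) (g y)) y‖
      ≤ ‖L‖ * ((n + 1) * (A * A' * B ^ n) * (n ! * M n)) := by
        simpa only [hsum, zero_add] using hleibniz
    _ ≤ ‖L‖ * (2 ^ n * (A * A' * B ^ n) * (n ! * M n)) := by gcongr; exact succ_le_two_pow n
    _ = ‖L‖ * (A * A') * (2 * B) ^ n * (n ! * M n) := by rw [mul_pow]; ring

lemma UltradiffAt.mul [IsWeight M] {f g : E → ℝ} (hf : UltradiffAt M f x)
    (hg : UltradiffAt M g x) : UltradiffAt M (fun y => f y * g y) x :=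
  hf.bilinear (ContinuousLinearMap.mul ℝ ℝ) hg

lemma UltradiffAt.sub [IsWeight M] {f g : E → F} (hf : UltradiffAt M f x)
    (hg : UltradiffAt M g x) : UltradiffAt M (fun y => f y - g y) x := by
  simpa [sub_eq_add_neg] using hf.add (hg.clm_comp (-ContinuousLinearMap.id ℝ F))

lemma UltradiffAt.sum [IsWeight M] {ι : Type*} (s : Finset ι) {f : ι → E → F}
    (hf : ∀ i ∈ s, UltradiffAt M (f i) x) : UltradiffAt M (fun y => ∑ i ∈ s, f i y) x := by
  induction s using Finset.cons_induction with
  | empty => simpa using ultradiffAt_const (0 : F)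
  | cons a s ha ih =>
    simp only [Finset.sum_cons]
    exact (hf a (by simp)).add (ih fun i hi => hf i (by simp [hi]))

lemma UltradiffAt.prod [IsWeight M] {ι : Type*} (s : Finset ι) {f : ι → E → ℝ}
    (hf : ∀ i ∈ s, UltradiffAt M (f i) x) : UltradiffAt M (fun y => ∏ i ∈ s, f i y) x := by
  induction s using Finset.cons_induction with
  | empty => simpa using ultradiffAt_const (1 : ℝ)
  | cons a s ha ih =>
    simp only [Finset.prod_cons]
    exact (hf a (by simp)).mul (ih fun i hi => hf i (by simp [hi]))

lemma UltradiffAt.pow [IsWeight M] {f : E → ℝ} (hf : UltradiffAt M f x) (n : ℕ) :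
    UltradiffAt M (fun y => f y ^ n) x := by
  simpa using UltradiffAt.prod (Finset.range n) fun _ _ => hf

lemma UltradiffAt.pi [IsWeight M] {ι : Type*} [Fintype ι] {f : E → ι → ℝ}
    (hf : ∀ i, UltradiffAt M (fun y => f y i) x) : UltradiffAt M f x := by
  classical
  have hsum : f = fun y => ∑ i, ContinuousLinearMap.single ℝ (fun _ : ι => ℝ) i (f y i) := by
    funext y
    simpa using (Finset.univ_sum_single (f y)).symm
  rw [hsum]
  exact UltradiffAt.sum _ fun i _ => (hf i).clm_comp _

lemma UltradiffAt.inv [IsRegularWeight M] {f : E → ℝ} (hf : UltradiffAt M f x) (h0 : f x ≠ 0) :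
    UltradiffAt M (fun y => (f y)⁻¹) x := by
  refine UltradiffAt.comp (g := fun y : ℝ => y⁻¹) ?_ hf
  -- The inverse solves `u' = -u ^ 2`.
  refine ultradiffAt_of_ode (H := fun u => ContinuousLinearMap.toSpanSingleton ℝ (-(u ^ 2))) ?_ ?_
  · have hsq : UltradiffAt M (fun u : ℝ => u ^ 2) (f x)⁻¹ := ultradiffAt_id.pow 2
    exact hsq.clm_comp (ContinuousLinearMap.toSpanSingletonCLE.toContinuousLinearMap.comp
      (-ContinuousLinearMap.id ℝ ℝ))
  · filter_upwards [eventually_ne_nhds h0] with y hy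
    simpa using (hasDerivAt_inv hy).hasFDerivAt

end Algebra

section Bang

variable {F : Type*} [NormedAddCommGroup F] {m : ℕ → ℝ} {f : ℕ → ℝ → F} {A : ℝ}

/-- Bang's scale of smallness at the point `x` for a sequence of functions, each the derivative of
the preceding one: relative to the bounds `A * m j`, the functions with `j ≤ n` gain a
factor `exp (j - n)`, so that large `n` means that the first functions are small. -/
def BangBound (m : ℕ → ℝ) (f : ℕ → ℝ → F) (A : ℝ) (n : ℕ) (x : ℝ) : Prop :=
  ∀ j : ℕ, ‖f j x‖ ≤ A * Real.exp (j - n) * m j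

lemma le_mul_exp_sub_mul {n j : ℕ} (hA : 0 ≤ A) (hm : 0 ≤ m j) (h : n ≤ j) :
    A * m j ≤ A * Real.exp (j - n) * m j := by
  have hexp : 1 ≤ Real.exp ((j : ℝ) - n) := Real.one_le_exp (by simpa using h)
  gcongr
  exact le_mul_of_one_le_right hA hexp

lemma exp_sub_mul_succ_le (hm : ∀ j, 0 < m j) (hmono : Monotone fun j => m (j + 1) / m j)
    {j n : ℕ} (h : j ≤ n) (r : ℝ) : Real.exp ((j + 1 : ℕ) - r) * m (j + 1) ≤
      Real.exp (j - r) * m j * (Real.exp 1 * (m (n + 1) / m n)) := by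
  have hmj := hm j
  have hratio : m (j + 1) / m j ≤ m (n + 1) / m n := hmono h
  calc Real.exp ((j + 1 : ℕ) - r) * m (j + 1)
      = Real.exp (j - r) * m j * (Real.exp 1 * (m (j + 1) / m j)) := by
        push_cast
        rw [add_sub_right_comm, Real.exp_add]
        field_simp
    _ ≤ Real.exp (j - r) * m j * (Real.exp 1 * (m (n + 1) / m n)) := by gcongr

variable [NormedSpace ℝ F]

lemma BangBound.norm_le_mul_exp (hm : ∀ j, 0 < m j) (hmono : Monotone fun j => m (j + 1) / m j)
    (hA : 0 ≤ A) {a b : ℝ} (hf : ∀ j, ∀ x ∈ Icc a b, HasDerivAt (f j) (f (j + 1) x) x)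
    (hb : ∀ j, ∀ x ∈ Icc a b, ‖f j x‖ ≤ A * m j) {n : ℕ} (h : BangBound m f A (n + 1) a) (j : ℕ) :
    ∀ x ∈ Icc a b, ‖f j x‖ ≤
      A * Real.exp (j - (n + 1 : ℕ)) * m j *
        Real.exp (Real.exp 1 * (m (n + 1) / m n) * (x - a)) := by
  set c := Real.exp 1 * (m (n + 1) / m n)
  have hc : 0 ≤ c := mul_nonneg (Real.exp_pos 1).le (div_pos (hm _) (hm _)).le
  have hlarge (j : ℕ) (hj : n + 1 ≤ j) (x : ℝ) (hx : x ∈ Icc a b) :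
      ‖f j x‖ ≤ A * Real.exp (j - (n + 1 : ℕ)) * m j * Real.exp (c * (x - a)) := by
    have hmj := (hm j).le
    refine ((hb j x hx).trans (le_mul_exp_sub_mul hA hmj hj)).trans
      (le_mul_of_one_le_right (by positivity) (Real.one_le_exp (mul_nonneg hc ?_)))
    linarith [hx.1]
  rcases le_or_gt (n + 1) j with hj | hj
  · exact hlarge j hj
  refine Nat.decreasingInduction (motive := fun j _ => ∀ x ∈ Icc a b, ‖f j x‖ ≤
    A * Real.exp (j - (n + 1 : ℕ)) * m j * Real.exp (c * (x - a))) (fun j hj ih => ?_)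
    (hlarge (n + 1) le_rfl) hj.le
  set K := A * Real.exp (j - (n + 1 : ℕ)) * m j with hK
  have hderiv (x : ℝ) :
      HasDerivAt (fun x => K * Real.exp (c * (x - a))) (K * (Real.exp (c * (x - a)) * c)) x := by
    simpa using ((((hasDerivAt_id x).sub_const a).const_mul c).exp).const_mul K
  refine image_norm_le_of_norm_deriv_right_le_deriv_boundary
    (fun x hx => (hf j x hx).continuousAt.continuousWithinAt)
    (fun x hx => (hf j x (Ico_subset_Icc_self hx)).hasDerivWithinAt)
    (by simpa only [sub_self, mul_zero, Real.exp_zero, mul_one] using h j) hderiv fun x hx => ?_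
  calc ‖f (j + 1) x‖
      ≤ A * Real.exp ((j + 1 : ℕ) - (n + 1 : ℕ)) * m (j + 1) * Real.exp (c * (x - a)) :=
        ih x (Ico_subset_Icc_self hx)
    _ = A * (Real.exp ((j + 1 : ℕ) - (n + 1 : ℕ)) * m (j + 1)) * Real.exp (c * (x - a)) := by ring
    _ ≤ A * (Real.exp (j - (n + 1 : ℕ)) * m j * c) * Real.exp (c * (x - a)) := by
        have hratio := exp_sub_mul_succ_le hm hmono (Nat.lt_succ_iff.1 hj) (n + 1 : ℕ)
        gcongr
    _ = K * (Real.exp (c * (x - a)) * c) := by rw [hK]; ring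

lemma BangBound.of_succ (hm : ∀ j, 0 < m j) (hmono : Monotone fun j => m (j + 1) / m j)
    (hA : 0 ≤ A) {a b : ℝ} (hf : ∀ j, ∀ x ∈ Icc a b, HasDerivAt (f j) (f (j + 1) x) x)
    (hb : ∀ j, ∀ x ∈ Icc a b, ‖f j x‖ ≤ A * m j) {n : ℕ} (h : BangBound m f A (n + 1) a)
    (hab : a ≤ b) (hba : b - a ≤ (Real.exp 1)⁻¹ * (m n / m (n + 1))) : BangBound m f A n b := by
  intro j
  have hmj := hm j
  have hmn := hm n
  have hmn' := hm (n + 1)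
  have hexp : Real.exp 1 * (m (n + 1) / m n) * (b - a) ≤ 1 := by
    calc Real.exp 1 * (m (n + 1) / m n) * (b - a)
        ≤ Real.exp 1 * (m (n + 1) / m n) * ((Real.exp 1)⁻¹ * (m n / m (n + 1))) := by gcongr
      _ = 1 := by field_simp
  calc ‖f j b‖ ≤ A * Real.exp (j - (n + 1 : ℕ)) * m j *
        Real.exp (Real.exp 1 * (m (n + 1) / m n) * (b - a)) :=
        h.norm_le_mul_exp hm hmono hA hf hb j b ⟨hab, le_rfl⟩
    _ ≤ A * Real.exp (j - (n + 1 : ℕ)) * m j * Real.exp 1 := by gcongr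
    _ = A * (Real.exp (j - (n + 1 : ℕ)) * Real.exp 1) * m j := by ring
    _ = A * Real.exp (j - n) * m j := by rw [← Real.exp_add]; push_cast; ring_nf

lemma bangBound_of_le_sum (hm : ∀ j, 0 < m j) (hmono : Monotone fun j => m (j + 1) / m j)
    (hA : 0 ≤ A) {a b : ℝ} (hf : ∀ j, ∀ x ∈ Icc a b, HasDerivAt (f j) (f (j + 1) x) x)
    (hb : ∀ j, ∀ x ∈ Icc a b, ‖f j x‖ ≤ A * m j) (ha : ∀ j, f j a = 0) (k n : ℕ) :
    ∀ x ∈ Icc a b, x - a ≤ ∑ i ∈ Finset.range k, (Real.exp 1)⁻¹ * (m (n + i) / m (n + i + 1)) →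
      BangBound m f A n x := by
  induction k generalizing n with
  | zero =>
    intro x hx hxa j
    have hmj := hm j
    obtain rfl : x = a := le_antisymm (by simpa using hxa) hx.1
    rw [ha, norm_zero]
    positivity
  | succ k ih =>
    intro x hx hxa
    rw [Finset.sum_range_succ'] at hxa
    set T := ∑ i ∈ Finset.range k, (Real.exp 1)⁻¹ * (m (n + (i + 1)) / m (n + (i + 1) + 1))
      with hT
    have hT0 : 0 ≤ T := Finset.sum_nonneg fun i _ => by
      have := hm (n + (i + 1)); have := hm (n + (i + 1) + 1); positivity
    have hy : min x (a + T) ∈ Icc a b :=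
      ⟨le_min hx.1 (le_add_of_nonneg_right hT0), (min_le_left _ _).trans hx.2⟩
    have hbound := ih (n + 1) (min x (a + T)) hy (by
      simp only [add_assoc, add_comm 1] at hT ⊢
      linarith [min_le_right x (a + T)])
    refine hbound.of_succ hm hmono hA (fun j z hz => hf j z ⟨hy.1.trans hz.1, hz.2.trans hx.2⟩)
      (fun j z hz => hb j z ⟨hy.1.trans hz.1, hz.2.trans hx.2⟩) (min_le_left _ _) ?_
    have hmn := hm n
    have hmn' := hm (n + 1)
    rcases min_cases x (a + T) with h | h
    · rw [h.1, sub_self]; positivity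
    · rw [h.1]; simp only [add_zero] at hxa; linarith

/-- The Denjoy-Carleman theorem, by Bang's method. -/
theorem eq_zero_of_not_summable_ratio (hm : ∀ j, 0 < m j)
    (hmono : Monotone fun j => m (j + 1) / m j) (hsum : ¬ Summable fun j => m j / m (j + 1))
    {a b : ℝ} (hab : a ≤ b) (hf : ∀ j, ∀ x ∈ Icc a b, HasDerivAt (f j) (f (j + 1) x) x)
    (hb : ∀ j, ∀ x ∈ Icc a b, ‖f j x‖ ≤ A * m j) (ha : ∀ j, f j a = 0) : f 0 b = 0 := by
  have hA : 0 ≤ A := by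
    have h0 := hb 0 a ⟨le_rfl, hab⟩
    rw [ha, norm_zero] at h0
    exact nonneg_of_mul_nonneg_left h0 (hm 0)
  have hlevel (n : ℕ) : BangBound m f A n b := by
    have hshift : ¬ Summable fun i => (Real.exp 1)⁻¹ * (m (i + n) / m (i + n + 1)) := fun h =>
      hsum ((summable_nat_add_iff n).1 ((summable_mul_left_iff (by positivity)).1 h))
    rw [not_summable_iff_tendsto_nat_atTop_of_nonneg fun i =>
      mul_nonneg (by positivity) (div_pos (hm _) (hm _)).le] at hshift
    obtain ⟨k, hk⟩ := (hshift.eventually_ge_atTop (b - a)).exists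
    refine bangBound_of_le_sum hm hmono hA hf hb ha k n b ⟨hab, le_rfl⟩ ?_
    simpa only [add_comm n] using hk
  have hlim : Tendsto (fun n : ℕ => A * Real.exp (-n) * m 0) atTop (𝓝 (A * 0 * m 0)) :=
    ((Real.tendsto_exp_neg_atTop_nhds_zero.comp tendsto_natCast_atTop_atTop).const_mul A).mul_const
      _
  have hle : ‖f 0 b‖ ≤ A * 0 * m 0 := ge_of_tendsto' hlim fun n => by simpa using hlevel n 0
  simpa using hle

end Bang

section IdentityTheorem

variable {M : ℕ → ℝ}

lemma factorial_weight_ratio {B : ℝ} (j : ℕ) (hj : M j ≠ 0) (hB : B ≠ 0) :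
    B ^ (j + 1) * ((j + 1)! * M (j + 1)) / (B ^ j * (j ! * M j)) =
      B * ((j : ℝ) + 1) * (M (j + 1) / M j) := by
  rw [Nat.factorial_succ]
  push_cast
  field_simp
  ring

lemma not_summable_factorial_weight_ratio [IsQuasianalyticWeight M] {B : ℝ} (hB : 0 < B) :
    ¬ Summable fun j => B ^ j * (j ! * M j) / (B ^ (j + 1) * ((j + 1)! * M (j + 1))) := by
  intro h
  have hsummable : Summable fun k : ℕ => M k / (((k : ℝ) + 1) * M (k + 1)) := by
    refine (h.mul_left B).congr fun k => ?_
    have hMk := weight_pos M k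
    have hMk' := weight_pos M (k + 1)
    rw [Nat.factorial_succ]
    push_cast
    field_simp
    ring
  have htsum := ENNReal.ofReal_tsum_of_nonneg (fun k =>
    (div_pos (weight_pos M k) (mul_pos k.cast_add_one_pos (weight_pos M (k + 1)))).le) hsummable
  exact ENNReal.ofReal_ne_top (htsum.trans IsQuasianalyticWeight.tsum_eq_top)

variable {E F : Type*} [NormedAddCommGroup E] [NormedSpace ℝ E] [NormedAddCommGroup F]
  [NormedSpace ℝ F]

lemma hasDerivAt_iteratedFDeriv_add_smul {f : E → F} {s : Set E} (hs : IsOpen s)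
    (hf : ContDiffOn ℝ ∞ f s) (j : ℕ) {p v : E} {t : ℝ} (h : p + t • v ∈ s) :
    HasDerivAt (fun t : ℝ => iteratedFDeriv ℝ j f (p + t • v) fun _ => v)
      (iteratedFDeriv ℝ (j + 1) f (p + t • v) fun _ => v) t := by
  have hdiff : DifferentiableAt ℝ (iteratedFDeriv ℝ j f) (p + t • v) :=
    (hf.contDiffAt (hs.mem_nhds h)).differentiableAt_iteratedFDeriv
      (by exact_mod_cast ENat.natCast_lt_top j)
  have hline : HasDerivAt (fun t : ℝ => p + t • v) v t := by
    simpa using ((hasDerivAt_id t).smul_const v).const_add p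
  exact (ContinuousMultilinearMap.apply ℝ (fun _ : Fin j => E) F fun _ => v).hasFDerivAt
    |>.comp_hasDerivAt t (hdiff.hasFDerivAt.comp_hasDerivAt t hline)

lemma UltradiffBoundOn.eq_zero_of_flat [IsQuasianalyticWeight M] {f : E → F} {s : Set E}
    {A B : ℝ} (hf : UltradiffBoundOn M f s A B) (hs : IsOpen s) (hc : Convex ℝ s) {p q : E}
    (hp : p ∈ s) (hq : q ∈ s) (h0 : ∀ n : ℕ, (iteratedFDeriv ℝ n f p fun _ => q - p) = 0) :
    f q = 0 := by
  set v := q - p with hv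
  have hmem : ∀ t ∈ Icc (0 : ℝ) 1, p + t • v ∈ s := fun t ht => hc.add_smul_sub_mem hp hq ht
  have hA := hf.nonneg
  have hB := hf.one_le
  set C := B * (‖v‖ + 1)
  have hC : 0 < C := by positivity
  have hmono : Monotone fun j => C ^ (j + 1) * ((j + 1)! * M (j + 1)) / (C ^ j * (j ! * M j)) := by
    intro i j hij
    have hratio := ratio_monotone M hij
    have hMi := weight_pos M i
    have hMi' := weight_pos M (i + 1)
    simp only [factorial_weight_ratio _ (weight_pos M _).ne' hC.ne'] at hratio ⊢
    gcongr
  have hbound (j : ℕ) (t : ℝ) (ht : t ∈ Icc (0 : ℝ) 1) :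
      ‖iteratedFDeriv ℝ j f (p + t • v) fun _ => v‖ ≤ A * (C ^ j * (j ! * M j)) := by
    have hMj := weight_pos M j
    calc ‖iteratedFDeriv ℝ j f (p + t • v) fun _ => v‖
        ≤ ‖iteratedFDeriv ℝ j f (p + t • v)‖ * ‖v‖ ^ j := by
          simpa using (iteratedFDeriv ℝ j f (p + t • v)).le_opNorm fun _ => v
      _ ≤ A * B ^ j * (j ! * M j) * (‖v‖ + 1) ^ j := by
          gcongr
          exacts [hf.norm_le j _ (hmem t ht), by linarith]
      _ = A * (C ^ j * (j ! * M j)) := by rw [mul_pow]; ring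
  have h := eq_zero_of_not_summable_ratio
    (f := fun j t => iteratedFDeriv ℝ j f (p + t • v) fun _ => v)
    (fun j => mul_pos (pow_pos hC j) (mul_pos (by positivity) (weight_pos M j))) hmono
    (not_summable_factorial_weight_ratio hC) zero_le_one
    (fun j t ht => hasDerivAt_iteratedFDeriv_add_smul hs hf.contDiffOn j (hmem t ht)) hbound
    fun j => by simpa using h0 j
  simpa [hv] using h

lemma UltradiffBoundOn.eqOn_zero [IsQuasianalyticWeight M] {f : E → F} {s : Set E} {A B : ℝ}
    (hf : UltradiffBoundOn M f s A B) (hs : IsOpen s) (hc : Convex ℝ s) {p : E} (hp : p ∈ s)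
    (h0 : f =ᶠ[𝓝 p] 0) : EqOn f 0 s := by
  refine fun q hq => hf.eq_zero_of_flat hs hc hp hq fun n => ?_
  have hzero : iteratedFDeriv ℝ n (0 : E → F) p = 0 :=
    congrFun (iteratedFDeriv_fun_zero (𝕜 := ℝ) (E := E) (F := F)) p
  rw [(h0.iteratedFDeriv ℝ n).eq_of_nhds, hzero]
  rfl

lemma UltradiffAt.eventuallyEq_zero_or_of_mul [IsQuasianalyticWeight M] {f g : E → ℝ} {x : E}
    (hf : UltradiffAt M f x) (hg : UltradiffAt M g x) (h : ∀ᶠ y in 𝓝 x, f y * g y = 0) :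
    f =ᶠ[𝓝 x] 0 ∨ g =ᶠ[𝓝 x] 0 := by
  refine or_iff_not_imp_left.2 fun hf0 => ?_
  obtain ⟨s, hs, hxs, A, B, hb⟩ := hg
  obtain ⟨r, hr, hrs⟩ := Metric.isOpen_iff.1 hs x hxs
  have hball := Metric.isOpen_ball.eventually_mem (Metric.mem_ball_self (x := x) hr)
  obtain ⟨y, hfy, hyr, hmul, hfc⟩ := ((not_eventually.1 hf0).and_eventually
    (hball.and ((eventually_eventually_nhds.2 h).and hf.eventually))).exists
  have hgy : g =ᶠ[𝓝 y] 0 := by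
    filter_upwards [hmul, hfc.continuousAt.eventually_ne hfy] with z hz hfz
    exact (mul_eq_zero.1 hz).resolve_left hfz
  have hzero := (hb.mono hrs).eqOn_zero Metric.isOpen_ball (convex_ball x r) hyr hgy
  exact hzero.eventuallyEq_of_mem (Metric.ball_mem_nhds x hr)

end IdentityTheorem

section ParametricIntegral

lemma exists_hasFDerivAt_of_contDiffOn_prod {E F : Type*} [NormedAddCommGroup E] [NormedSpace ℝ E]
    [NormedAddCommGroup F] [NormedSpace ℝ F] {V : Set ℝ} {s : Set E} (hV : IsOpen V)
    (hs : IsOpen s) {Φ : ℝ → E → F}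
    (hΦ : ContDiffOn ℝ ∞ (fun p : ℝ × E => Φ p.1 p.2) (V ×ˢ s)) :
    ∃ Φ' : ℝ → E → E →L[ℝ] F, ContDiffOn ℝ ∞ (fun p : ℝ × E => Φ' p.1 p.2) (V ×ˢ s) ∧
      ∀ σ ∈ V, ∀ x ∈ s, HasFDerivAt (Φ σ) (Φ' σ x) x := by
  refine ⟨fun σ x => (fderiv ℝ (fun p : ℝ × E => Φ p.1 p.2) (σ, x)).comp
    (ContinuousLinearMap.inr ℝ ℝ E), ?_, fun σ hσ x hx => ?_⟩
  · exact (hΦ.fderiv_of_isOpen (m := ∞) (hV.prod hs) (by simp)).clm_comp contDiffOn_const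
  · have hjoint := ((hΦ.contDiffAt (x := (σ, x)) ((hV.prod hs).mem_nhds ⟨hσ, hx⟩)).differentiableAt
      (by simp)).hasFDerivAt
    exact HasFDerivAt.comp x hjoint (hasFDerivAt_prodMk_right σ x)

lemma continuousOn_slice {E F : Type*} [TopologicalSpace E] [TopologicalSpace F] {V : Set ℝ}
    {s : Set E} {Φ : ℝ → E → F} (hΦ : ContinuousOn (fun p : ℝ × E => Φ p.1 p.2) (V ×ˢ s))
    (hIV : Icc (0 : ℝ) 1 ⊆ V) {x : E} (hx : x ∈ s) :
    ContinuousOn (fun σ => Φ σ x) (uIcc (0 : ℝ) 1) := by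
  rw [uIcc_of_le zero_le_one]
  exact hΦ.comp (f := fun σ : ℝ => (σ, x)) (by fun_prop) fun σ hσ => ⟨hIV hσ, hx⟩

lemma hasFDerivAt_integral {E F : Type*} [NormedAddCommGroup E] [NormedSpace ℝ E]
    [NormedAddCommGroup F] [NormedSpace ℝ F] {V : Set ℝ} {s : Set E} (hs : IsOpen s)
    (hIV : Icc (0 : ℝ) 1 ⊆ V) {Φ : ℝ → E → F} {Φ' : ℝ → E → E →L[ℝ] F} {C : ℝ}
    (hΦ : ContinuousOn (fun p : ℝ × E => Φ p.1 p.2) (V ×ˢ s))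
    (hΦ' : ContinuousOn (fun p : ℝ × E => Φ' p.1 p.2) (V ×ˢ s))
    (hderiv : ∀ σ ∈ V, ∀ x ∈ s, HasFDerivAt (Φ σ) (Φ' σ x) x)
    (hC : ∀ σ ∈ V, ∀ x ∈ s, ‖Φ' σ x‖ ≤ C) {x : E} (hx : x ∈ s) :
    HasFDerivAt (fun x => ∫ σ in (0 : ℝ)..1, Φ σ x) (∫ σ in (0 : ℝ)..1, Φ' σ x) x := by
  have hmem (σ : ℝ) (hσ : σ ∈ uIoc (0 : ℝ) 1) : σ ∈ V := by
    rw [uIoc_of_le zero_le_one] at hσ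
    exact hIV (Ioc_subset_Icc_self hσ)
  refine intervalIntegral.hasFDerivAt_integral_of_dominated_of_fderiv_le (F := fun x σ => Φ σ x)
    (F' := fun x σ => Φ' σ x) (bound := fun _ => C) (hs.mem_nhds hx) ?_
    (continuousOn_slice hΦ hIV hx).intervalIntegrable
    (((continuousOn_slice hΦ' hIV hx).mono uIoc_subset_uIcc).aestronglyMeasurable
      measurableSet_uIoc)
    (Eventually.of_forall fun σ hσ y hy => hC σ (hmem σ hσ) y hy) intervalIntegrable_const
    (Eventually.of_forall fun σ hσ y hy => hderiv σ (hmem σ hσ) y hy)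
  filter_upwards [hs.mem_nhds hx] with y hy
  exact ((continuousOn_slice hΦ hIV hy).mono uIoc_subset_uIcc).aestronglyMeasurable
    measurableSet_uIoc

variable {E : Type u} [NormedAddCommGroup E] [NormedSpace ℝ E]

lemma contDiffOn_integral_and_norm_iteratedFDeriv_le (m : ℕ) {F : Type u} [NormedAddCommGroup F]
    [NormedSpace ℝ F] {V : Set ℝ} {s : Set E} (hV : IsOpen V) (hIV : Icc (0 : ℝ) 1 ⊆ V)
    (hs : IsOpen s) {Φ : ℝ → E → F} {b : ℕ → ℝ}
    (hΦ : ContDiffOn ℝ ∞ (fun p : ℝ × E => Φ p.1 p.2) (V ×ˢ s))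
    (hb : ∀ k, ∀ σ ∈ V, ∀ x ∈ s, ‖iteratedFDeriv ℝ k (Φ σ) x‖ ≤ b k) :
    ContDiffOn ℝ m (fun x => ∫ σ in (0 : ℝ)..1, Φ σ x) s ∧
      ∀ x ∈ s, ‖iteratedFDeriv ℝ m (fun x => ∫ σ in (0 : ℝ)..1, Φ σ x) x‖ ≤ b m := by
  induction m generalizing F b with
  | zero =>
    have hbound (σ : ℝ) (hσ : σ ∈ V) (x : E) (hx : x ∈ s) : ‖Φ σ x‖ ≤ b 0 := by
      simpa using hb 0 σ hσ x hx
    obtain ⟨Φ', hΦ', hderiv⟩ := exists_hasFDerivAt_of_contDiffOn_prod hV hs hΦ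
    have hbound' (σ : ℝ) (hσ : σ ∈ V) (x : E) (hx : x ∈ s) : ‖Φ' σ x‖ ≤ b 1 := by
      have h := hb 1 σ hσ x hx
      rwa [norm_iteratedFDeriv_one, (hderiv σ hσ x hx).fderiv] at h
    refine ⟨contDiffOn_zero.2 fun x hx => ?_, fun x hx => ?_⟩
    · exact (hasFDerivAt_integral hs hIV hΦ.continuousOn hΦ'.continuousOn hderiv hbound'
        hx).continuousAt.continuousWithinAt
    · rw [norm_iteratedFDeriv_zero]
      refine (intervalIntegral.norm_integral_le_of_norm_le_const (C := b 0) fun σ hσ => ?_).trans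
        (by simp)
      rw [uIoc_of_le zero_le_one] at hσ
      exact hbound σ (hIV (Ioc_subset_Icc_self hσ)) x hx
  | succ m ih =>
    obtain ⟨Φ', hΦ', hderiv⟩ := exists_hasFDerivAt_of_contDiffOn_prod hV hs hΦ
    have hb' (k : ℕ) (σ : ℝ) (hσ : σ ∈ V) (x : E) (hx : x ∈ s) :
        ‖iteratedFDeriv ℝ k (Φ' σ) x‖ ≤ b (k + 1) := by
      rw [← iteratedFDeriv_eq_of_eqOn hs (fun y hy => (hderiv σ hσ y hy).fderiv) k hx,
        norm_iteratedFDeriv_fderiv]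
      exact hb (k + 1) σ hσ x hx
    have hint (x : E) (hx : x ∈ s) := hasFDerivAt_integral hs hIV hΦ.continuousOn
      hΦ'.continuousOn hderiv (fun σ hσ y hy => by simpa using hb' 0 σ hσ y hy) hx
    have hfderiv : EqOn (fderiv ℝ fun x => ∫ σ in (0 : ℝ)..1, Φ σ x)
      (fun x => ∫ σ in (0 : ℝ)..1, Φ' σ x) s := fun x hx => (hint x hx).fderiv
    obtain ⟨hsmooth, hle⟩ := ih hΦ' hb'
    refine ⟨?_, fun x hx => ?_⟩
    · push_cast
      rw [contDiffOn_succ_iff_fderiv_of_isOpen hs]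
      exact ⟨fun x hx => (hint x hx).differentiableAt.differentiableWithinAt, by simp,
        hsmooth.congr hfderiv⟩
    · rw [← norm_iteratedFDeriv_fderiv, iteratedFDeriv_eq_of_eqOn hs hfderiv m hx]
      exact hle x hx

lemma UltradiffBoundOn.integral {M : ℕ → ℝ} {F : Type u} [NormedAddCommGroup F]
    [NormedSpace ℝ F] {V : Set ℝ} {s : Set E} (hV : IsOpen V) (hIV : Icc (0 : ℝ) 1 ⊆ V)
    (hs : IsOpen s) {Φ : ℝ → E → F} {A B : ℝ}
    (hΦ : ContDiffOn ℝ ∞ (fun p : ℝ × E => Φ p.1 p.2) (V ×ˢ s))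
    (hb : ∀ σ ∈ V, UltradiffBoundOn M (Φ σ) s A B) :
    UltradiffBoundOn M (fun x => ∫ σ in (0 : ℝ)..1, Φ σ x) s A B := by
  have h (m : ℕ) := contDiffOn_integral_and_norm_iteratedFDeriv_le m hV hIV hs hΦ
    fun k σ hσ => (hb σ hσ).norm_le k
  have hb0 := hb 0 (hIV (left_mem_Icc.2 zero_le_one))
  exact ⟨contDiffOn_infty.2 fun m => (h m).1, hb0.nonneg, hb0.one_le, fun m => (h m).2⟩

end ParametricIntegral

section Hadamard

lemma UltradiffBoundOn.comp_clm {M : ℕ → ℝ} [IsWeight M] {E F G : Type*} [NormedAddCommGroup E]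
    [NormedSpace ℝ E] [NormedAddCommGroup F] [NormedSpace ℝ F] [NormedAddCommGroup G]
    [NormedSpace ℝ G] {f : F → G} {t : Set F} {s : Set E} {A B C : ℝ}
    (hf : UltradiffBoundOn M f t A B) (ht : IsOpen t) {L : E →L[ℝ] F} (hL : MapsTo L s t)
    (hC : 1 ≤ C) (hLC : ‖L‖ ≤ C) : UltradiffBoundOn M (f ∘ L) s A (B * C) where
  contDiffOn := hf.contDiffOn.comp L.contDiff.contDiffOn hL
  nonneg := hf.nonneg
  one_le := one_le_mul_of_one_le_of_one_le hf.one_le hC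
  norm_le n y hy := by
    have hA := hf.nonneg
    have hB := hf.one_le
    have hMn := weight_pos M n
    have ht' := ht.preimage L.continuous
    have hcomp := L.iteratedFDerivWithin_comp_right hf.contDiffOn ht.uniqueDiffOn
      ht'.uniqueDiffOn (hL hy) (i := n) (by exact_mod_cast le_top)
    rw [iteratedFDerivWithin_of_isOpen n ht' (hL hy),
      iteratedFDerivWithin_of_isOpen n ht (hL hy)] at hcomp
    rw [hcomp]
    calc _ ≤ ‖iteratedFDeriv ℝ n f (L y)‖ * ∏ _i : Fin n, ‖L‖ :=
          ContinuousMultilinearMap.norm_compContinuousLinearMap_le _ _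
      _ = ‖iteratedFDeriv ℝ n f (L y)‖ * ‖L‖ ^ n := by simp
      _ ≤ A * B ^ n * (n ! * M n) * C ^ n := by gcongr; exact hf.norm_le n _ (hL hy)
      _ = A * (B * C) ^ n * (n ! * M n) := by rw [mul_pow]; ring

lemma eq_add_integral_fderiv {E F : Type*} [NormedAddCommGroup E] [NormedSpace ℝ E]
    [NormedAddCommGroup F] [NormedSpace ℝ F] [CompleteSpace F] {f : E → F} {x v : E}
    (hf : ∀ σ ∈ Icc (0 : ℝ) 1, ContDiffAt ℝ 1 f (x - (1 - σ) • v)) :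
    f x = f (x - v) + ∫ σ in (0 : ℝ)..1, fderiv ℝ f (x - (1 - σ) • v) v := by
  rw [← uIcc_of_le zero_le_one] at hf
  have hline (σ : ℝ) : HasDerivAt (fun σ : ℝ => x - (1 - σ) • v) v σ := by
    simpa using (((hasDerivAt_id σ).const_sub 1).smul_const v).const_sub x
  have hderiv (σ : ℝ) (hσ : σ ∈ uIcc (0 : ℝ) 1) :
      HasDerivAt (fun σ : ℝ => f (x - (1 - σ) • v)) (fderiv ℝ f (x - (1 - σ) • v) v) σ :=
    ((hf σ hσ).differentiableAt one_ne_zero).hasFDerivAt.comp_hasDerivAt σ (hline σ)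
  have hcont : ContinuousOn (fun σ : ℝ => fderiv ℝ f (x - (1 - σ) • v) v) (uIcc 0 1) :=
    fun σ hσ => ((((hf σ hσ).continuousAt_fderiv one_ne_zero).comp (f := fun σ => x - (1 - σ) • v)
      (hline σ).continuousAt).clm_apply continuousAt_const).continuousWithinAt
  rw [intervalIntegral.integral_eq_sub_of_hasDerivAt hderiv hcont.intervalIntegrable]
  simp

/- The quotient is the integral of `∂f/∂e` along the segment from `x - l x • e` to `x`. -/
lemma UltradiffAt.exists_eq_add_mul {M : ℕ → ℝ} [IsRegularWeight M] {E : Type}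
    [NormedAddCommGroup E] [NormedSpace ℝ E] {f : E → ℝ} (hf : UltradiffAt M f 0) (l : E →L[ℝ] ℝ)
    (e : E) :
    ∃ g : E → ℝ, UltradiffAt M g 0 ∧ ∀ᶠ x in 𝓝 0, f x = f (x - l x • e) + l x * g x := by
  have hf' : UltradiffAt M (fun x => fderiv ℝ f x e) 0 :=
    hf.fderiv_right.clm_comp (ContinuousLinearMap.apply ℝ ℝ e)
  obtain ⟨t, ht, h0t, A₀, A, B, hfb, hb⟩ := hf.exists_common_bound hf'
  obtain ⟨r, hr, hrt⟩ := Metric.isOpen_iff.1 ht 0 h0t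
  set T : ℝ → E →L[ℝ] E := fun σ => ContinuousLinearMap.id ℝ E - (1 - σ) • l.smulRight e with hT
  have hTapply (σ : ℝ) (x : E) : T σ x = x - (1 - σ) • l x • e := by simp [hT]
  set C : ℝ := 1 + 2 * ‖l.smulRight e‖
  have hC : 1 ≤ C := by linarith [norm_nonneg (l.smulRight e)]
  have hC0 : 0 < C := by linarith
  have hTnorm (σ : ℝ) (hσ : σ ∈ Ioo (-1 : ℝ) 2) : ‖T σ‖ ≤ C := by
    have hσ' : |1 - σ| ≤ 2 := abs_le.2 ⟨by linarith [hσ.2], by linarith [hσ.1]⟩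
    refine (norm_sub_le _ _).trans (add_le_add ContinuousLinearMap.norm_id_le ?_)
    rw [norm_smul, Real.norm_eq_abs]
    gcongr
  have hTmap (σ : ℝ) (hσ : σ ∈ Ioo (-1 : ℝ) 2) : MapsTo (T σ) (Metric.ball 0 (r / C)) t := by
    refine fun x hx => hrt (mem_ball_zero_iff.2 ?_)
    calc ‖T σ x‖ ≤ C * ‖x‖ := (T σ).le_of_opNorm_le (hTnorm σ hσ) x
      _ < C * (r / C) := by gcongr; exact mem_ball_zero_iff.1 hx
      _ = r := mul_div_cancel₀ r hC0.ne'
  have hIV : Icc (0 : ℝ) 1 ⊆ Ioo (-1) 2 := Icc_subset_Ioo (by norm_num) (by norm_num)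
  have hjoint : ContDiffOn ℝ ∞ (fun p : ℝ × E => fderiv ℝ f (T p.1 p.2) e)
      (Ioo (-1) 2 ×ˢ Metric.ball 0 (r / C)) := by
    have hTsmooth : ContDiff ℝ ∞ fun p : ℝ × E => T p.1 p.2 := by
      simp only [hTapply]
      fun_prop
    exact hb.contDiffOn.comp hTsmooth.contDiffOn fun p hp => hTmap p.1 hp.1 hp.2
  have h0 : (0 : E) ∈ Metric.ball 0 (r / C) := Metric.mem_ball_self (by positivity)
  refine ⟨fun x => ∫ σ in (0 : ℝ)..1, fderiv ℝ f (T σ x) e,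
    ⟨_, Metric.isOpen_ball, h0, A, B * C, UltradiffBoundOn.integral isOpen_Ioo hIV
      Metric.isOpen_ball hjoint fun σ hσ => hb.comp_clm ht (hTmap σ hσ) hC (hTnorm σ hσ)⟩, ?_⟩
  filter_upwards [Metric.isOpen_ball.mem_nhds h0] with x hx
  have htaylor := eq_add_integral_fderiv (f := f) (x := x) (v := l x • e) fun σ hσ => by
    rw [← hTapply]
    exact (hfb.contDiffOn.contDiffAt (ht.mem_nhds (hTmap σ (hIV hσ) hx))).of_le (by simp)
  simpa only [hTapply, map_smul, smul_eq_mul, intervalIntegral.integral_const_mul] using htaylor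

end Hadamard

section ImplicitFunction

variable {M : ℕ → ℝ} {E F : Type u} [NormedAddCommGroup E] [NormedSpace ℝ E]
  [NormedAddCommGroup F] [NormedSpace ℝ F]

lemma exists_contDiffAt_implicit [CompleteSpace F] {f : E → ℝ} (hf : ContDiffAt ℝ ∞ f 0)
    (hf0 : f 0 = 0) (L : F →L[ℝ] E) (e : E) (he : fderiv ℝ f 0 e ≠ 0) :
    ∃ p : F → ℝ, ContDiffAt ℝ ∞ p 0 ∧ p 0 = 0 ∧ ∀ᶠ v in 𝓝 0, f (L v + p v • e) = 0 := by
  set T : F × ℝ →L[ℝ] E := L.coprod (ContinuousLinearMap.toSpanSingleton ℝ e)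
  have hf' : ContDiffAt ℝ ∞ f (T (0, 0)) := by simpa [T] using hf
  have hfT : ContDiffAt ℝ ∞ (f ∘ T) (0, 0) := hf'.comp _ T.contDiff.contDiffAt
  have hderiv : fderiv ℝ (f ∘ T) (0, 0) = (fderiv ℝ f (T (0, 0))).comp T :=
    ((hf'.differentiableAt (by simp)).hasFDerivAt.comp _ T.hasFDerivAt).fderiv
  have hinv : (fderiv ℝ (f ∘ T) (0, 0) ∘L .inr ℝ F ℝ).IsInvertible := by
    refine ⟨ContinuousLinearEquiv.smulLeft (Units.mk0 _ he), ?_⟩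
    ext
    rw [hderiv]
    simp [T]
  refine ⟨hfT.implicitFunction (by simp) hinv, hfT.contDiffAt_implicitFunction (by simp) hinv,
    hfT.implicitFunction_apply_self (by simp) hinv, ?_⟩
  filter_upwards [hfT.eventually_apply_implicitFunction (by simp) hinv] with v hv
  simpa [T, hf0] using hv

lemma hasFDerivAt_of_implicit {f : E → ℝ} {f' : E →L[ℝ] ℝ} {L : F →L[ℝ] E} {e : E} {p : F → ℝ}
    {v : F} (hp : DifferentiableAt ℝ p v) (hf : HasFDerivAt f f' (L v + p v • e)) (he : f' e ≠ 0)
    (h : ∀ᶠ w in 𝓝 v, f (L w + p w • e) = 0) : HasFDerivAt p (-((f' e)⁻¹ • f'.comp L)) v := by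
  have hchain := hf.comp v (L.hasFDerivAt.add (hp.hasFDerivAt.smul_const e))
  have hzero : HasFDerivAt (fun w => f (L w + p w • e)) (0 : F →L[ℝ] ℝ) v :=
    (hasFDerivAt_const (0 : ℝ) v).congr_of_eventuallyEq h
  refine hp.hasFDerivAt.congr_fderiv (ContinuousLinearMap.ext fun w => ?_)
  have hw : f' (L w) + fderiv ℝ p v w * f' e = 0 := by
    simpa using DFunLike.congr_fun (hchain.unique hzero) w
  change fderiv ℝ p v w = -((f' e)⁻¹ * f' (L w))
  field_simp
  linarith

/- `v ↦ (L v + p v • e, p v)` solves an autonomous ODE with ultradifferentiable right-hand side. -/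
lemma UltradiffAt.exists_implicit [IsRegularWeight M] [CompleteSpace F] {f : E → ℝ}
    (hf : UltradiffAt M f 0) (hf0 : f 0 = 0) (L : F →L[ℝ] E) (e : E) (he : fderiv ℝ f 0 e ≠ 0) :
    ∃ p : F → ℝ, UltradiffAt M p 0 ∧ p 0 = 0 ∧ ∀ᶠ v in 𝓝 0, f (L v + p v • e) = 0 := by
  obtain ⟨p, hp, hp0, hfp⟩ := exists_contDiffAt_implicit hf.contDiffAt hf0 L e he
  refine ⟨p, ?_, hp0, hfp⟩
  set γ : F → E := fun v => L v + p v • e with hγ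
  have hγ0 : γ 0 = 0 := by simp [hγ, hp0]
  have hγc : ContinuousAt γ 0 := L.continuous.continuousAt.add (hp.continuousAt.smul_const e)
  have hfderiv : UltradiffAt M (fun x => fderiv ℝ f x e) 0 :=
    hf.fderiv_right.clm_comp (ContinuousLinearMap.apply ℝ ℝ e)
  set q : E → F →L[ℝ] ℝ := fun x => -((fderiv ℝ f x e)⁻¹ • (fderiv ℝ f x).comp L) 
  have hq : UltradiffAt M q 0 :=
    (((hfderiv.inv he).bilinear (ContinuousLinearMap.lsmul ℝ ℝ)
      (hf.fderiv_right.clm_comp ((ContinuousLinearMap.compL ℝ F E ℝ).flip L))).clm_comp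
        (-ContinuousLinearMap.id ℝ (F →L[ℝ] ℝ)))
  have hpq : ∀ᶠ v in 𝓝 0, HasFDerivAt p (q (γ v)) v := by
    have hne : ∀ᶠ v in 𝓝 0, fderiv ℝ f (γ v) e ≠ 0 :=
      hγc.eventually (hγ0.symm ▸ hfderiv.continuousAt.eventually_ne he)
    have hpdiff : ∀ᶠ v in 𝓝 0, DifferentiableAt ℝ p v :=
      ((hp.of_le (m := 1) (by simp)).eventually (by simp)).mono fun v hv =>
        hv.differentiableAt one_ne_zero
    have hfγ : ∀ᶠ v in 𝓝 0, UltradiffAt M f (γ v) := hγc.eventually (hγ0.symm ▸ hf.eventually)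
    filter_upwards [hpdiff, hne, hfγ, eventually_eventually_nhds.2 hfp] with v hpv hev hfv hv
    exact hasFDerivAt_of_implicit hpv (hfv.contDiffAt.differentiableAt (by simp)).hasFDerivAt
      hev hv
  set H : E → F →L[ℝ] E × ℝ := fun x => (L + (q x).smulRight e).prod (q x) with hH_def
  have hH : UltradiffAt M H 0 := by
    have haffine := (ultradiffAt_const (M := M) (x := (0 : E)) (L.prod (0 : F →L[ℝ] ℝ))).add
      (hq.clm_comp (ContinuousLinearMap.compL ℝ F ℝ (E × ℝ)
        ((ContinuousLinearMap.toSpanSingleton ℝ e).prod (ContinuousLinearMap.id ℝ ℝ))))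
    convert haffine using 2 with x
    ext w <;> simp [hH_def]
  have hsys : UltradiffAt M (fun v => (γ v, p v)) 0 := by
    refine ultradiffAt_of_ode (H := H ∘ Prod.fst) ?_ ?_
    · exact UltradiffAt.comp (by simpa [hγ0] using hH)
        (ultradiffAt_clm (ContinuousLinearMap.fst ℝ E ℝ))
    · filter_upwards [hpq] with v hv
      exact (L.hasFDerivAt.add (hv.smul_const e)).prodMk hv
  exact hsys.clm_comp (ContinuousLinearMap.snd ℝ E ℝ)

end ImplicitFunction

section LineDerivative

variable {M : ℕ → ℝ} {E F : Type*} [NormedAddCommGroup E] [NormedSpace ℝ E]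
  [NormedAddCommGroup F] [NormedSpace ℝ F]

/-- The `k`-th derivative of `f` at `x` along the line through `x` in the direction `e`. -/
noncomputable def iteratedLineDeriv (k : ℕ) (e : E) (f : E → F) (x : E) : F :=
  iteratedDeriv k (fun t : ℝ => f (x + t • e)) 0

lemma iteratedLineDeriv_zero (e : E) (f : E → F) : iteratedLineDeriv 0 e f = f := by
  funext x
  simp [iteratedLineDeriv]

lemma iteratedLineDeriv_comp {E' : Type*} [NormedAddCommGroup E'] [NormedSpace ℝ E'] {e : E}
    {e' : E'} {T : E' → E} (hT : ∀ x, ∀ t : ℝ, T (x + t • e') = T x + t • e) (k : ℕ)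
    (f : E → F) (x : E') :
    iteratedLineDeriv k e' (fun y => f (T y)) x = iteratedLineDeriv k e f (T x) := by
  simp only [iteratedLineDeriv, hT]

lemma iteratedLineDeriv_eq_iteratedFDeriv {f : E → F} {s : Set E} (hs : IsOpen s)
    (hf : ContDiffOn ℝ ∞ f s) (k : ℕ) (e : E) {x : E} (hx : x ∈ s) :
    iteratedLineDeriv k e f x = iteratedFDeriv ℝ k f x fun _ => e := by
  have hmem : ∀ᶠ t : ℝ in 𝓝 0, x + t • e ∈ s :=
    ContinuousAt.eventually_mem (f := fun t : ℝ => x + t • e) (by fun_prop)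
      (hs.mem_nhds (by simpa using hx))
  suffices h : iteratedDeriv k (fun t : ℝ => f (x + t • e)) =ᶠ[𝓝 0]
      fun t => iteratedFDeriv ℝ k f (x + t • e) fun _ => e by
    simpa [iteratedLineDeriv] using h.eq_of_nhds
  induction k with
  | zero => exact Eventually.of_forall fun t => by simp
  | succ k ih =>
    filter_upwards [eventually_eventually_nhds.2 ih, hmem] with t ht hts
    rw [iteratedDeriv_succ, EventuallyEq.deriv_eq ht]
    exact (hasDerivAt_iteratedFDeriv_add_smul hs hf k hts).deriv

lemma iteratedLineDeriv_succ_eventuallyEq {f : E → F} {x : E} (hf : UltradiffAt M f x) (k : ℕ)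
    (e : E) :
    iteratedLineDeriv (k + 1) e f =ᶠ[𝓝 x] fun y => fderiv ℝ (iteratedLineDeriv k e f) y e := by
  obtain ⟨s, hs, hxs, A, B, hb⟩ := hf
  filter_upwards [hs.mem_nhds hxs] with y hy
  have heq : iteratedLineDeriv k e f =ᶠ[𝓝 y] fun z => iteratedFDeriv ℝ k f z fun _ => e := by
    filter_upwards [hs.mem_nhds hy] with z hz
    exact iteratedLineDeriv_eq_iteratedFDeriv hs hb.contDiffOn k e hz
  have hdiff : DifferentiableAt ℝ (fun z => iteratedFDeriv ℝ k f z fun _ => e) y :=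
    ((ContinuousMultilinearMap.apply ℝ (fun _ : Fin k => E) F fun _ => e).differentiableAt).comp y
      ((hb.contDiffOn.contDiffAt (hs.mem_nhds hy)).differentiableAt_iteratedFDeriv
        (by exact_mod_cast ENat.natCast_lt_top k))
  have hline : HasLineDerivAt ℝ (fun z => iteratedFDeriv ℝ k f z fun _ => e)
      (iteratedFDeriv ℝ (k + 1) f y fun _ => e) y e := by
    simpa [HasLineDerivAt] using hasDerivAt_iteratedFDeriv_add_smul (t := 0) (v := e) hs
      hb.contDiffOn k (by simpa using hy)
  rw [iteratedLineDeriv_eq_iteratedFDeriv hs hb.contDiffOn (k + 1) e hy, heq.fderiv_eq,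
    ← hdiff.lineDeriv_eq_fderiv, hline.lineDeriv]

lemma ultradiffAt_iteratedLineDeriv [IsRegularWeight M] {f : E → F} {x : E}
    (hf : UltradiffAt M f x) (k : ℕ) (e : E) : UltradiffAt M (iteratedLineDeriv k e f) x := by
  induction k with
  | zero => rwa [iteratedLineDeriv_zero]
  | succ k ih =>
    exact (ih.fderiv_right.clm_comp (ContinuousLinearMap.apply ℝ F e)).congr
      (iteratedLineDeriv_succ_eventuallyEq hf k e)

lemma iteratedDeriv_succ_id_mul {g : ℝ → ℝ} (k : ℕ) (hg : ContDiffAt ℝ (k + 1 : ℕ) g 0) :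
    iteratedDeriv (k + 1) (fun t => t * g t) 0 = (k + 1) * iteratedDeriv k g 0 := by
  rw [iteratedDeriv_fun_mul contDiffAt_fun_id hg, Finset.sum_eq_single 1]
  · simp [iteratedDeriv_fun_id_zero]
  · intro i _ hi
    simp [iteratedDeriv_fun_id_zero, hi]
  · simp

end LineDerivative

section Expansion

variable {M : ℕ → ℝ} {E : Type} [NormedAddCommGroup E] [NormedSpace ℝ E]

lemma tendsto_sub_smul_zero (l : E →L[ℝ] ℝ) (e : E) :
    Tendsto (fun x => x - l x • e) (𝓝 0) (𝓝 0) :=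
  Continuous.tendsto' (by fun_prop) _ _ (by simp)

lemma iteratedLineDeriv_succ_of_eq_add_mul {f g : E → ℝ} {l : E →L[ℝ] ℝ} {e : E} (hle : l e = 1)
    (hg : UltradiffAt M g 0) (hfg : ∀ᶠ x in 𝓝 0, f x = f (x - l x • e) + l x * g x) (k : ℕ) :
    ∀ᶠ x in 𝓝 0, iteratedLineDeriv (k + 1) e f (x - l x • e) =
      (k + 1) * iteratedLineDeriv k e g (x - l x • e) := by
  filter_upwards [(tendsto_sub_smul_zero l e).eventually (eventually_eventually_nhds.2 hfg),
    (tendsto_sub_smul_zero l e).eventually hg.eventually] with x hx hgx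
  set y := x - l x • e
  have hly : l y = 0 := by simp [y, hle]
  have hline : ContDiff ℝ ∞ fun t : ℝ => y + t • e := by fun_prop
  have hy : y + (0 : ℝ) • e = y := by simp
  have hfline : (fun t : ℝ => f (y + t • e)) =ᶠ[𝓝 0] fun t => f y + t * g (y + t • e) := by
    filter_upwards [hline.continuous.continuousAt.eventually (hy.symm ▸ hx)] with t ht
    simpa [hly, hle] using ht
  have hgline : ContDiffAt ℝ ∞ (fun t : ℝ => g (y + t • e)) 0 :=
    ContDiffAt.comp (0 : ℝ) (hy.symm ▸ hgx.contDiffAt) hline.contDiffAt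
  rw [iteratedLineDeriv, hfline.iteratedDeriv_eq, iteratedDeriv_const_add k.succ_pos]
  exact iteratedDeriv_succ_id_mul k (hgline.of_le (by exact_mod_cast le_top))

/- Induction on `d`: Hadamard division lowers the order of all derivatives by one. -/
lemma UltradiffAt.exists_expansion [IsRegularWeight M] {l : E →L[ℝ] ℝ} {e : E} (hle : l e = 1)
    (d : ℕ) {f : E → ℝ} (hf : UltradiffAt M f 0) :
    ∃ u : E → ℝ, UltradiffAt M u 0 ∧ u 0 = iteratedLineDeriv d e f 0 / d ! ∧
      ∀ᶠ x in 𝓝 0, f x = ∑ i ∈ Finset.range d,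
        iteratedLineDeriv i e f (x - l x • e) / i ! * l x ^ i + l x ^ d * u x := by
  induction d generalizing f with
  | zero => exact ⟨f, hf, by simp [iteratedLineDeriv_zero], by simp⟩
  | succ d ih =>
    obtain ⟨g, hg, hfg⟩ := hf.exists_eq_add_mul l e
    obtain ⟨u, hu, hu0, hgu⟩ := ih hg
    have hderiv := iteratedLineDeriv_succ_of_eq_add_mul hle hg hfg
    refine ⟨u, hu, ?_, ?_⟩
    · have h0 : iteratedLineDeriv (d + 1) e f 0 = (d + 1) * iteratedLineDeriv d e g 0 := by
        simpa using (hderiv d).self_of_nhds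
      rw [hu0, h0, Nat.factorial_succ]
      push_cast
      field_simp
    · filter_upwards [(Finset.eventually_all (Finset.range d)).2 fun k _ => hderiv k, hgu, hfg]
        with x hder hgx hfx
      have hshift : ∑ i ∈ Finset.range d,
            iteratedLineDeriv (i + 1) e f (x - l x • e) / (i + 1)! * l x ^ (i + 1) =
          l x * ∑ i ∈ Finset.range d, iteratedLineDeriv i e g (x - l x • e) / i ! * l x ^ i := by
        rw [Finset.mul_sum]
        refine Finset.sum_congr rfl fun i hi => ?_
        rw [hder i hi, Nat.factorial_succ]
        push_cast
        field_simp
        ring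
      rw [Finset.sum_range_succ', hshift, hfx, hgx, iteratedLineDeriv_zero]
      simp only [Nat.factorial_zero, Nat.cast_one, div_one, pow_zero, mul_one, pow_succ]
      ring

end Expansion

lemma exponent_induction {ι : Type*} [Finite ι] [DecidableEq ι] {P : (ι → ℕ) → Prop}
    (zero : P 0) (add_single : ∀ β j, P β → P (β + Pi.single j 1)) (β : ι → ℕ) : P β := by
  induction β using WellFoundedLT.induction with
  | ind β ih =>
    by_cases hβ : β = 0
    · exact hβ ▸ zero
    · obtain ⟨j, hj⟩ := Function.ne_iff.1 hβ
      have hle : Pi.single j 1 ≤ β := by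
        intro i
        obtain rfl | hi := eq_or_ne i j
        · simpa using Nat.one_le_iff_ne_zero.2 hj
        · simp [hi]
      have hlt : β - Pi.single j 1 < β :=
        Pi.lt_def.2 ⟨tsub_le_self, j, by simpa using Nat.pos_of_ne_zero hj⟩
      exact tsub_add_cancel_of_le hle ▸ add_single _ j (ih _ hlt)

lemma le_of_eventually_mul_pow_le {a b : ℝ} {m k : ℕ} (hb : 0 < b)
    (h : ∀ᶠ s in 𝓝[>] (0 : ℝ), s ^ k * b ≤ s ^ m * a) : m ≤ k := by
  by_contra! hlt
  have hle : ∀ᶠ s in 𝓝[>] (0 : ℝ), b ≤ s ^ (m - k) * a := by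
    filter_upwards [h, self_mem_nhdsWithin] with s hs hpos
    refine le_of_mul_le_mul_left ?_ (pow_pos (mem_Ioi.1 hpos) k)
    rwa [← mul_assoc, ← pow_add, Nat.add_sub_cancel' hlt.le]
  have hlim : Tendsto (fun s : ℝ => s ^ (m - k) * a) (𝓝[>] 0) (𝓝 0) :=
    (Continuous.tendsto' (by fun_prop) _ _ (by simp [(Nat.sub_pos_of_lt hlt).ne'])).mono_left
      nhdsWithin_le_nhds
  exact hb.not_ge (ge_of_tendsto hlim hle)

section Monomial

variable {ι : Type*} [Fintype ι]

/-- The monomial with exponents `β` in real variables indexed by `ι`. -/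
def monomial (β : ι → ℕ) (x : ι → ℝ) : ℝ := ∏ i, x i ^ β i

lemma monomial_zero (x : ι → ℝ) : monomial 0 x = 1 := by simp [monomial]

lemma monomial_add (β γ : ι → ℕ) (x : ι → ℝ) :
    monomial (β + γ) x = monomial β x * monomial γ x := by
  simp [monomial, pow_add, Finset.prod_mul_distrib]

lemma monomial_smul (k : ℕ) (β : ι → ℕ) (x : ι → ℝ) :
    monomial (k • β) x = monomial β x ^ k := by
  simp [monomial, Finset.prod_pow, pow_mul']

lemma monomial_mul_pow (β : ι → ℕ) (ε x : ι → ℝ) (k : ℕ) :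
    monomial β (fun j => ε j * x j ^ k) = monomial β ε * monomial (k • β) x := by
  simp [monomial, mul_pow, Finset.prod_mul_distrib, ← pow_mul]

lemma monomial_ne_zero (β : ι → ℕ) {x : ι → ℝ} (hx : ∀ j, x j ≠ 0) : monomial β x ≠ 0 :=
  Finset.prod_ne_zero_iff.2 fun j _ => pow_ne_zero _ (hx j)

lemma monomial_pos (β : ι → ℕ) {x : ι → ℝ} (hx : ∀ j, 0 < x j) : 0 < monomial β x :=
  Finset.prod_pos fun j _ => pow_pos (hx j) _

lemma monomial_add_single [DecidableEq ι] (β : ι → ℕ) (j : ι) (x : ι → ℝ) :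
    monomial (β + Pi.single j 1) x = monomial β x * x j := by
  rw [monomial_add, monomial, monomial, Finset.prod_eq_single (s := Finset.univ)
    (f := fun i => x i ^ (Pi.single j 1 : ι → ℕ) i) j (fun i _ hi => by simp [hi]) (by simp)]
  simp

lemma monomial_update [DecidableEq ι] (β : ι → ℕ) (x : ι → ℝ) (j : ι) (s : ℝ) :
    monomial β (Function.update x j s) = s ^ β j * monomial (Function.update β j 0) x := by
  simp only [monomial]
  rw [← Finset.mul_prod_erase _ _ (Finset.mem_univ j),
    ← Finset.mul_prod_erase _ (fun i => x i ^ Function.update β j 0 i) (Finset.mem_univ j)]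
  simp only [Function.update_self, pow_zero, one_mul]
  congr 1
  exact Finset.prod_congr rfl fun i hi => by simp [Finset.ne_of_mem_erase hi]

lemma exponent_le_of_monomial_mul_le {α β : ι → ℕ} {u v : (ι → ℝ) → ℝ} (hu : ContinuousAt u 0)
    (hv : ContinuousAt v 0) (hv0 : 0 < v 0)
    (h : ∀ᶠ x in 𝓝 0, (∀ j, 0 < x j) → monomial β x * v x ≤ monomial α x * u x) : α ≤ β := by
  classical
  intro j
  have hconst : ∀ᶠ x in 𝓝 0, (∀ j, 0 < x j) →
      monomial β x * (v 0 / 2) ≤ monomial α x * (u 0 + 1) := by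
    filter_upwards [h, hu.eventually_lt_const (lt_add_one _),
      hv.eventually_const_lt (half_lt_self hv0)] with x hx hux hvx hpos
    have hα := monomial_pos α hpos
    have hβ := monomial_pos β hpos
    calc monomial β x * (v 0 / 2) ≤ monomial β x * v x := by gcongr
      _ ≤ monomial α x * u x := hx hpos
      _ ≤ monomial α x * (u 0 + 1) := by gcongr
  obtain ⟨δ, hδ, hbox⟩ := Metric.nhds_basis_closedBall.eventually_iff.1 hconst
  -- Let only the `j`-th coordinate tend to zero, the others staying equal to `δ`.
  refine le_of_eventually_mul_pow_le
    (b := monomial (Function.update β j 0) (fun _ => δ) * (v 0 / 2))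
    (a := monomial (Function.update α j 0) (fun _ => δ) * (u 0 + 1))
    (mul_pos (monomial_pos _ fun _ => hδ) (half_pos hv0)) ?_
  filter_upwards [Ioc_mem_nhdsGT hδ] with s hs
  have hpos : ∀ i, 0 < Function.update (fun _ => δ) j s i := fun i => by
    obtain rfl | hi := eq_or_ne i j <;> simp [*, hs.1]
  have hmem : Function.update (fun _ => δ) j s ∈ Metric.closedBall (0 : ι → ℝ) δ := by
    rw [mem_closedBall_zero_iff, pi_norm_le_iff_of_nonneg hδ.le]
    intro i
    rw [Real.norm_of_nonneg (hpos i).le]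
    obtain rfl | hi := eq_or_ne i j <;> simp [*, hs.2]
  simpa only [monomial_update, mul_assoc] using hbox hmem hpos

end Monomial

section NormalCrossing

variable {M : ℕ → ℝ} {ι : Type*} [Fintype ι]

lemma UltradiffAt.apply {E : Type*} [NormedAddCommGroup E] [NormedSpace ℝ E]
    {f : E → ι → ℝ} {x : E} (hf : UltradiffAt M f x) (i : ι) :
    UltradiffAt M (fun y => f y i) x :=
  hf.clm_comp (ContinuousLinearMap.proj i : (ι → ℝ) →L[ℝ] ℝ)

lemma ultradiffAt_coord [IsWeight M] (j : ι) {x : ι → ℝ} :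
    UltradiffAt M (fun y : ι → ℝ => y j) x :=
  ultradiffAt_id.apply j

lemma ultradiffAt_monomial [IsWeight M] (β : ι → ℕ) {x : ι → ℝ} :
    UltradiffAt M (monomial β) x :=
  UltradiffAt.prod Finset.univ fun i _ => (ultradiffAt_coord i).pow (β i)

lemma UltradiffAt.update [IsWeight M] [DecidableEq ι] {E : Type*} [NormedAddCommGroup E]
    [NormedSpace ℝ E] {f : E → ι → ℝ} {q : E → ℝ} {x : E} (hf : UltradiffAt M f x)
    (hq : UltradiffAt M q x) (j : ι) :
    UltradiffAt M (fun y => Function.update (f y) j (q y)) x := by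
  refine UltradiffAt.pi fun i => ?_
  obtain rfl | hi := eq_or_ne i j
  · simpa using hq
  · simpa [hi] using hf.apply i

/-- The germ of `f` at the origin is a monomial times a nonvanishing function of class `M`. -/
def IsNormalCrossing (M : ℕ → ℝ) (f : (ι → ℝ) → ℝ) : Prop :=
  ∃ (β : ι → ℕ) (u : (ι → ℝ) → ℝ), UltradiffAt M u 0 ∧ u 0 ≠ 0 ∧
    f =ᶠ[𝓝 0] fun x => monomial β x * u x

variable {f g : (ι → ℝ) → ℝ}

lemma IsNormalCrossing.congr (hf : IsNormalCrossing M f) (h : g =ᶠ[𝓝 0] f) :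
    IsNormalCrossing M g := by
  obtain ⟨β, u, hu, hu0, hfu⟩ := hf
  exact ⟨β, u, hu, hu0, h.trans hfu⟩

lemma UltradiffAt.isNormalCrossing (hf : UltradiffAt M f 0) (h0 : f 0 ≠ 0) :
    IsNormalCrossing M f :=
  ⟨0, f, hf, h0, Eventually.of_forall fun x => by simp [monomial_zero]⟩

lemma isNormalCrossing_coord [IsWeight M] (j : ι) : IsNormalCrossing M fun x : ι → ℝ => x j := by
  classical
  exact ⟨Pi.single j 1, fun _ => 1, ultradiffAt_const 1, one_ne_zero,
    Eventually.of_forall fun x => by simpa [monomial_zero] using (monomial_add_single 0 j x).symm⟩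

lemma IsNormalCrossing.mul [IsWeight M] (hf : IsNormalCrossing M f) (hg : IsNormalCrossing M g) :
    IsNormalCrossing M fun x => f x * g x := by
  obtain ⟨β, u, hu, hu0, hfu⟩ := hf
  obtain ⟨γ, v, hv, hv0, hgv⟩ := hg
  refine ⟨β + γ, fun x => u x * v x, hu.mul hv, mul_ne_zero hu0 hv0, ?_⟩
  filter_upwards [hfu, hgv] with x hx hx'
  rw [hx, hx', monomial_add]
  ring

lemma IsNormalCrossing.pow [IsWeight M] (hf : IsNormalCrossing M f) (k : ℕ) :
    IsNormalCrossing M fun x => f x ^ k := by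
  induction k with
  | zero => simpa using UltradiffAt.isNormalCrossing (ultradiffAt_const (1 : ℝ)) one_ne_zero
  | succ k ih => simpa only [pow_succ] using ih.mul hf

lemma IsNormalCrossing.prod [IsWeight M] {σ : Type*} (s : Finset σ) {F : σ → (ι → ℝ) → ℝ}
    (hF : ∀ i ∈ s, IsNormalCrossing M (F i)) : IsNormalCrossing M fun x => ∏ i ∈ s, F i x := by
  induction s using Finset.cons_induction with
  | empty => simpa using UltradiffAt.isNormalCrossing (ultradiffAt_const (1 : ℝ)) one_ne_zero
  | cons a s ha ih =>
    simp only [Finset.prod_cons]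
    exact (hF a (Finset.mem_cons_self a s)).mul
      (ih fun i hi => hF i (Finset.mem_cons_of_mem hi))

lemma isNormalCrossing_monomial [IsWeight M] (β : ι → ℕ) :
    IsNormalCrossing M (monomial β) :=
  IsNormalCrossing.prod Finset.univ fun i _ => (isNormalCrossing_coord i).pow (β i)

lemma IsNormalCrossing.ultradiffAt [IsWeight M] (hf : IsNormalCrossing M f) :
    UltradiffAt M f 0 := by
  obtain ⟨β, u, hu, -, hfu⟩ := hf
  exact ((ultradiffAt_monomial β).mul hu).congr hfu

lemma IsNormalCrossing.not_eventuallyEq_zero (hf : IsNormalCrossing M f) : ¬ f =ᶠ[𝓝 0] 0 := by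
  obtain ⟨β, u, hu, hu0, hfu⟩ := hf
  intro hzero
  have hdiag : Tendsto (fun t : ℝ => fun _ : ι => t) (𝓝[>] 0) (𝓝 0) :=
    (Continuous.tendsto' (by fun_prop) _ _ rfl).mono_left nhdsWithin_le_nhds
  obtain ⟨t, ⟨⟨hft, hfut⟩, hut⟩, ht⟩ := ((hdiag.eventually ((hzero.and hfu).and
    (hu.continuousAt.eventually_ne hu0))).and self_mem_nhdsWithin).exists
  have hβ := monomial_ne_zero β (x := fun _ : ι => t) fun _ => (mem_Ioi.1 ht).ne'
  exact mul_ne_zero hβ hut (hfut.symm.trans hft)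

end NormalCrossing

section Factorization

variable {M : ℕ → ℝ} {ι : Type} [Fintype ι] {f g : (ι → ℝ) → ℝ}

lemma IsNormalCrossing.comp [IsRegularWeight M] {ι' : Type} [Fintype ι']
    (hf : IsNormalCrossing M f) {p : (ι' → ℝ) → ι → ℝ} (hp : UltradiffAt M p 0) (hp0 : p 0 = 0)
    (hpi : ∀ i, IsNormalCrossing M fun x => p x i) : IsNormalCrossing M fun x => f (p x) := by
  obtain ⟨β, u, hu, hu0, hfu⟩ := hf
  have hup : UltradiffAt M (fun x => u (p x)) 0 := UltradiffAt.comp (hp0.symm ▸ hu) hp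
  have hβp : IsNormalCrossing M fun x => monomial β (p x) :=
    IsNormalCrossing.prod Finset.univ fun i _ => (hpi i).pow (β i)
  refine (hβp.mul (hup.isNormalCrossing (by rwa [hp0]))).congr ?_
  exact hp.continuousAt.eventually (hp0.symm ▸ hfu)

lemma UltradiffAt.exists_eq_coord_mul [IsRegularWeight M] [DecidableEq ι]
    (hf : UltradiffAt M f 0) (j : ι) (h0 : (fun x => f (Function.update x j 0)) =ᶠ[𝓝 0] 0) :
    ∃ g, UltradiffAt M g 0 ∧ f =ᶠ[𝓝 0] fun x => x j * g x := by
  obtain ⟨g, hg, hfg⟩ := hf.exists_eq_add_mul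
    (ContinuousLinearMap.proj j : (ι → ℝ) →L[ℝ] ℝ) (Pi.single j 1)
  refine ⟨g, hg, ?_⟩
  filter_upwards [hfg, h0] with x hx hx0
  have hupdate : x - x j • Pi.single j 1 = Function.update x j 0 := by
    ext i
    obtain rfl | hi := eq_or_ne i j <;> simp [*]
  rw [hx, ContinuousLinearMap.proj_apply, hupdate, hx0, Pi.zero_apply, zero_add]

lemma UltradiffAt.coord_dvd_or_dvd [IsQuasianalyticWeight M] (hf : UltradiffAt M f 0)
    (hg : UltradiffAt M g 0) (j : ι) (h : ∀ᶠ x in 𝓝 0, x j = 0 → f x * g x = 0) :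
    (∃ f', UltradiffAt M f' 0 ∧ f =ᶠ[𝓝 0] fun x => x j * f' x) ∨
      ∃ g', UltradiffAt M g' 0 ∧ g =ᶠ[𝓝 0] fun x => x j * g' x := by
  classical
  set r : (ι → ℝ) → ι → ℝ := fun x => Function.update x j 0
  have hr0 : r 0 = 0 := by simp [r]
  have hr : UltradiffAt M r 0 := ultradiffAt_id.update (ultradiffAt_const 0) j
  have hlim : Tendsto r (𝓝 0) (𝓝 0) := by simpa only [ContinuousAt, hr0] using hr.continuousAt
  have hzero : ∀ᶠ x in 𝓝 0, f (r x) * g (r x) = 0 := by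
    filter_upwards [hlim.eventually h] with x hx using hx (by simp [r])
  refine (UltradiffAt.eventuallyEq_zero_or_of_mul (UltradiffAt.comp (hr0.symm ▸ hf) hr)
    (UltradiffAt.comp (hr0.symm ▸ hg) hr) hzero).imp ?_ ?_
  · exact hf.exists_eq_coord_mul j
  · exact hg.exists_eq_coord_mul j

lemma UltradiffAt.eventuallyEq_of_coord_mul [IsQuasianalyticWeight M] (hf : UltradiffAt M f 0)
    (hg : UltradiffAt M g 0) (j : ι) (h : ∀ᶠ x in 𝓝 0, x j * f x = x j * g x) : f =ᶠ[𝓝 0] g := by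
  have hzero : ∀ᶠ x in 𝓝 0, x j * (f x - g x) = 0 := by
    filter_upwards [h] with x hx
    rw [mul_sub, hx, sub_self]
  have := ((ultradiffAt_coord j).eventuallyEq_zero_or_of_mul (hf.sub hg) hzero).resolve_left
    (isNormalCrossing_coord (M := M) j).not_eventuallyEq_zero
  filter_upwards [this] with x hx using sub_eq_zero.1 hx

lemma isNormalCrossing_of_mul_eventuallyEq [IsQuasianalyticWeight M] {u : (ι → ℝ) → ℝ}
    (hu : UltradiffAt M u 0) (hu0 : u 0 ≠ 0) (β : ι → ℕ) (hf : UltradiffAt M f 0)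
    (hg : UltradiffAt M g 0) (h : ∀ᶠ x in 𝓝 0, f x * g x = monomial β x * u x) :
    IsNormalCrossing M f ∧ IsNormalCrossing M g := by
  classical
  induction β using exponent_induction generalizing f g with
  | zero =>
    have h0 : f 0 * g 0 ≠ 0 := by simpa [h.self_of_nhds, monomial_zero] using hu0
    exact ⟨hf.isNormalCrossing (left_ne_zero_of_mul h0),
      hg.isNormalCrossing (right_ne_zero_of_mul h0)⟩
  | add_single β j ih =>
    have hx : IsNormalCrossing M fun x : ι → ℝ => x j := isNormalCrossing_coord j
    have hβu := (ultradiffAt_monomial (M := M) β).mul hu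
    simp only [monomial_add_single] at h
    have hzero : ∀ᶠ x in 𝓝 0, x j = 0 → f x * g x = 0 := by
      filter_upwards [h] with x hfg hj
      rw [hfg, hj, mul_zero, zero_mul]
    rcases hf.coord_dvd_or_dvd hg j hzero with ⟨f', hf', hff'⟩ | ⟨g', hg', hgg'⟩
    · have hmul := (hf'.mul hg).eventuallyEq_of_coord_mul hβu j (by
        filter_upwards [h, hff'] with x hfg hfx
        linear_combination hfg - g x * hfx)
      exact (ih hf' hg hmul).imp_left fun hf'' => (hx.mul hf'').congr hff'
    · have hmul := (hf.mul hg').eventuallyEq_of_coord_mul hβu j (by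
        filter_upwards [h, hgg'] with x hfg hgx
        linear_combination hfg - f x * hgx)
      exact (ih hf hg' hmul).imp_right fun hg'' => (hx.mul hg'').congr hgg'

lemma isNormalCrossing_of_prod [IsQuasianalyticWeight M] {κ : Type*} {s : Finset κ}
    {F : κ → (ι → ℝ) → ℝ} (hF : ∀ k ∈ s, UltradiffAt M (F k) 0)
    (h : IsNormalCrossing M fun x => ∏ k ∈ s, F k x) {i : κ} (hi : i ∈ s) :
    IsNormalCrossing M (F i) := by
  classical
  obtain ⟨β, u, hu, hu0, hprod⟩ := h
  refine (isNormalCrossing_of_mul_eventuallyEq hu hu0 β (hF i hi) (UltradiffAt.prod (s.erase i)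
    fun k hk => hF k (Finset.mem_of_mem_erase hk)) ?_).1
  filter_upwards [hprod] with x hx
  rw [← hx, Finset.mul_prod_erase s (fun k => F k x) hi]

end Factorization

section Lift

variable {M : ℕ → ℝ} {κ : Type*} {l : Filter κ} {E F G : Type} [NormedAddCommGroup E]
  [NormedSpace ℝ E] [NormedAddCommGroup F] [NormedSpace ℝ F] [NormedAddCommGroup G]
  [NormedSpace ℝ G]

/-- The family `z`, converging to the origin along `l`, lifts `y` through `p`, a germ at the origin
of a map of class `M`. Such lifts replace the charts of a local blowing-up: only the chart
through which the family `y` factors is kept. -/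
structure IsLift (M : ℕ → ℝ) (l : Filter κ) (p : E → F) (z : κ → E) (y : κ → F) : Prop where
  ultradiffAt : UltradiffAt M p 0
  map_zero : p 0 = 0
  tendsto : Tendsto z l (𝓝 0)
  eventually_eq : ∀ᶠ m in l, p (z m) = y m

variable {p : E → F} {z : κ → E} {y : κ → F}

lemma IsLift.refl [IsWeight M] (hy : Tendsto y l (𝓝 0)) : IsLift M l (fun x => x) y y :=
  ⟨ultradiffAt_id, rfl, hy, Eventually.of_forall fun _ => rfl⟩

lemma IsLift.tendsto_map (h : IsLift M l p z y) : Tendsto p (𝓝 0) (𝓝 0) := by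
  simpa only [ContinuousAt, h.map_zero] using h.ultradiffAt.continuousAt

lemma IsLift.comp_right [IsRegularWeight M] (h : IsLift M l p z y) {f : F → G}
    (hf : UltradiffAt M f 0) : UltradiffAt M (fun x => f (p x)) 0 :=
  UltradiffAt.comp (h.map_zero.symm ▸ hf) h.ultradiffAt

lemma IsLift.trans [IsRegularWeight M] {q : G → E} {w : κ → G} (h : IsLift M l p z y)
    (h' : IsLift M l q w z) : IsLift M l (fun x => p (q x)) w y := by
  refine ⟨h'.comp_right h.ultradiffAt, by rw [h'.map_zero, h.map_zero], h'.tendsto, ?_⟩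
  filter_upwards [h.eventually_eq, h'.eventually_eq] with m hm hm'
  rw [hm', hm]

variable {ι : Type} [Fintype ι] {f g : (ι → ℝ) → ℝ} {y z : κ → ι → ℝ} {p : (ι → ℝ) → ι → ℝ}

/-- Some lift of the family `y` pulls `f` back to a normal crossing. -/
def IsMonomializableAlong (M : ℕ → ℝ) (l : Filter κ) (y : κ → ι → ℝ) (f : (ι → ℝ) → ℝ) : Prop :=
  ∃ (p : (ι → ℝ) → ι → ℝ) (z : κ → ι → ℝ), IsLift M l p z y ∧
    IsNormalCrossing M fun x => f (p x)

lemma IsLift.isMonomializableAlong [IsRegularWeight M] (h : IsLift M l p z y)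
    (hf : IsMonomializableAlong M l z fun x => f (p x)) : IsMonomializableAlong M l y f := by
  obtain ⟨q, w, hq, hfq⟩ := hf
  exact ⟨_, w, h.trans hq, hfq⟩

lemma IsMonomializableAlong.congr (hf : IsMonomializableAlong M l y f) (h : g =ᶠ[𝓝 0] f) :
    IsMonomializableAlong M l y g := by
  obtain ⟨p, z, hp, hfp⟩ := hf
  exact ⟨p, z, hp, hfp.congr (hp.tendsto_map.eventually h)⟩

lemma IsNormalCrossing.isMonomializableAlong [IsWeight M] (hf : IsNormalCrossing M f)
    (hy : Tendsto y l (𝓝 0)) : IsMonomializableAlong M l y f :=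
  ⟨_, y, .refl hy, hf⟩

lemma isLift_update_mul [IsWeight M] [DecidableEq ι] (hy : Tendsto y l (𝓝 0)) (j : ι)
    {q : (ι → ℝ) → ℝ} (hq : UltradiffAt M q 0) (hqj : ∀ x s, q (Function.update x j s) = q x)
    {c : ℝ} (hc0 : q 0 * c = 0) (hc : Tendsto (fun m => y m j / q (y m)) l (𝓝 c))
    (h0 : ∀ᶠ m in l, q (y m) = 0 → y m j = 0) :
    IsLift M l (fun x => Function.update x j (q x * (c + x j)))
      (fun m => Function.update (y m) j (y m j / q (y m) - c)) y := by
  refine ⟨ultradiffAt_id.update (hq.mul ((ultradiffAt_const c).add (ultradiffAt_coord j))) j,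
    by simp [hc0], ?_, ?_⟩
  · have := hy.update j (hc.sub_const c)
    simpa using this
  · filter_upwards [h0] with m hm
    simp only [hqj, Function.update_self, Function.update_idem]
    rw [Function.update_eq_self_iff, add_sub_cancel]
    by_cases h : q (y m) = 0
    · rw [h, zero_mul, hm h]
    · rw [mul_div_cancel₀ _ h]

end Lift

section Ultrafilter

open Asymptotics

variable {κ : Type*} {U : Ultrafilter κ} {a b : κ → ℝ}

lemma isBigO_or_isLittleO (a b : κ → ℝ) :
    a =O[U] b ∨ b =o[U] a ∧ ∀ᶠ m in U, a m ≠ 0 := by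
  refine or_iff_not_imp_left.2 fun hO => ?_
  have hlt (C : ℝ) : ∀ᶠ m in U, C * ‖b m‖ < ‖a m‖ := by
    simp_rw [← not_le]
    exact Ultrafilter.eventually_not.2 fun hle => hO (IsBigO.of_bound C hle)
  refine ⟨isLittleO_iff.2 fun c hc => ?_, ?_⟩
  · filter_upwards [hlt c⁻¹] with m hm
    exact ((inv_mul_lt_iff₀ hc).1 hm).le
  · filter_upwards [hlt 0] with m hm
    rwa [zero_mul, norm_pos_iff] at hm

lemma exists_tendsto_div_of_isBigO (h : a =O[U] b) :
    ∃ c, Tendsto (fun m => a m / b m) U (𝓝 c) := by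
  obtain ⟨C, hC⟩ := div_isBoundedUnder_of_isBigO h
  obtain ⟨c, -, hc⟩ := (isCompact_closedBall (0 : ℝ) C).ultrafilter_le_nhds
    (U.map fun m => a m / b m) (le_principal_iff.2 <| by
      filter_upwards [eventually_map.1 hC] with m hm using mem_closedBall_zero_iff.2 hm)
  exact ⟨c, hc⟩

variable {M : ℕ → ℝ} [IsRegularWeight M] {ι : Type} [Fintype ι] {y : κ → ι → ℝ}

/-- Some lift of the family `y` turns all coordinates into normal crossings and makes the
monomial `β` a multiple of the coordinate `k` whose cofactor vanishes at the origin. -/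
def CoordDvdMonomialAlong (M : ℕ → ℝ) (l : Filter κ) (y : κ → ι → ℝ) (k : ι) (β : ι → ℕ) : Prop :=
  ∃ (p : (ι → ℝ) → ι → ℝ) (z : κ → ι → ℝ), IsLift M l p z y ∧
    (∀ i, IsNormalCrossing M fun x => p x i) ∧
    ∃ ρ, UltradiffAt M ρ 0 ∧ ρ 0 = 0 ∧ ∀ᶠ x in 𝓝 0, monomial β (p x) = p x k * ρ x

variable {j k : ι} {β : ι → ℕ}

lemma isNormalCrossing_update_coord [DecidableEq ι] {q : (ι → ℝ) → ℝ}
    (hq : IsNormalCrossing M q) (j i : ι) :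
    IsNormalCrossing M fun x : ι → ℝ => Function.update x j (q x) i := by
  obtain rfl | hi := eq_or_ne i j
  · simpa using hq
  · simpa [hi] using isNormalCrossing_coord i

lemma coordDvdMonomialAlong_of_isBigO [DecidableEq ι] (hjk : j ≠ k)
    (hy : Tendsto y U (𝓝 0)) (hyk : ∀ᶠ m in U, y m k ≠ 0)
    (hj : (fun m => y m j) =O[U] fun m => y m k)
    (hβ : (fun m => monomial (β + Pi.single j 1) (y m)) =o[U] fun m => y m k) :
    CoordDvdMonomialAlong M U y k (β + Pi.single j 1) := by
  obtain ⟨c, hc⟩ := exists_tendsto_div_of_isBigO hj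
  have hlift := isLift_update_mul (M := M) hy j (q := fun x => x k) (ultradiffAt_coord k)
    (fun x s => Function.update_of_ne hjk.symm _ _) (zero_mul c) hc
    (hyk.mono fun m hm h => absurd h hm)
  set p : (ι → ℝ) → ι → ℝ := fun x => Function.update x j (x k * (c + x j))
  set ρ : (ι → ℝ) → ℝ := fun x => monomial β (p x) * (c + x j)
  have hcj : UltradiffAt M (fun x : ι → ℝ => c + x j) 0 :=
    (ultradiffAt_const c).add (ultradiffAt_coord j)
  have hρ : UltradiffAt M ρ 0 := (hlift.comp_right (ultradiffAt_monomial β)).mul hcj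
  have hfactor (x : ι → ℝ) : monomial (β + Pi.single j 1) (p x) = p x k * ρ x := by
    have hpj : p x j = x k * (c + x j) := Function.update_self ..
    have hpk : p x k = x k := Function.update_of_ne hjk.symm ..
    rw [monomial_add_single, hpj, hpk]
    ring
  refine ⟨p, _, hlift, isNormalCrossing_update_coord (.mul (isNormalCrossing_coord k) ?_) j,
    ρ, hρ, ?_, .of_forall hfactor⟩
  · obtain rfl | hc0 := eq_or_ne c 0
    · simpa using isNormalCrossing_coord j
    · exact hcj.isNormalCrossing (by simpa using hc0)
  · refine tendsto_nhds_unique ((hρ.continuousAt.tendsto.comp hlift.tendsto).congr' ?_)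
      hβ.tendsto_div_nhds_zero
    filter_upwards [hlift.eventually_eq, hyk] with m hm hmk
    rw [eq_div_iff hmk, mul_comm, ← hm]
    exact (hfactor _).symm

lemma coordDvdMonomialAlong_of_isLittleO [DecidableEq ι] (hjk : j ≠ k) (hβk : β k = 0)
    (hy : Tendsto y U (𝓝 0)) (hyk : ∀ᶠ m in U, y m k ≠ 0) (hyj : ∀ᶠ m in U, y m j ≠ 0)
    (hkj : (fun m => y m k) =o[U] fun m => y m j)
    (hβ : (fun m => monomial (β + Pi.single j 1) (y m)) =o[U] fun m => y m k)
    (ih : ∀ z : κ → ι → ℝ, Tendsto z U (𝓝 0) → (∀ᶠ m in U, z m k ≠ 0) →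
      (fun m => monomial β (z m)) =o[U] (fun m => z m k) → CoordDvdMonomialAlong M U z k β) :
    CoordDvdMonomialAlong M U y k (β + Pi.single j 1) := by
  have hupd (x : ι → ℝ) (s : ℝ) : monomial β (Function.update x k s) = monomial β x := by
    rw [monomial_update, hβk, pow_zero, one_mul, Function.update_eq_self_iff.2 hβk.symm]
  have hlift := isLift_update_mul (M := M) hy k (q := fun x => x j) (ultradiffAt_coord j)
    (fun x s => Function.update_of_ne hjk _ _) (mul_zero _) hkj.tendsto_div_nhds_zero
    (hyj.mono fun m hm h => absurd h hm)
  simp only [zero_add, sub_zero] at hlift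
  obtain ⟨p, w, hp, hcoord, ρ, hρ, hρ0, hfactor⟩ := ih _ hlift.tendsto
    (by filter_upwards [hyk, hyj] with m hk hj using by simp [hk, hj])
    (by
      simp only [hupd, Function.update_self]
      refine (hβ.mul_isBigO (isBigO_refl (fun m => (y m j)⁻¹) U)).congr' ?_ ?_
      · filter_upwards [hyj] with m hm
        rw [monomial_add_single, mul_inv_cancel_right₀ hm]
      · exact .of_forall fun m => (div_eq_mul_inv _ _).symm)
  refine ⟨_, w, hlift.trans hp, fun i => ?_, ρ, hρ, hρ0, ?_⟩
  · obtain rfl | hi := eq_or_ne i k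
    · simpa using (hcoord j).mul (hcoord i)
    · simpa [hi] using hcoord i
  · filter_upwards [hfactor] with x hx
    rw [monomial_add_single, hupd, hx, Function.update_self, Function.update_of_ne hjk]
    ring

lemma coordDvdMonomialAlong (hβk : β k = 0) (hy : Tendsto y U (𝓝 0)) (hyk : ∀ᶠ m in U, y m k ≠ 0)
    (hβ : (fun m => monomial β (y m)) =o[U] fun m => y m k) :
    CoordDvdMonomialAlong M U y k β := by
  classical
  induction β using exponent_induction generalizing y with
  | zero =>
    have hlt : ∀ᶠ m in U, ‖y m k‖ < 1 := by
      have hk : Tendsto (fun m => ‖y m k‖) U (𝓝 0) := by simpa using (tendsto_pi_nhds.1 hy k).norm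
      exact hk.eventually_lt_const one_pos
    obtain ⟨m, hm, hle⟩ := (hlt.and (hβ.bound one_pos)).exists
    rw [monomial_zero, norm_one, one_mul] at hle
    exact absurd hm hle.not_gt
  | add_single β j ih =>
    have hjk : j ≠ k := by
      rintro rfl
      simp at hβk
    have hβk' : β k = 0 := by simpa [hjk.symm] using hβk
    obtain hO | ⟨ho, hyj⟩ := isBigO_or_isLittleO (fun m => y m j) (fun m => y m k)
    · exact coordDvdMonomialAlong_of_isBigO hjk hy hyk hO hβ
    · exact coordDvdMonomialAlong_of_isLittleO hjk hβk' hy hyk hyj ho hβ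
        fun z => ih hβk'

lemma exists_isLift_pow (hy : Tendsto y U (𝓝 0)) {e : ℕ} (he : e ≠ 0) :
    ∃ (ε : ι → ℝ) (z : κ → ι → ℝ), (∀ j, ε j ≠ 0) ∧ IsLift M U (fun x j => ε j * x j ^ e) z y := by
  have hsign (j : ι) : ∃ ε : ℝ, ε ≠ 0 ∧ ∀ᶠ m in U, ε * |y m j| = y m j := by
    obtain h | h := Ultrafilter.eventually_or.1
      (Eventually.of_forall (f := (U : Filter κ)) fun m => le_total 0 (y m j))
    · exact ⟨1, one_ne_zero, h.mono fun m hm => by rw [abs_of_nonneg hm, one_mul]⟩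
    · exact ⟨-1, by simp, h.mono fun m hm => by rw [abs_of_nonpos hm, neg_mul_neg, one_mul]⟩
  choose ε hε0 hε using hsign
  refine ⟨ε, fun m j => |y m j| ^ (e : ℝ)⁻¹, hε0,
    UltradiffAt.pi fun j => (ultradiffAt_const _).mul ((ultradiffAt_coord j).pow e), ?_, ?_, ?_⟩
  · funext j
    simp [he]
  · refine tendsto_pi_nhds.2 fun j => ?_
    have h := ((tendsto_pi_nhds.1 hy j).abs).rpow_const (p := (e : ℝ)⁻¹) (Or.inr (by positivity))
    simpa [he] using h
  · filter_upwards [eventually_all.2 hε] with m hm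
    funext j
    rw [Real.rpow_inv_natCast_pow (abs_nonneg _) he, hm]

end Ultrafilter

section SimultaneousMonomialization

variable {M : ℕ → ℝ} {κ : Type*} {ι : Type} [Fintype ι]

/-- Every germ of class `M` that does not vanish identically becomes a normal crossing along every
family converging to the origin along `l`. -/
def HasMonomialization (M : ℕ → ℝ) (l : Filter κ) (ι : Type) [Fintype ι] : Prop :=
  ∀ y : κ → ι → ℝ, Tendsto y l (𝓝 0) → ∀ f : (ι → ℝ) → ℝ, UltradiffAt M f 0 →
    ¬ f =ᶠ[𝓝 0] 0 → IsMonomializableAlong M l y f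

variable {l : Filter κ} {y : κ → ι → ℝ} {σ : Type*}

lemma UltradiffAt.exists_eventuallyEq_zero_of_prod [IsQuasianalyticWeight M] {E : Type*}
    [NormedAddCommGroup E] [NormedSpace ℝ E] {x : E} {F : σ → E → ℝ} {s : Finset σ}
    (hF : ∀ i ∈ s, UltradiffAt M (F i) x) (h : (fun y => ∏ i ∈ s, F i y) =ᶠ[𝓝 x] 0) :
    ∃ i ∈ s, F i =ᶠ[𝓝 x] 0 := by
  classical
  induction s using Finset.induction_on with
  | empty => simpa using h.self_of_nhds
  | insert i s hi ih =>
    simp only [Finset.prod_insert hi, Finset.forall_mem_insert] at h hF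
    obtain hi0 | hs0 := hF.1.eventuallyEq_zero_or_of_mul (UltradiffAt.prod s hF.2) h
    · exact ⟨i, Finset.mem_insert_self i s, hi0⟩
    · obtain ⟨j, hj, hj0⟩ := ih hF.2 hs0
      exact ⟨j, Finset.mem_insert_of_mem hj, hj0⟩

lemma HasMonomialization.exists_isLift [IsQuasianalyticWeight M] (hM : HasMonomialization M l ι)
    (hy : Tendsto y l (𝓝 0)) [Finite σ] {F : σ → (ι → ℝ) → ℝ} (hF : ∀ i, UltradiffAt M (F i) 0) :
    ∃ (p : (ι → ℝ) → ι → ℝ) (z : κ → ι → ℝ), IsLift M l p z y ∧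
      ∀ i, ¬ F i =ᶠ[𝓝 0] 0 → IsNormalCrossing M fun x => F i (p x) := by
  classical
  have := Fintype.ofFinite σ
  let s : Finset σ := {i | ¬ F i =ᶠ[𝓝 0] 0}
  obtain ⟨p, z, hp, hprod⟩ := hM y hy (fun x => ∏ i ∈ s, F i x)
    (UltradiffAt.prod s fun i _ => hF i) fun h0 => by
      obtain ⟨i, hi, hi0⟩ := UltradiffAt.exists_eventuallyEq_zero_of_prod (fun i _ => hF i) h0
      exact (Finset.mem_filter.1 hi).2 hi0
  exact ⟨p, z, hp, fun i hi => isNormalCrossing_of_prod (fun k _ => hp.comp_right (hF k)) hprod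
    (Finset.mem_filter.2 ⟨Finset.mem_univ i, hi⟩)⟩

end SimultaneousMonomialization

section Principalization

variable {M : ℕ → ℝ} {κ : Type*} {ι : Type} [Fintype ι]

lemma IsNormalCrossing.pos_or_neg {f : (ι → ℝ) → ℝ} (hf : IsNormalCrossing M f) :
    (∀ᶠ x in 𝓝 0, (∀ j, 0 < x j) → 0 < f x) ∨ ∀ᶠ x in 𝓝 0, (∀ j, 0 < x j) → f x < 0 := by
  obtain ⟨β, u, hu, hu0, hfu⟩ := hf
  obtain hneg | hpos := lt_or_gt_of_ne hu0
  · right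
    filter_upwards [hfu, hu.continuousAt.eventually_lt_const hneg] with x hx hux hxj
    exact hx ▸ mul_neg_of_pos_of_neg (monomial_pos β hxj) hux
  · left
    filter_upwards [hfu, hu.continuousAt.eventually_const_lt hpos] with x hx hux hxj
    exact hx ▸ mul_pos (monomial_pos β hxj) hux

lemma exponent_le_or_le_of_sub {α β : ι → ℕ} {u v : (ι → ℝ) → ℝ} (hu : ContinuousAt u 0)
    (hu0 : 0 < u 0) (hv : ContinuousAt v 0) (hv0 : 0 < v 0)
    (h : ¬ (fun x => monomial α x * u x - monomial β x * v x) =ᶠ[𝓝 0] 0 →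
      IsNormalCrossing M fun x => monomial α x * u x - monomial β x * v x) : α ≤ β ∨ β ≤ α := by
  have hle (hαβ : ∀ᶠ x in 𝓝 0, (∀ j, 0 < x j) → 0 ≤ monomial α x * u x - monomial β x * v x) :
      α ≤ β :=
    exponent_le_of_monomial_mul_le hu hv hv0
      (hαβ.mono fun x hx hpos => sub_nonneg.1 (hx hpos))
  by_cases h0 : (fun x => monomial α x * u x - monomial β x * v x) =ᶠ[𝓝 0] 0
  · exact .inl (hle (h0.mono fun x hx _ => hx.ge))
  obtain hpos | hneg := (h h0).pos_or_neg
  · exact .inl (hle (hpos.mono fun x hx hj => (hx hj).le))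
  · exact .inr (exponent_le_of_monomial_mul_le hv hu hu0
      (hneg.mono fun x hx hj => (sub_neg.1 (hx hj)).le))

variable [IsQuasianalyticWeight M] {U : Ultrafilter κ} {y : κ → ι → ℝ} {σ : Type*} [Finite σ]
  {h : (ι → ℝ) → ℝ} {a : σ → (ι → ℝ) → ℝ} {w : σ → ℕ}

lemma HasMonomialization.exists_isLift_of_sub {l : Filter κ} (hM : HasMonomialization M l ι)
    (hy : Tendsto y l (𝓝 0)) (hh : UltradiffAt M h 0) (hh0 : ¬ h =ᶠ[𝓝 0] 0)
    (ha : ∀ i, UltradiffAt M (a i) 0) (ha0 : ∀ i, ¬ a i =ᶠ[𝓝 0] 0) (m : σ → ℕ) :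
    ∃ (p : (ι → ℝ) → ι → ℝ) (z : κ → ι → ℝ), IsLift M l p z y ∧
      IsNormalCrossing M (fun x => h (p x)) ∧
      (∀ i, IsNormalCrossing M fun x => a i (p x)) ∧
      ∀ i j, ¬ (fun x => a i (p x) ^ m i - a j (p x) ^ m j) =ᶠ[𝓝 0] 0 →
        IsNormalCrossing M fun x => a i (p x) ^ m i - a j (p x) ^ m j := by
  obtain ⟨p, z, hp, hF⟩ := hM.exists_isLift hy
    (F := Sum.elim (fun _ : Unit => h) (Sum.elim a fun q : σ × σ => fun x =>
      a q.1 x ^ m q.1 - a q.2 x ^ m q.2)) (by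
    rintro (- | i | ⟨i, j⟩)
    · exact hh
    · exact ha i
    · exact ((ha i).pow (m i)).sub ((ha j).pow (m j)))
  exact ⟨p, z, hp, hF (.inl ()) hh0, fun i => hF (.inr (.inl i)) (ha0 i), fun i j hij =>
    hF (.inr (.inr (i, j))) fun h0 => hij (hp.tendsto_map.eventually h0)⟩

lemma HasMonomialization.exists_isLift_exponent_le {l : Filter κ}
    (hM : HasMonomialization M l ι) (hy : Tendsto y l (𝓝 0))
    (hh : UltradiffAt M h 0) (hh0 : ¬ h =ᶠ[𝓝 0] 0) [Nonempty σ]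
    (ha : ∀ i, UltradiffAt M (a i) 0) (ha0 : ∀ i, ¬ a i =ᶠ[𝓝 0] 0) (hw : ∀ i, w i ≠ 0) :
    ∃ (p : (ι → ℝ) → ι → ℝ) (z : κ → ι → ℝ), IsLift M l p z y ∧
      IsNormalCrossing M (fun x => h (p x)) ∧
      ∃ (γ : σ → ι → ℕ) (u : σ → (ι → ℝ) → ℝ),
        (∀ i, UltradiffAt M (u i) 0 ∧ u i 0 ≠ 0 ∧
          (fun x => a i (p x)) =ᶠ[𝓝 0] fun x => monomial (γ i) x * u i x) ∧
        ∃ i₀, ∀ i, w i • γ i₀ ≤ w i₀ • γ i := by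
  classical
  have := Fintype.ofFinite σ
  -- Raising `a i` to the power `m i` gives all weights the common value `2 * ∏ i, w i`; the
  -- factor `2` makes the units positive.
  let m : σ → ℕ := fun i => 2 * ∏ j ∈ Finset.univ.erase i, w j
  have hm (i : σ) : m i * w i = 2 * ∏ j, w j := by
    rw [mul_assoc, Finset.prod_erase_mul _ _ (Finset.mem_univ i)]
  obtain ⟨p, z, hp, hhp, hap, hsub⟩ := hM.exists_isLift_of_sub hy hh hh0 ha ha0 m
  choose γ u hu hu0 hau using hap
  refine ⟨p, z, hp, hhp, γ, u, fun i => ⟨hu i, hu0 i, hau i⟩, ?_⟩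
  have htotal (i j : σ) : m i • γ i ≤ m j • γ j ∨ m j • γ j ≤ m i • γ i := by
    refine exponent_le_or_le_of_sub (M := M) (u := fun x => u i x ^ m i)
      (v := fun x => u j x ^ m j) ((hu i).pow _).continuousAt ((even_two_mul _).pow_pos (hu0 i))
      ((hu j).pow _).continuousAt ((even_two_mul _).pow_pos (hu0 j)) ?_
    have heq : (fun x => monomial (m i • γ i) x * u i x ^ m i -
        monomial (m j • γ j) x * u j x ^ m j) =ᶠ[𝓝 0]
        fun x => a i (p x) ^ m i - a j (p x) ^ m j := by
      filter_upwards [hau i, hau j] with x hi hj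
      rw [hi, hj, mul_pow, mul_pow, monomial_smul, monomial_smul]
    exact fun h0 => (hsub i j fun h0' => h0 (heq.trans h0')).congr heq
  obtain ⟨i₀, -, hmin⟩ := Finset.exists_minimalFor (fun i => m i • γ i) Finset.univ
    Finset.univ_nonempty
  refine ⟨i₀, fun i j => ?_⟩
  have hle : m i₀ * γ i₀ j ≤ m i * γ i j :=
    (htotal i₀ i).elim (fun hle => hle j) (fun hle => hmin (Finset.mem_univ i) hle j)
  have hpos : 0 < 2 * ∏ j, w j :=
    Nat.mul_pos two_pos (Finset.prod_pos fun i _ => Nat.pos_of_ne_zero (hw i))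
  refine le_of_mul_le_mul_left (?_ : _ * (w i * γ i₀ j) ≤ _ * (w i₀ * γ i j)) hpos
  calc (2 * ∏ j, w j) * (w i * γ i₀ j) = m i₀ * γ i₀ j * (w i₀ * w i) := by rw [← hm i₀]; ring
    _ ≤ m i * γ i j * (w i₀ * w i) := Nat.mul_le_mul_right _ hle
    _ = (2 * ∏ j, w j) * (w i₀ * γ i j) := by rw [← hm i]; ring

lemma HasMonomialization.exists_principalization_of_ne_zero
    (hM : HasMonomialization M (U : Filter κ) ι) (hy : Tendsto y U (𝓝 0))
    (hh : UltradiffAt M h 0) (hh0 : ¬ h =ᶠ[𝓝 0] 0) [Nonempty σ]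
    (ha : ∀ i, UltradiffAt M (a i) 0) (ha0 : ∀ i, ¬ a i =ᶠ[𝓝 0] 0) (ha' : ∀ i, a i 0 = 0)
    (hw : ∀ i, w i ≠ 0) :
    ∃ (p : (ι → ℝ) → ι → ℝ) (z : κ → ι → ℝ), IsLift M U p z y ∧
      IsNormalCrossing M (fun x => h (p x)) ∧
      ∃ (β : ι → ℕ) (c : σ → (ι → ℝ) → ℝ), β ≠ 0 ∧ (∀ i, UltradiffAt M (c i) 0) ∧
        (∃ i, c i 0 ≠ 0) ∧ ∀ i, ∀ᶠ x in 𝓝 0, a i (p x) = monomial (w i • β) x * c i x := by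
  obtain ⟨p, z, hp, hhp, γ, u, hγ, i₀, hi₀⟩ := hM.exists_isLift_exponent_le hy hh hh0 ha ha0 hw
  obtain ⟨ε, z', hε, hp'⟩ := exists_isLift_pow (M := M) hp.tendsto (hw i₀)
  set r : (ι → ℝ) → ι → ℝ := fun x j => ε j * x j ^ w i₀
  have hhr : IsNormalCrossing M fun x => h (p (r x)) :=
    hhp.comp hp'.ultradiffAt hp'.map_zero fun j =>
      ((ultradiffAt_const (ε j)).isNormalCrossing (hε j)).mul ((isNormalCrossing_coord j).pow _)
  refine ⟨_, z', hp.trans hp', hhr, γ i₀, fun i x =>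
    monomial (γ i) ε * monomial (w i₀ • γ i - w i • γ i₀) x * u i (r x), ?_, fun i => ?_, ?_,
    fun i => ?_⟩
  · intro hzero
    have hval := (hγ i₀).2.2.self_of_nhds
    simp only [hzero, monomial_zero, hp.map_zero, ha' i₀, one_mul] at hval
    exact (hγ i₀).2.1 hval.symm
  · exact ((ultradiffAt_const _).mul (ultradiffAt_monomial _)).mul (hp'.comp_right (hγ i).1)
  · refine ⟨i₀, mul_ne_zero ?_ (by rw [hp'.map_zero]; exact (hγ i₀).2.1)⟩
    rw [tsub_self, monomial_zero, mul_one]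
    exact monomial_ne_zero _ hε
  · filter_upwards [hp'.tendsto_map.eventually (hγ i).2.2] with x hx
    rw [hx, monomial_mul_pow]
    conv_lhs => rw [← add_tsub_cancel_of_le (hi₀ i), monomial_add]
    ring

lemma HasMonomialization.exists_principalization (hM : HasMonomialization M (U : Filter κ) ι)
    (hy : Tendsto y U (𝓝 0)) (hh : UltradiffAt M h 0) (hh0 : ¬ h =ᶠ[𝓝 0] 0)
    (ha : ∀ i, UltradiffAt M (a i) 0) (ha0 : ∃ i, ¬ a i =ᶠ[𝓝 0] 0) (ha' : ∀ i, a i 0 = 0)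
    (hw : ∀ i, w i ≠ 0) :
    ∃ (p : (ι → ℝ) → ι → ℝ) (z : κ → ι → ℝ), IsLift M U p z y ∧
      IsNormalCrossing M (fun x => h (p x)) ∧
      ∃ (β : ι → ℕ) (c : σ → (ι → ℝ) → ℝ), β ≠ 0 ∧ (∀ i, UltradiffAt M (c i) 0) ∧
        (∃ i, c i 0 ≠ 0) ∧ ∀ i, ∀ᶠ x in 𝓝 0, a i (p x) = monomial (w i • β) x * c i x := by
  classical
  have : Nonempty {i // ¬ a i =ᶠ[𝓝 0] 0} := nonempty_subtype.2 ha0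
  obtain ⟨p, z, hp, hhp, β, c, hβ, hc, ⟨i₀, hi₀⟩, hac⟩ :=
    hM.exists_principalization_of_ne_zero (σ := {i // ¬ a i =ᶠ[𝓝 0] 0}) (a := fun i => a i)
      (w := fun i => w i) hy hh hh0 (fun i => ha i) (fun i => i.2) (fun i => ha' i) (fun i => hw i)
  refine ⟨p, z, hp, hhp, β, fun i => if hi : a i =ᶠ[𝓝 0] 0 then 0 else c ⟨i, hi⟩, hβ, fun i => ?_,
    ⟨i₀, by simpa [i₀.2] using hi₀⟩, fun i => ?_⟩
  · by_cases hi : a i =ᶠ[𝓝 0] 0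
    · simp only [hi, dite_true]
      exact ultradiffAt_const 0
    · simpa only [hi, dite_false] using hc ⟨i, hi⟩
  · by_cases hi : a i =ᶠ[𝓝 0] 0
    · simpa only [hi, dite_true, Pi.zero_apply, mul_zero] using hp.tendsto_map.eventually hi
    · simpa only [hi, dite_false] using hac ⟨i, hi⟩

end Principalization

section Polynomial

open Polynomial Asymptotics

lemma X_pow_dvd_of_isBigO {P : ℝ[X]} {d : ℕ}
    (h : (fun t => P.eval t) =O[𝓝[≠] 0] fun t : ℝ => t ^ d) : X ^ d ∣ P := by
  induction d generalizing P with
  | zero => simp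
  | succ d ih =>
    have hpow : Tendsto (fun t : ℝ => t ^ (d + 1)) (𝓝[≠] 0) (𝓝 0) :=
      (Continuous.tendsto' (by fun_prop) _ _ (by simp)).mono_left nhdsWithin_le_nhds
    have hP0 : P.eval 0 = 0 := tendsto_nhds_unique
      ((P.continuous.tendsto 0).mono_left nhdsWithin_le_nhds) (h.trans_tendsto hpow)
    obtain ⟨R, rfl⟩ := X_dvd_iff.2 ((coeff_zero_eq_eval_zero P).trans hP0)
    rw [pow_succ']
    refine mul_dvd_mul_left X (ih ?_)
    refine ((isBigO_refl (fun t : ℝ => t⁻¹) _).mul h).congr' ?_ ?_ <;>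
      filter_upwards [self_mem_nhdsWithin] with t ht
    · rw [eval_mul, eval_X, inv_mul_cancel_left₀ ht]
    · rw [pow_succ', inv_mul_cancel_left₀ ht]

lemma eq_C_mul_X_pow_of_X_pow_dvd_comp {K : Type*} [Field K] [CharZero K] {Q : K[X]} {d : ℕ}
    {c : K} (hdeg : Q.natDegree ≤ d + 1) (hd : Q.coeff d = 0)
    (h : X ^ (d + 1) ∣ Q.comp (X + C c)) : Q = C Q.leadingCoeff * X ^ (d + 1) := by
  have hmonic : ((X - C c) ^ (d + 1)).Monic := (monic_X_sub_C c).pow (d + 1)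
  have hQ := eq_leadingCoeff_mul_of_monic_of_dvd_of_natDegree_le hmonic
    (X_sub_C_pow_dvd_iff.2 h) (by simpa using hdeg)
  have hcoeff : Q.leadingCoeff * (-c * (d + 1)) = 0 := by
    rw [hQ, coeff_C_mul, sub_eq_add_neg, ← C_neg, coeff_X_add_C_pow] at hd
    simpa using hd
  obtain hlead | hc := mul_eq_zero.1 hcoeff
  · simp [leadingCoeff_eq_zero.1 hlead]
  · have hc0 : c = 0 := by simpa [Nat.cast_add_one_ne_zero] using hc
    simpa [hc0] using hQ

/-- The binary form in `s` and `t` of degree `d + 1` with leading coefficient `e` and no term of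
degree `d` in `t`. It homogenizes a polynomial to which a Tschirnhausen transformation has been
applied. -/
def depressedForm {d : ℕ} (a : Fin d → ℝ) (e s t : ℝ) : ℝ :=
  ∑ i, a i * s ^ (d + 1 - i) * t ^ (i : ℕ) + t ^ (d + 1) * e

lemma depressedForm_mul {d : ℕ} (a : Fin d → ℝ) (e r s t : ℝ) :
    depressedForm a e (r * s) (r * t) = r ^ (d + 1) * depressedForm a e s t := by
  rw [depressedForm, depressedForm, mul_add, Finset.mul_sum, mul_pow, mul_assoc]
  congr 1
  refine Finset.sum_congr rfl fun i _ => ?_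
  rw [mul_pow, mul_pow, ← pow_sub_mul_pow r (show (i : ℕ) ≤ d + 1 by lia)]
  ring

lemma UltradiffAt.depressedForm {M : ℕ → ℝ} [IsWeight M] {E : Type*} [NormedAddCommGroup E]
    [NormedSpace ℝ E] {x : E} {d : ℕ} {a : Fin d → E → ℝ} {e s t : E → ℝ}
    (ha : ∀ i, UltradiffAt M (a i) x) (he : UltradiffAt M e x) (hs : UltradiffAt M s x)
    (ht : UltradiffAt M t x) :
    UltradiffAt M (fun y => depressedForm (fun i => a i y) (e y) (s y) (t y)) x :=
  (UltradiffAt.sum Finset.univ fun i _ => ((ha i).mul (hs.pow _)).mul (ht.pow _)).add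
    ((ht.pow _).mul he)

lemma eq_zero_of_depressedForm_eventuallyEq {d : ℕ} {a : Fin d → ℝ} {c e : ℝ} {w : ℝ → ℝ}
    (hw : ContinuousAt w 0)
    (h : ∀ᶠ t in 𝓝 0, depressedForm a e 1 (c + t) = t ^ (d + 1) * w t) : a = 0 := by
  set Q : ℝ[X] := ∑ i, C (a i) * X ^ (i : ℕ) + C e * X ^ (d + 1) with hQ
  have hcoeff (j : ℕ) : Q.coeff j =
      (∑ i : Fin d, if j = i then a i else 0) + if j = d + 1 then e else 0 := by
    simp [hQ, finsetSum_coeff, coeff_X_pow]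
  have hlow (j : ℕ) (hj : d ≤ j) : (∑ i : Fin d, if j = i then a i else 0) = 0 :=
    Finset.sum_eq_zero fun i _ => if_neg (by lia)
  have hdeg : Q.natDegree ≤ d + 1 := natDegree_le_iff_coeff_eq_zero.2 fun j hj => by
    rw [hcoeff, hlow j (by lia), if_neg (by lia), add_zero]
  have hdvd : X ^ (d + 1) ∣ Q.comp (X + C c) := by
    refine X_pow_dvd_of_isBigO (IsBigO.mono ?_ nhdsWithin_le_nhds)
    have hO := (isBigO_refl (fun t : ℝ => t ^ (d + 1)) (𝓝 0)).mul (hw.isBigO_one ℝ)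
    refine hO.congr' ?_ (by simp)
    filter_upwards [h] with t ht
    rw [← ht]
    simp [hQ, depressedForm, eval_finsetSum, add_comm t c, mul_comm e]
  have hQX := eq_C_mul_X_pow_of_X_pow_dvd_comp hdeg
    (by rw [hcoeff, hlow d le_rfl, if_neg (by lia), add_zero]) hdvd
  funext i
  have hi := congrArg (fun P => P.coeff (i : ℕ)) hQX
  simpa [hcoeff, Fin.val_inj, i.isLt.ne, (i.isLt.trans d.lt_succ_self).ne, coeff_X_pow] using hi

end Polynomial

section FirstCoordinate

open Matrix (vecCons vecTail)

variable {M : ℕ → ℝ} {n : ℕ}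

lemma vecTail_add_smul_single (x : Fin (n + 1) → ℝ) (t : ℝ) :
    vecTail (x + t • Pi.single 0 1) = vecTail x := by
  funext i
  simp [vecTail]

lemma sub_smul_single_eq_vecCons (x : Fin (n + 1) → ℝ) :
    x - x 0 • Pi.single 0 1 = vecCons 0 (vecTail x) := by
  funext i
  cases i using Fin.cases <;> simp [vecTail]

lemma monomial_vecCons_zero (β : Fin n → ℕ) (x : Fin (n + 1) → ℝ) :
    monomial (vecCons 0 β) x = monomial β (vecTail x) := by
  simp [monomial, Fin.prod_univ_succ, vecTail]

lemma tendsto_vecTail : Tendsto (vecTail : (Fin (n + 1) → ℝ) → Fin n → ℝ) (𝓝 0) (𝓝 0) :=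
  Continuous.tendsto' (by unfold vecTail; fun_prop) _ _ rfl

/-- The embedding of the coordinate hyperplane on which the first coordinate vanishes. -/
noncomputable def consZeroL (n : ℕ) : (Fin n → ℝ) →L[ℝ] Fin (n + 1) → ℝ :=
  ContinuousLinearMap.pi (vecCons 0 fun i => ContinuousLinearMap.proj i)

lemma consZeroL_apply (v : Fin n → ℝ) : consZeroL n v = vecCons 0 v := by
  funext i
  cases i using Fin.cases <;> simp [consZeroL]

lemma ultradiffAt_vecTail [IsWeight M] {x : Fin (n + 1) → ℝ} :
    UltradiffAt M (vecTail : (Fin (n + 1) → ℝ) → Fin n → ℝ) x :=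
  UltradiffAt.pi fun i => ultradiffAt_coord i.succ

lemma UltradiffAt.comp_vecTail [IsRegularWeight M] {F : Type} [NormedAddCommGroup F]
    [NormedSpace ℝ F] {f : (Fin n → ℝ) → F} (hf : UltradiffAt M f 0) :
    UltradiffAt M (fun x : Fin (n + 1) → ℝ => f (vecTail x)) 0 :=
  UltradiffAt.comp (f := vecTail) hf ultradiffAt_vecTail

lemma UltradiffAt.comp_vecCons_zero [IsRegularWeight M] {F : Type} [NormedAddCommGroup F]
    [NormedSpace ℝ F] {f : (Fin (n + 1) → ℝ) → F} (hf : UltradiffAt M f 0) :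
    UltradiffAt M (fun v : Fin n → ℝ => f (vecCons 0 v)) 0 := by
  simp_rw [← consZeroL_apply]
  exact UltradiffAt.comp (f := consZeroL n) ((map_zero (consZeroL n)).symm ▸ hf)
    (ultradiffAt_clm _)

lemma IsNormalCrossing.comp_vecTail [IsRegularWeight M] {h : (Fin n → ℝ) → ℝ}
    (hh : IsNormalCrossing M h) :
    IsNormalCrossing M fun x : Fin (n + 1) → ℝ => h (vecTail x) :=
  hh.comp ultradiffAt_vecTail rfl fun i => isNormalCrossing_coord i.succ

lemma IsLift.vecCons [IsRegularWeight M] {κ : Type*} {l : Filter κ} {y : κ → Fin (n + 1) → ℝ}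
    (hy : Tendsto y l (𝓝 0)) {p : (Fin n → ℝ) → Fin n → ℝ} {z : κ → Fin n → ℝ}
    (h : IsLift M l p z fun m => vecTail (y m)) :
    IsLift M l (fun x => vecCons (x 0) (p (vecTail x))) (fun m => vecCons (y m 0) (z m)) y := by
  refine ⟨UltradiffAt.pi fun i => ?_, ?_, tendsto_pi_nhds.2 fun i => ?_, ?_⟩
  · cases i using Fin.cases with
    | zero => exact ultradiffAt_coord 0
    | succ i => exact h.ultradiffAt.comp_vecTail.apply i
  · funext i
    cases i using Fin.cases <;> simp [h.map_zero]
  · cases i using Fin.cases with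
    | zero => exact tendsto_pi_nhds.1 hy 0
    | succ i => exact tendsto_pi_nhds.1 h.tendsto i
  · filter_upwards [h.eventually_eq] with m hm
    rw [Matrix.tail_cons, hm]
    exact Matrix.cons_head_tail (y m)

end FirstCoordinate

section DepressedForm

open Asymptotics
open Matrix (vecCons vecTail)

lemma exists_iteratedLineDeriv_ne_zero_of_eq_depressedForm {M : ℕ → ℝ} [IsRegularWeight M]
    {E : Type} [NormedAddCommGroup E] [NormedSpace ℝ E] {l : E →L[ℝ] ℝ} {v : E} (hlv : l v = 1)
    {d : ℕ} {a : Fin d → ℝ} (ha : a ≠ 0) {c e : ℝ} {G : E → ℝ} (hG : UltradiffAt M G 0)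
    (hGa : ∀ᶠ t : ℝ in 𝓝 0, G (t • v) = depressedForm a e 1 (c + t)) :
    ∃ k < d + 1, iteratedLineDeriv k v G 0 ≠ 0 := by
  by_contra! hzero
  obtain ⟨w, hw, -, hGw⟩ := hG.exists_expansion hlv (d + 1)
  have hline : Continuous fun t : ℝ => t • v := by fun_prop
  have hline0 : Tendsto (fun t : ℝ => t • v) (𝓝 0) (𝓝 0) := hline.tendsto' _ _ (zero_smul ℝ v)
  refine ha (eq_zero_of_depressedForm_eventuallyEq (c := c) (e := e)
    (w := fun t => w (t • v)) ?_ ?_)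
  · exact ContinuousAt.comp (by simpa using hw.continuousAt) hline.continuousAt
  · filter_upwards [hGa, hline0.eventually hGw] with t ht hGt
    have hlt : l (t • v) = t := by simp [hlv]
    rw [← ht, hGt, hlt, sub_self, Finset.sum_eq_zero fun i hi => ?_, zero_add]
    rw [hzero i (Finset.mem_range.1 hi), zero_div, zero_mul]

variable {M : ℕ → ℝ} {κ : Type*} {n : ℕ}

/-- The statement proved by induction on `k`: monomialization along families that converge to the
origin along `l`, for germs with a nonvanishing `k`-th derivative in the direction of the first
coordinate. The factor `h` of the remaining coordinates collects the exceptional divisors of the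
preceding lifts. -/
def HasMonomializationOfOrder (M : ℕ → ℝ) (l : Filter κ) (n k : ℕ) : Prop :=
  ∀ y : κ → Fin (n + 1) → ℝ, Tendsto y l (𝓝 0) → ∀ F : (Fin (n + 1) → ℝ) → ℝ,
    UltradiffAt M F 0 → iteratedLineDeriv k (Pi.single 0 1) F 0 ≠ 0 → ∀ h : (Fin n → ℝ) → ℝ,
      UltradiffAt M h 0 → ¬ h =ᶠ[𝓝 0] 0 → IsMonomializableAlong M l y fun x => h (vecTail x) * F x

variable [IsRegularWeight M] {U : Ultrafilter κ} {z : κ → Fin (n + 1) → ℝ} {d : ℕ}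
  {H : (Fin n → ℝ) → ℝ} {β : Fin n → ℕ} {c : Fin d → (Fin n → ℝ) → ℝ} {u : (Fin (n + 1) → ℝ) → ℝ}

lemma isMonomializableAlong_depressedForm_of_isBigO
    (ih : ∀ k < d + 1, HasMonomializationOfOrder M (U : Filter κ) n k) (hz : Tendsto z U (𝓝 0))
    (hH : IsNormalCrossing M H) (hβ : β ≠ 0) (hc : ∀ i, UltradiffAt M (c i) 0)
    (hc0 : ∃ i, c i 0 ≠ 0) (hu : UltradiffAt M u 0)
    (hO : (fun m => z m 0) =O[U] fun m => monomial β (vecTail (z m))) :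
    IsMonomializableAlong M U z fun x => H (vecTail x) *
      depressedForm (fun i => c i (vecTail x)) (u x) (monomial β (vecTail x)) (x 0) := by
  have hβ0 : monomial β 0 = 0 := by
    obtain ⟨j, hj⟩ := Function.ne_iff.1 hβ
    exact Finset.prod_eq_zero (Finset.mem_univ j) (zero_pow hj)
  have htail (x : Fin (n + 1) → ℝ) (t : ℝ) : vecTail (Function.update x 0 t) = vecTail x := by
    funext i
    simp [vecTail]
  obtain ⟨s, hs⟩ := exists_tendsto_div_of_isBigO hO
  have hlift := isLift_update_mul (M := M) hz 0 (q := fun x => monomial β (vecTail x))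
    (ultradiffAt_monomial β).comp_vecTail (fun x t => by rw [htail]) (c := s)
    (by simp [Matrix.tail_zero, hβ0]) hs (hO.eq_zero_imp)
  set π : (Fin (n + 1) → ℝ) → Fin (n + 1) → ℝ :=
    fun x => Function.update x 0 (monomial β (vecTail x) * (s + x 0))
  set G : (Fin (n + 1) → ℝ) → ℝ := fun x =>
    depressedForm (fun i => c i (vecTail x)) (u (π x)) 1 (s + x 0)
  have hG : UltradiffAt M G 0 := UltradiffAt.depressedForm (fun i => (hc i).comp_vecTail)
    (hlift.comp_right hu) (ultradiffAt_const 1) ((ultradiffAt_const s).add (ultradiffAt_coord 0))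
  obtain ⟨k, hk, hGk⟩ :=
    exists_iteratedLineDeriv_ne_zero_of_eq_depressedForm (c := s) (e := u 0)
    (l := (ContinuousLinearMap.proj 0 : (Fin (n + 1) → ℝ) →L[ℝ] ℝ)) (v := Pi.single 0 1)
    (by simp) (Function.ne_iff.2 hc0) hG (Eventually.of_forall fun t => by
      have htl : vecTail (t • Pi.single 0 1 : Fin (n + 1) → ℝ) = 0 := by
        simpa using vecTail_add_smul_single (0 : Fin (n + 1) → ℝ) t
      have hπ : π (t • Pi.single 0 1) = 0 := by
        funext i
        cases i using Fin.cases <;> simp [π, htl, hβ0]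
      simp [G, htl, hπ])
  have hHβ := hH.mul (isNormalCrossing_monomial (M := M) ((d + 1) • β))
  refine hlift.isMonomializableAlong ((ih k hk _ hlift.tendsto G hG hGk _ hHβ.ultradiffAt
    hHβ.not_eventuallyEq_zero).congr (Eventually.of_forall fun x => ?_))
  have hscale := depressedForm_mul (fun i => c i (vecTail x)) (u (π x)) (monomial β (vecTail x)) 1
    (s + x 0)
  simp only [π, htail, Function.update_self, mul_one] at hscale ⊢
  rw [hscale, monomial_smul, mul_assoc]

lemma isMonomializableAlong_depressedForm_of_isLittleO (hz : Tendsto z U (𝓝 0))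
    (hH : IsNormalCrossing M H) (hc : ∀ i, UltradiffAt M (c i) 0) (hu : UltradiffAt M u 0)
    (hu0 : u 0 ≠ 0) (hz0 : ∀ᶠ m in U, z m 0 ≠ 0)
    (ho : (fun m => monomial β (vecTail (z m))) =o[U] fun m => z m 0) :
    IsMonomializableAlong M U z fun x => H (vecTail x) *
      depressedForm (fun i => c i (vecTail x)) (u x) (monomial β (vecTail x)) (x 0) := by
  obtain ⟨p, w, hp, hpi, ρ, hρ, hρ0, hβρ⟩ := coordDvdMonomialAlong (M := M) (k := 0)
    (β := vecCons 0 β) rfl hz hz0 (by simpa only [monomial_vecCons_zero] using ho)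
  have htail : UltradiffAt M (fun x => vecTail (p x)) 0 := hp.comp_right ultradiffAt_vecTail
  have htail0 : vecTail (p 0) = 0 := by rw [hp.map_zero, Matrix.tail_zero]
  set G : (Fin (n + 1) → ℝ) → ℝ := fun x =>
    depressedForm (fun i => c i (vecTail (p x))) (u (p x)) (ρ x) 1
  have hG : UltradiffAt M G 0 := UltradiffAt.depressedForm
    (fun i => hp.comp_right (hc i).comp_vecTail) (hp.comp_right hu) hρ (ultradiffAt_const 1)
  have hG0 : G 0 ≠ 0 := by
    have hpow (i : Fin d) : d + 1 - i ≠ 0 := by lia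
    simpa [G, depressedForm, hρ0, hpow, hp.map_zero] using hu0
  refine ⟨p, w, hp, ((hH.comp htail htail0 fun i => hpi i.succ).mul
    (((hpi 0).pow (d + 1)).mul (hG.isNormalCrossing hG0))).congr ?_⟩
  filter_upwards [hβρ] with x hx
  have hscale := depressedForm_mul (fun i => c i (vecTail (p x))) (u (p x)) (p x 0) (ρ x) 1
  rw [mul_one] at hscale
  rw [← monomial_vecCons_zero, hx, hscale]

end DepressedForm

section Monomialization

open Matrix (vecCons vecTail)

variable {M : ℕ → ℝ} {κ : Type*} {U : Ultrafilter κ} {n d : ℕ}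
  {y : κ → Fin (n + 1) → ℝ} {G : (Fin (n + 1) → ℝ) → ℝ}

lemma exists_eq_depressedForm [IsRegularWeight M] (hG : UltradiffAt M G 0)
    (hGd : ∀ᶠ v : Fin n → ℝ in 𝓝 0, iteratedLineDeriv d (Pi.single 0 1) G (vecCons 0 v) = 0) :
    ∃ (a : Fin d → (Fin n → ℝ) → ℝ) (u : (Fin (n + 1) → ℝ) → ℝ),
      (∀ i, UltradiffAt M (a i) 0) ∧
      (∀ i, a i 0 = iteratedLineDeriv i (Pi.single 0 1) G 0 / (i : ℕ)!) ∧ UltradiffAt M u 0 ∧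
      u 0 = iteratedLineDeriv (d + 1) (Pi.single 0 1) G 0 / (d + 1)! ∧
      ∀ᶠ x in 𝓝 0, G x = depressedForm (fun i => a i (vecTail x)) (u x) 1 (x 0) := by
  obtain ⟨u, hu, hu0, hGu⟩ := hG.exists_expansion
    (l := (ContinuousLinearMap.proj 0 : (Fin (n + 1) → ℝ) →L[ℝ] ℝ)) (e := Pi.single 0 1)
    (by simp) (d + 1)
  refine ⟨fun i v => iteratedLineDeriv i (Pi.single 0 1) G (vecCons 0 v) * ((i : ℕ)! : ℝ)⁻¹, u,
    fun i => ?_, fun i => ?_, hu, hu0, ?_⟩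
  · exact (ultradiffAt_iteratedLineDeriv hG i _).comp_vecCons_zero.mul (ultradiffAt_const _)
  · simp only [Matrix.cons_zero_zero, div_eq_mul_inv]
  · filter_upwards [hGu, tendsto_vecTail.eventually hGd] with x hx hxd
    simp only [ContinuousLinearMap.proj_apply, sub_smul_single_eq_vecCons] at hx
    rw [hx, Finset.sum_range_succ, hxd, zero_div, zero_mul, add_zero, Finset.sum_range]
    simp [depressedForm, div_eq_mul_inv]

lemma isMonomializableAlong_mul_coord_pow [IsRegularWeight M]
    (hM : HasMonomialization M (U : Filter κ) (Fin n)) (hy : Tendsto y U (𝓝 0))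
    {u : (Fin (n + 1) → ℝ) → ℝ} (hu : UltradiffAt M u 0) (hu0 : u 0 ≠ 0) {h : (Fin n → ℝ) → ℝ}
    (hh : UltradiffAt M h 0) (hh0 : ¬ h =ᶠ[𝓝 0] 0) (k : ℕ) :
    IsMonomializableAlong M U y fun x => h (vecTail x) * (x 0 ^ k * u x) := by
  obtain ⟨p, z, hp, hhp⟩ := hM _ (tendsto_vecTail.comp hy) h hh hh0
  have hlift := hp.vecCons hy
  exact ⟨_, _, hlift, hhp.comp_vecTail.mul (((isNormalCrossing_coord 0).pow k).mul
    ((hlift.comp_right hu).isNormalCrossing (by rwa [hlift.map_zero])))⟩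

lemma isMonomializableAlong_of_depressed [IsQuasianalyticWeight M]
    (hM : HasMonomialization M (U : Filter κ) (Fin n))
    (ih : ∀ k < d + 1, HasMonomializationOfOrder M (U : Filter κ) n k) (hy : Tendsto y U (𝓝 0))
    (hG : UltradiffAt M G 0) (hG0 : ∀ k < d + 1, iteratedLineDeriv k (Pi.single 0 1) G 0 = 0)
    (hG1 : iteratedLineDeriv (d + 1) (Pi.single 0 1) G 0 ≠ 0)
    (hGd : ∀ᶠ v : Fin n → ℝ in 𝓝 0, iteratedLineDeriv d (Pi.single 0 1) G (vecCons 0 v) = 0)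
    {h : (Fin n → ℝ) → ℝ} (hh : UltradiffAt M h 0) (hh0 : ¬ h =ᶠ[𝓝 0] 0) :
    IsMonomializableAlong M U y fun x => h (vecTail x) * G x := by
  obtain ⟨a, u, ha, ha0, hu, hu0, hGa⟩ := exists_eq_depressedForm hG hGd
  have hu0' : u 0 ≠ 0 := by
    rw [hu0]
    exact div_ne_zero hG1 (by positivity)
  have hy' : Tendsto (fun m => vecTail (y m)) U (𝓝 0) := tendsto_vecTail.comp hy
  by_cases hne : ∃ i, ¬ a i =ᶠ[𝓝 0] 0
  · obtain ⟨p, z, hp, hhp, β, c, hβ, hc, hc0, hac⟩ := hM.exists_principalization hy' hh hh0 ha hne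
      (fun i => by rw [ha0, hG0 i (by lia), zero_div]) (w := fun i : Fin d => d + 1 - i)
      (fun i => by lia)
    have hlift := hp.vecCons hy
    set P : (Fin (n + 1) → ℝ) → Fin (n + 1) → ℝ := fun x => vecCons (x 0) (p (vecTail x))
    have huP := hlift.comp_right hu
    have huP0 : u (P 0) ≠ 0 := by rwa [hlift.map_zero]
    suffices hmono : IsMonomializableAlong M U (fun m => vecCons (y m 0) (z m)) fun x =>
        h (p (vecTail x)) *
          depressedForm (fun i => c i (vecTail x)) (u (P x)) (monomial β (vecTail x)) (x 0) by
      refine hlift.isMonomializableAlong (hmono.congr ?_)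
      filter_upwards [hlift.tendsto_map.eventually hGa,
        tendsto_vecTail.eventually (eventually_all.2 hac)] with x hx hxa
      simp only [hx, P, Matrix.tail_cons, Matrix.cons_val_zero, depressedForm, hxa, monomial_smul,
        one_pow, mul_one, mul_comm (c _ _)]
    obtain hO | ⟨ho, hne0⟩ := isBigO_or_isLittleO (U := U) (fun m => y m 0)
      fun m => monomial β (z m)
    · exact isMonomializableAlong_depressedForm_of_isBigO ih hlift.tendsto hhp hβ hc hc0 huP hO
    · exact isMonomializableAlong_depressedForm_of_isLittleO hlift.tendsto hhp hc huP huP0 hne0 ho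
  · push Not at hne
    refine (isMonomializableAlong_mul_coord_pow hM hy hu hu0' hh hh0 (d + 1)).congr ?_
    filter_upwards [hGa, tendsto_vecTail.eventually (eventually_all.2 hne)] with x hx hxa
    have hsum : ∑ i, a i (vecTail x) * 1 ^ (d + 1 - i) * x 0 ^ (i : ℕ) = 0 :=
      Finset.sum_eq_zero fun i _ => by rw [hxa i, Pi.zero_apply, zero_mul, zero_mul]
    rw [hx, depressedForm, hsum, zero_add]

lemma isLift_shift [IsRegularWeight M] {l : Filter κ} (hy : Tendsto y l (𝓝 0))
    {q : (Fin n → ℝ) → ℝ} (hq : UltradiffAt M q 0) (hq0 : q 0 = 0) :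
    IsLift M l (fun x : Fin (n + 1) → ℝ => x + q (vecTail x) • Pi.single 0 1)
      (fun m => y m - q (vecTail (y m)) • Pi.single 0 1) y := by
  refine ⟨ultradiffAt_id.add (hq.comp_vecTail.clm_comp
    (ContinuousLinearMap.toSpanSingleton ℝ (Pi.single 0 1))), by simp [hq0], ?_, ?_⟩
  · have hqy : Tendsto (fun m => q (vecTail (y m))) l (𝓝 (q 0)) :=
      Tendsto.comp hq.continuousAt (tendsto_vecTail.comp hy)
    simpa [hq0] using hy.sub (hqy.smul_const (Pi.single 0 1 : Fin (n + 1) → ℝ))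
  · refine Eventually.of_forall fun m => ?_
    rw [sub_eq_add_neg, ← neg_smul, vecTail_add_smul_single, neg_smul, neg_add_cancel_right]

lemma HasMonomialization.hasMonomializationOfOrder [IsQuasianalyticWeight M]
    (hM : HasMonomialization M (U : Filter κ) (Fin n)) (k : ℕ) :
    HasMonomializationOfOrder M (U : Filter κ) n k := by
  induction k using Nat.strong_induction_on with
  | _ k ih =>
    intro y hy F hF hFk h hh hh0
    by_cases! hlow : ∃ j < k, iteratedLineDeriv j (Pi.single 0 1) F 0 ≠ 0
    · obtain ⟨j, hj, hFj⟩ := hlow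
      exact ih j hj y hy F hF hFj h hh hh0
    cases k with
    | zero =>
      rw [iteratedLineDeriv_zero] at hFk
      simpa only [pow_zero, one_mul] using
        isMonomializableAlong_mul_coord_pow hM hy hF hFk hh hh0 0
    | succ d =>
      have hFd : fderiv ℝ (iteratedLineDeriv d (Pi.single 0 1) F) 0 (Pi.single 0 1) ≠ 0 := fun h0 =>
        hFk ((iteratedLineDeriv_succ_eventuallyEq hF d (Pi.single 0 1)).self_of_nhds.trans h0)
      obtain ⟨q, hq, hq0, hqF⟩ := (ultradiffAt_iteratedLineDeriv hF d _).exists_implicit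
        (hlow d d.lt_succ_self) (consZeroL n) (Pi.single 0 1) hFd
      have hlift := isLift_shift hy hq hq0
      set T : (Fin (n + 1) → ℝ) → Fin (n + 1) → ℝ :=
        fun x => x + q (vecTail x) • Pi.single 0 1 with hT
      have hTtail (x) : vecTail (T x) = vecTail x := vecTail_add_smul_single _ _
      have hTline (x) (t : ℝ) : T (x + t • Pi.single 0 1) = T x + t • Pi.single 0 1 := by
        simp only [hT, vecTail_add_smul_single]
        abel
      have hderiv (j) := iteratedLineDeriv_comp hTline j F
      refine hlift.isMonomializableAlong ?_
      simp only [hTtail]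
      refine isMonomializableAlong_of_depressed hM ih hlift.tendsto (hlift.comp_right hF)
        (fun j hj => ?_) ?_ ?_ hh hh0
      · rw [hderiv, hlift.map_zero, hlow j hj]
      · rwa [hderiv, hlift.map_zero]
      · filter_upwards [hqF] with v hv
        rw [hderiv]
        simpa [hT, consZeroL_apply] using hv

lemma UltradiffAt.exists_iteratedLineDeriv_ne_zero [IsQuasianalyticWeight M] {E : Type*}
    [NormedAddCommGroup E] [NormedSpace ℝ E] {f : E → ℝ} {x : E} (hf : UltradiffAt M f x)
    (hf0 : f x = 0) (hne : ¬ f =ᶠ[𝓝 x] 0) : ∃ v ≠ 0, ∃ k, iteratedLineDeriv k v f x ≠ 0 := by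
  obtain ⟨s, hs, hxs, A, B, hb⟩ := hf
  obtain ⟨r, hr, hball⟩ := Metric.isOpen_iff.1 hs x hxs
  obtain ⟨p, hp, hfp⟩ : ∃ p ∈ Metric.ball x r, f p ≠ 0 := by
    by_contra! hzero
    exact hne (eventually_of_mem (Metric.ball_mem_nhds x hr) hzero)
  refine ⟨p - x, sub_ne_zero.2 fun h => hfp (h ▸ hf0), ?_⟩
  by_contra! hflat
  refine hfp ((hb.mono hball).eq_zero_of_flat Metric.isOpen_ball (convex_ball x r)
    (Metric.mem_ball_self hr) hp fun k => ?_)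
  rw [← iteratedLineDeriv_eq_iteratedFDeriv hs hb.contDiffOn k _ hxs, hflat k]

theorem hasMonomialization [IsQuasianalyticWeight M] (U : Ultrafilter κ) (n : ℕ) :
    HasMonomialization M (U : Filter κ) (Fin n) := by
  induction n with
  | zero =>
    intro y hy f hf hf0
    refine IsNormalCrossing.isMonomializableAlong (hf.isNormalCrossing fun h0 => hf0 ?_) hy
    exact Eventually.of_forall fun x => by rw [Subsingleton.elim x 0, h0, Pi.zero_apply]
  | succ n ih =>
    intro y hy f hf hf0
    by_cases hf00 : f 0 = 0
    swap
    · exact (hf.isNormalCrossing hf00).isMonomializableAlong hy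
    obtain ⟨v, hv, k, hk⟩ := hf.exists_iteratedLineDeriv_ne_zero hf00 hf0
    obtain ⟨L, hL⟩ := SeparatingDual.exists_continuousLinearEquiv_apply_eq (R := ℝ)
      (x := (Pi.single 0 1 : Fin (n + 1) → ℝ)) (by simp) hv
    have hlift : IsLift M U (fun x => L x) (fun m => L.symm (y m)) y := by
      refine ⟨ultradiffAt_clm (L : (Fin (n + 1) → ℝ) →L[ℝ] Fin (n + 1) → ℝ), map_zero L, ?_,
        Eventually.of_forall fun m => L.apply_symm_apply (y m)⟩
      exact (L.symm.continuous.tendsto' 0 0 (map_zero _)).comp hy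
    have hLline (x) (t : ℝ) : L (x + t • Pi.single 0 1) = L x + t • v := by
      rw [map_add, map_smul, hL]
    refine hlift.isMonomializableAlong ?_
    have hone : ¬ (fun _ : Fin n → ℝ => (1 : ℝ)) =ᶠ[𝓝 0] 0 := fun h =>
      one_ne_zero h.self_of_nhds
    simpa only [one_mul] using ih.hasMonomializationOfOrder k _ hlift.tendsto _
      (hlift.comp_right hf) (by rwa [iteratedLineDeriv_comp hLline, map_zero]) _
      (ultradiffAt_const 1) hone

end Monomialization

section PartialDerivatives

variable {ι : Type} [Fintype ι] [DecidableEq ι] {W : Type} [NormedAddCommGroup W] [NormedSpace ℝ W]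
  {f g : EuclideanSpace ℝ ι → W} {U : Set (EuclideanSpace ℝ ι)}

/-- The iterated partial derivative of `f` in the coordinate directions listed in `l`, the last
entry of `l` being applied first. -/
noncomputable def listDeriv (l : List ι) (f : EuclideanSpace ℝ ι → W) : EuclideanSpace ℝ ι → W :=
  l.foldr pd f

lemma eqOn_pd (hU : IsOpen U) (h : EqOn f g U) (i : ι) : EqOn (pd i f) (pd i g) U := by
  intro x hx
  rw [pd, pd, (h.eventuallyEq_of_mem (hU.mem_nhds hx)).fderiv_eq]

lemma contDiffOn_listDeriv (hU : IsOpen U) (hf : ContDiffOn ℝ ∞ f U) (l : List ι) :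
    ContDiffOn ℝ ∞ (listDeriv l f) U := by
  induction l with
  | nil => exact hf
  | cons i l ih => exact (ih.fderiv_of_isOpen hU (by simp)).clm_apply contDiffOn_const

lemma pd_comm (hU : IsOpen U) (hf : ContDiffOn ℝ ∞ f U) (i j : ι) :
    EqOn (pd i (pd j f)) (pd j (pd i f)) U := by
  intro x hx
  have hfx : ContDiffAt ℝ ∞ f x := hf.contDiffAt (hU.mem_nhds hx)
  have hd : DifferentiableAt ℝ (fderiv ℝ f) x :=
    (hfx.fderiv_right (m := 1) (by norm_cast)).differentiableAt one_ne_zero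
  have hpd (i j : ι) : pd i (pd j f) x =
      fderiv ℝ (fderiv ℝ f) x (EuclideanSpace.single i 1) (EuclideanSpace.single j 1) := by
    rw [pd, show pd j f = fun y => fderiv ℝ f y (EuclideanSpace.single j 1) from rfl,
      fderiv_clm_apply hd (differentiableAt_const _)]
    simp
  rw [hpd, hpd]
  refine hfx.isSymmSndFDerivAt ?_ _ _
  simp only [minSmoothness_of_isRCLikeNormedField]
  exact WithTop.coe_le_coe.2 le_top

lemma listDeriv_perm (hU : IsOpen U) (hf : ContDiffOn ℝ ∞ f U) {l l' : List ι} (h : l.Perm l') :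
    EqOn (listDeriv l f) (listDeriv l' f) U := by
  induction h with
  | nil => exact eqOn_refl _ _
  | cons i _ ih => exact eqOn_pd hU ih i
  | swap i j l => exact pd_comm hU (contDiffOn_listDeriv hU hf l) j i
  | trans _ _ ih ih' => exact ih.trans ih'

lemma iteratedFDeriv_apply_single (hU : IsOpen U) (hf : ContDiffOn ℝ ∞ f U) {n : ℕ}
    (s : Fin n → ι) {x : EuclideanSpace ℝ ι} (hx : x ∈ U) :
    iteratedFDeriv ℝ n f x (fun i => EuclideanSpace.single (s i) 1) =
      listDeriv (List.ofFn s) f x := by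
  induction n generalizing x with
  | zero => simp [listDeriv]
  | succ n ih =>
    have hd : DifferentiableAt ℝ (iteratedFDeriv ℝ n f) x :=
      (hf.contDiffAt (hU.mem_nhds hx)).differentiableAt_iteratedFDeriv
        (by exact_mod_cast ENat.natCast_lt_top n)
    have hih : (fun y => iteratedFDeriv ℝ n f y fun i => EuclideanSpace.single (s i.succ) 1) =ᶠ[𝓝 x]
        listDeriv (List.ofFn fun i => s i.succ) f :=
      eventually_of_mem (hU.mem_nhds hx) fun y hy => ih _ hy
    rw [iteratedFDeriv_succ_apply_left, List.ofFn_succ, listDeriv, List.foldr_cons, ← listDeriv, pd,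
      ← hih.fderiv_eq, fderiv_continuousMultilinear_apply_const_apply hd]
    rfl

lemma mderiv_eq_listDeriv (α : ι → ℕ) (f : EuclideanSpace ℝ ι → W) :
    mderiv α f = listDeriv (Finset.univ.toList.flatMap fun i => List.replicate (α i) i) f := by
  have hrep (i : ι) (k : ℕ) (g : EuclideanSpace ℝ ι → W) :
      (pd i)^[k] g = (List.replicate k i).foldr pd g := by
    induction k with
    | zero => rfl
    | succ k ih => rw [Function.iterate_succ_apply', ih, List.replicate_succ, List.foldr_cons]
  rw [mderiv, listDeriv]
  induction (Finset.univ : Finset ι).toList with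
  | nil => rfl
  | cons i l ih => rw [List.foldr_cons, ih, List.flatMap_cons, List.foldr_append, hrep]

lemma perm_flatMap_replicate_count (l : List ι) :
    l.Perm (Finset.univ.toList.flatMap fun i => List.replicate (l.count i) i) := by
  rw [List.perm_iff_count]
  intro a
  rw [List.count_flatMap]
  simp [Function.comp_def, List.count_replicate, Finset.sum_map_toList]

lemma sum_count_ofFn {n : ℕ} (s : Fin n → ι) : ∑ i, (List.ofFn s).count i = n := by
  have hsum := Multiset.sum_count_eq_card (s := Finset.univ) (m := (List.ofFn s : Multiset ι))
    fun i _ => Finset.mem_univ i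
  simpa using hsum

lemma norm_le_of_forall_apply_single {n : ℕ} {C : ℝ}
    (T : ContinuousMultilinearMap ℝ (fun _ : Fin n => EuclideanSpace ℝ ι) W)
    (h : ∀ s : Fin n → ι, ‖T fun i => EuclideanSpace.single (s i) 1‖ ≤ C) (hC : 0 ≤ C) :
    ‖T‖ ≤ Fintype.card ι ^ n * C := by
  refine T.opNorm_le_bound (by positivity) fun v => ?_
  have hv : v = fun i => ∑ j, v i j • EuclideanSpace.single j (1 : ℝ) := by
    ext i k
    simp [Pi.single_apply]
  have hterm (s : Fin n → ι) :
      ‖T fun i => v i (s i) • EuclideanSpace.single (s i) (1 : ℝ)‖ ≤ C * ∏ i, ‖v i‖ := by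
    rw [T.map_smul_univ, norm_smul, norm_prod, mul_comm C]
    gcongr with i
    · exact PiLp.norm_apply_le (v i) (s i)
    · exact h s
  calc ‖T v‖ = ‖∑ s : Fin n → ι, T fun i => v i (s i) • EuclideanSpace.single (s i) (1 : ℝ)‖ := by
        conv_lhs => rw [hv]
        rw [T.map_sum]
    _ ≤ ∑ _s : Fin n → ι, C * ∏ i, ‖v i‖ := norm_sum_le_of_le _ fun s _ => hterm s
    _ = Fintype.card ι ^ n * C * ∏ i, ‖v i‖ := by simp [mul_assoc]

variable {M : ℕ → ℝ} {f : EuclideanSpace ℝ ι → ℝ} {A B : ℝ} {x : EuclideanSpace ℝ ι}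

lemma abs_iteratedFDeriv_apply_single_le [IsWeight M] (hU : IsOpen U) (hf : ContDiffOn ℝ ∞ f U)
    (hx : x ∈ U) (hA : 0 ≤ A) (hB : 0 ≤ B)
    (hbound : ∀ α : ι → ℕ, (1 / ∏ i, ((α i) ! : ℝ)) * |mderiv α f x| ≤
      A * B ^ (∑ i, α i) * M (∑ i, α i)) {n : ℕ} (s : Fin n → ι) :
    |iteratedFDeriv ℝ n f x fun i => EuclideanSpace.single (s i) 1| ≤ A * B ^ n * (n ! * M n) := by
  have hM := weight_pos M n
  have hfact : ∏ i, (((List.ofFn s).count i) ! : ℝ) ≤ n ! := by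
    have hdvd := Nat.prod_factorial_dvd_factorial_sum Finset.univ fun i => (List.ofFn s).count i
    rw [sum_count_ofFn] at hdvd
    exact_mod_cast Nat.le_of_dvd n.factorial_pos hdvd
  have hcount := hbound fun i => (List.ofFn s).count i
  rw [sum_count_ofFn, mderiv_eq_listDeriv, one_div,
    inv_mul_le_iff₀ (Finset.prod_pos fun i _ => by positivity)] at hcount
  rw [iteratedFDeriv_apply_single hU hf s hx,
    listDeriv_perm hU hf (perm_flatMap_replicate_count (List.ofFn s)) hx]
  calc _ ≤ _ := hcount
    _ ≤ n ! * (A * B ^ n * M n) := by gcongr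
    _ = A * B ^ n * (n ! * M n) := by ring

theorem ultradiffAt_of_crm [IsWeight M] (hU : IsOpen U) (hf : CRM M U f) (hx : x ∈ U) :
    UltradiffAt M f x := by
  obtain ⟨r, hr, hrU⟩ := Metric.nhds_basis_closedBall.mem_iff.1 (hU.mem_nhds hx)
  obtain ⟨A, B, hA, hB, hAB⟩ := hf.2 _ hrU (isCompact_closedBall x r)
  have hball : Metric.ball x r ⊆ U := Metric.ball_subset_closedBall.trans hrU
  refine ⟨Metric.ball x r, Metric.isOpen_ball, Metric.mem_ball_self hr, A,
    max 1 (Fintype.card ι * B), hf.1.mono hball, hA.le, le_max_left _ _, fun n y hy => ?_⟩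
  have hM := weight_pos M n
  have hsingle (s : Fin n → ι) := abs_iteratedFDeriv_apply_single_le hU hf.1 (hball hy) hA.le hB.le
    (hAB y (Metric.ball_subset_closedBall hy)) s
  calc ‖iteratedFDeriv ℝ n f y‖ ≤ Fintype.card ι ^ n * (A * B ^ n * (n ! * M n)) :=
        norm_le_of_forall_apply_single _ hsingle (by positivity)
    _ = A * (Fintype.card ι * B) ^ n * (n ! * M n) := by ring
    _ ≤ A * max 1 (Fintype.card ι * B) ^ n * (n ! * M n) := by
        gcongr; exact le_max_right _ _

end PartialDerivatives

section Lojasiewicz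

open Asymptotics

variable {M : ℕ → ℝ}

lemma exponent_ne_zero_of_monomial_eq_zero_imp {ι : Type*} [Fintype ι] {β γ : ι → ℕ}
    {u : (ι → ℝ) → ℝ} (hu : ContinuousAt u 0) (hu0 : u 0 ≠ 0)
    (h : ∀ᶠ x in 𝓝 0, monomial γ x = 0 → monomial β x * u x = 0) {j : ι} (hj : γ j ≠ 0) :
    β j ≠ 0 := by
  classical
  intro hβ
  let q : ℝ → ι → ℝ := fun t => Function.update (fun _ => t) j 0
  have hq0 : q 0 = 0 := Function.update_eq_self j (0 : ι → ℝ)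
  have hq : Tendsto q (𝓝[>] 0) (𝓝 0) :=
    (Continuous.tendsto' (by fun_prop) 0 0 hq0).mono_left nhdsWithin_le_nhds
  obtain ⟨t, ⟨ht, htu⟩, htpos⟩ := ((hq.eventually (h.and (hu.eventually_ne hu0))).and
    self_mem_nhdsWithin).exists
  have hγt : monomial γ (q t) = 0 := by simp [q, monomial_update, hj]
  have hβt : monomial β (q t) ≠ 0 := by
    simpa [q, monomial_update, hβ] using monomial_ne_zero _ fun _ => (mem_Ioi.1 htpos).ne'
  exact mul_ne_zero hβt htu (ht hγt)

lemma exists_le_smul_of_forall_ne_zero {ι : Type*} [Finite ι] {β γ : ι → ℕ}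
    (h : ∀ j, γ j ≠ 0 → β j ≠ 0) : ∃ k : ℕ, γ ≤ k • β := by
  have := Fintype.ofFinite ι
  refine ⟨∑ i, γ i, fun j => ?_⟩
  obtain hj | hj := eq_or_ne (γ j) 0
  · simp [hj]
  · exact (Finset.single_le_sum_of_canonicallyOrdered (Finset.mem_univ j)).trans
      (Nat.le_mul_of_pos_right _ (Nat.pos_of_ne_zero (h j hj)))

lemma IsNormalCrossing.exists_pow_isBigO [IsWeight M] {ι : Type*} [Fintype ι]
    {f g : (ι → ℝ) → ℝ} (hf : IsNormalCrossing M f) (hg : IsNormalCrossing M g)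
    (h : ∀ᶠ x in 𝓝 0, g x = 0 → f x = 0) : ∃ k : ℕ, (fun x => f x ^ k) =O[𝓝 0] g := by
  obtain ⟨β, u, hu, hu0, hfu⟩ := hf
  obtain ⟨γ, v, hv, hv0, hgv⟩ := hg
  have hzero : ∀ᶠ x in 𝓝 0, monomial γ x = 0 → monomial β x * u x = 0 := by
    filter_upwards [h, hfu, hgv] with x hx hfx hgx hγ
    rw [← hfx, hx (by rw [hgx, hγ, zero_mul])]
  obtain ⟨k, hk⟩ := exists_le_smul_of_forall_ne_zero (β := β) (γ := γ) fun _ =>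
    exponent_ne_zero_of_monomial_eq_zero_imp hu.continuousAt hu0 hzero
  let w : (ι → ℝ) → ℝ := fun x => monomial (k • β - γ) x * u x ^ k / v x
  have hw : ContinuousAt w 0 :=
    ((ultradiffAt_monomial (M := M) _).continuousAt.mul (hu.continuousAt.pow k)).div
      hv.continuousAt hv0
  have hfg : (fun x => f x ^ k) =ᶠ[𝓝 0] fun x => w x * g x := by
    filter_upwards [hfu, hgv, hv.continuousAt.eventually_ne hv0] with x hfx hgx hvx
    calc f x ^ k = monomial ((k • β - γ) + γ) x * u x ^ k := by
          rw [hfx, mul_pow, tsub_add_cancel_of_le hk, monomial_smul]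
      _ = w x * g x := by rw [hgx, monomial_add]; simp only [w]; field_simp
  refine ⟨k, hfg.trans_isBigO ?_⟩
  simpa only [one_mul] using (hw.tendsto.isBigO_one ℝ).mul (isBigO_refl g (𝓝 0))

lemma exists_pow_isBigO_along [IsQuasianalyticWeight M] {κ : Type*} (U : Ultrafilter κ) {n : ℕ}
    {y : κ → Fin n → ℝ} (hy : Tendsto y U (𝓝 0)) {f g : (Fin n → ℝ) → ℝ}
    (hf : UltradiffAt M f 0) (hg : UltradiffAt M g 0) (h : ∀ᶠ x in 𝓝 0, g x = 0 → f x = 0) :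
    ∃ k : ℕ, (fun m => f (y m) ^ k) =O[U] fun m => g (y m) := by
  by_cases hf0 : f =ᶠ[𝓝 0] 0
  · refine ⟨1, EventuallyEq.trans_isBigO ?_ (isBigO_zero _ _)⟩
    filter_upwards [hy.eventually hf0] with m hm
    rw [pow_one, hm, Pi.zero_apply]
  have hg0 : ¬ g =ᶠ[𝓝 0] 0 := fun hg0 => hf0 <| by
    filter_upwards [hg0, h] with x hgx hx using hx hgx
  obtain ⟨p, z, hp, hmon⟩ := (hasMonomialization (M := M) U n).exists_isLift hy (F := ![f, g])
    (by simp [Fin.forall_fin_two, hf, hg])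
  obtain ⟨k, hk⟩ := (hmon 0 hf0).exists_pow_isBigO (hmon 1 hg0) (hp.tendsto_map.eventually h)
  refine ⟨k, (hk.comp_tendsto hp.tendsto).congr' ?_ ?_⟩ <;>
    filter_upwards [hp.eventually_eq] with m hm <;> simp [hm]

theorem exists_pow_isBigO_of_ultrafilter_le_nhds [IsQuasianalyticWeight M] {E : Type}
    [NormedAddCommGroup E] [NormedSpace ℝ E] [FiniteDimensional ℝ E] {a : E} {U : Ultrafilter E}
    (hU : (U : Filter E) ≤ 𝓝 a) {f g : E → ℝ} (hf : UltradiffAt M f a) (hg : UltradiffAt M g a)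
    (h : ∀ᶠ x in 𝓝 a, g x = 0 → f x = 0) : ∃ k : ℕ, (fun x => f x ^ k) =O[U] g := by
  let L : (Fin (Module.finrank ℝ E) → ℝ) ≃L[ℝ] E := .ofFinrankEq (Module.finrank_fin_fun ℝ)
  let T : (Fin (Module.finrank ℝ E) → ℝ) → E := fun v => a + L v
  have hT0 : T 0 = a := by simp [T]
  have hT : UltradiffAt M T 0 :=
    (ultradiffAt_const a).add (ultradiffAt_clm (L : (Fin (Module.finrank ℝ E) → ℝ) →L[ℝ] E))
  have hy : Tendsto (fun x => L.symm (x - a)) U (𝓝 0) :=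
    (Continuous.tendsto' (by fun_prop) a 0 (by simp)).mono_left hU
  have hTy (x : E) : T (L.symm (x - a)) = x := by simp [T]
  obtain ⟨k, hk⟩ := exists_pow_isBigO_along U hy (UltradiffAt.comp (hT0.symm ▸ hf) hT)
    (UltradiffAt.comp (hT0.symm ▸ hg) hT) (hT.continuousAt.eventually (hT0.symm ▸ h))
  exact ⟨k, by simpa only [Function.comp_apply, hTy] using hk⟩

lemma exists_mem_of_forall_ultrafilter {α ι : Type*} [Nonempty ι] {l : Filter α} {T : ι → Set α}
    (hT : Directed (· ⊆ ·) T) (h : ∀ U : Ultrafilter α, ↑U ≤ l → ∃ i, T i ∈ U) : ∃ i, T i ∈ l := by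
  by_contra! hTl
  have hneBot (i : ι) : (l ⊓ 𝓟 (T i)ᶜ).NeBot :=
    ⟨fun hbot => hTl i (mem_iff_inf_principal_compl.2 hbot)⟩
  have : (⨅ i, l ⊓ 𝓟 (T i)ᶜ).NeBot := iInf_neBot_of_directed' (fun i j => by
    obtain ⟨k, hik, hjk⟩ := hT i j
    exact ⟨k, by gcongr, by gcongr⟩) hneBot
  let U := Ultrafilter.of (⨅ i, l ⊓ 𝓟 (T i)ᶜ)
  have hU (i : ι) : ↑U ≤ l ⊓ 𝓟 (T i)ᶜ := (Ultrafilter.of_le _).trans (iInf_le _ i)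
  obtain ⟨i, hi⟩ := h U ((hU (Classical.arbitrary ι)).trans inf_le_left)
  exact Ultrafilter.compl_mem_iff_notMem.1 (le_principal_iff.1 ((hU i).trans inf_le_right)) hi

lemma exists_pow_isBigO_of_forall_ultrafilter {α 𝕜 F : Type*} [NormedField 𝕜]
    [SeminormedAddCommGroup F] {l : Filter α} {f : α → 𝕜} {g : α → F}
    (hf : f =O[l] fun _ => (1 : ℝ))
    (h : ∀ U : Ultrafilter α, ↑U ≤ l → ∃ k : ℕ, (fun x => f x ^ k) =O[U] g) :
    ∃ k : ℕ, 0 < k ∧ (fun x => f x ^ k) =O[l] g := by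
  obtain ⟨B, hB, hfB⟩ := hf.exists_pos
  have hfB : ∀ᶠ x in l, ‖f x‖ ≤ B := by simpa using hfB.bound
  -- Dividing `f` by its bound makes `T` monotone.
  let T : ℕ → Set α := fun k => {x | ‖f x‖ ≤ B ∧ (‖f x‖ / B) ^ k ≤ k * ‖g x‖}
  have hpow {x : α} (hx : ‖f x‖ ≤ B) {k m : ℕ} (hkm : k ≤ m) :
      (‖f x‖ / B) ^ m ≤ (‖f x‖ / B) ^ k :=
    pow_le_pow_of_le_one (by positivity) ((div_le_one hB).2 hx) hkm
  have hT : Monotone T := fun k m hkm x ⟨hxB, hx⟩ =>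
    ⟨hxB, (hpow hxB hkm).trans (hx.trans (by gcongr))⟩
  obtain ⟨k, hk⟩ : ∃ k, T k ∈ l := by
    refine exists_mem_of_forall_ultrafilter hT.directed_le fun U hU => ?_
    obtain ⟨k, hk⟩ := h U hU
    obtain ⟨c, hc⟩ := hk.bound
    refine ⟨max k ⌈c / B ^ k⌉₊, ?_⟩
    filter_upwards [hU hfB, hc] with x hxB hx
    refine ⟨hxB, ?_⟩
    calc (‖f x‖ / B) ^ max k ⌈c / B ^ k⌉₊ ≤ (‖f x‖ / B) ^ k := hpow hxB (le_max_left _ _)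
      _ ≤ c / B ^ k * ‖g x‖ := by
          rw [div_pow, div_mul_eq_mul_div, ← norm_pow]
          gcongr
      _ ≤ (max k ⌈c / B ^ k⌉₊ : ℕ) * ‖g x‖ := by
          gcongr
          exact (Nat.le_ceil _).trans (by exact_mod_cast le_max_right _ _)
  refine ⟨k + 1, k.succ_pos, .of_bound ((k + 1 : ℕ) * B ^ (k + 1)) ?_⟩
  filter_upwards [mem_of_superset hk (hT k.le_succ)] with x ⟨_, hx⟩
  rwa [div_pow, div_le_iff₀ (by positivity), mul_right_comm, ← norm_pow] at hx

theorem exists_pow_isBigO_nhdsSet [IsQuasianalyticWeight M] {E : Type} [NormedAddCommGroup E]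
    [NormedSpace ℝ E] [FiniteDimensional ℝ E] {K : Set E} (hK : IsCompact K) {f g : E → ℝ}
    (hf : ∀ a ∈ K, UltradiffAt M f a) (hg : ∀ a ∈ K, UltradiffAt M g a)
    (h : ∀ᶠ x in 𝓝ˢ K, g x = 0 → f x = 0) :
    ∃ k : ℕ, 0 < k ∧ (fun x => f x ^ k) =O[𝓝ˢ K] g := by
  have hbdd : f =O[𝓝ˢ K] fun _ => (1 : ℝ) := by
    obtain ⟨B, hB⟩ := hK.exists_bound_of_continuousOn fun a ha =>
      (hf a ha).continuousAt.continuousWithinAt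
    refine .of_bound (B + 1) (eventually_nhdsSet_iff_forall.2 fun a ha => ?_)
    filter_upwards [(hf a ha).continuousAt.norm.eventually_lt_const
      ((hB a ha).trans_lt (lt_add_one B))] with x hx
    simpa using hx.le
  refine exists_pow_isBigO_of_forall_ultrafilter hbdd fun U hU => ?_
  obtain ⟨a, ha, hUa⟩ : ∃ a ∈ K, ↑U ≤ 𝓝 a := by
    by_contra! hdisj
    exact U.neBot.ne (disjoint_self.1 ((hK.disjoint_nhdsSet_left.2 fun a ha =>
      (Ultrafilter.disjoint_iff_not_le.2 (hdisj a ha)).symm).mono_left hU))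
  exact exists_pow_isBigO_of_ultrafilter_le_nhds hUa (hf a ha) (hg a ha)
    (h.filter_mono (nhds_le_nhdsSet ha))

end Lojasiewicz

end DenjoyCarleman

open Filter Topology DenjoyCarleman in
theorem stmt11_general {ι : Type} [Fintype ι] [DecidableEq ι] {M : ℕ → ℝ}
    [IsQuasianalyticWeight M] {U : Set (EuclideanSpace ℝ ι)} (hU : IsOpen U)
    {f g : EuclideanSpace ℝ ι → ℝ} (hf : CRM M U f) (hg : CRM M U g)
    {K : Set (EuclideanSpace ℝ ι)} (hK : IsCompact K) (hKU : K ⊆ U)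
    (hfg : ∀ᶠ x in 𝓝ˢ K, g x = 0 → f x = 0) :
    ∃ C : ℝ, 0 < C ∧ ∃ α : ℚ, 0 < α ∧ ∃ W, IsOpen W ∧ K ⊆ W ∧ W ⊆ U ∧
      ∀ x ∈ W, C * |f x| ^ (α : ℝ) ≤ |g x| := by
  obtain ⟨k, hk, hfgk⟩ := exists_pow_isBigO_nhdsSet hK
    (fun _ ha => ultradiffAt_of_crm hU hf (hKU ha)) (fun _ ha => ultradiffAt_of_crm hU hg (hKU ha))
    hfg
  obtain ⟨c, hc, hbound⟩ := hfgk.exists_pos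
  obtain ⟨V, hV, hKV, hVc⟩ := eventually_nhdsSet_iff_exists.1 hbound.bound
  refine ⟨c⁻¹, inv_pos.2 hc, k, by exact_mod_cast hk, V ∩ U, hV.inter hU,
    Set.subset_inter hKV hKU, Set.inter_subset_right, fun x hx => ?_⟩
  rw [Rat.cast_natCast, Real.rpow_natCast, inv_mul_le_iff₀ hc]
  simpa using hVc x hx.1

/-- Łojasiewicz inequality I in the class `C^ℝ_M`. -/
theorem stmt11 {N : ℕ} (M : ℕ → ℝ)
    (hpos : ∀ j, 0 < M j) (hmono : Monotone M) (hM0 : M 0 = 1)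
    (hlog : ∀ j : ℕ, M (j+1) / M j ≤ M (j+2) / M (j+1))
    (hqa : ∑' k : ℕ, ENNReal.ofReal (M k / (((k : ℝ) + 1) * M (k+1))) = ⊤)
    (hder : ∃ C : ℝ, ∀ j : ℕ, 1 ≤ j → (M (j+1) / M j) ^ ((1 : ℝ) / j) ≤ C)
    (U : Set (EuclideanSpace ℝ (Fin N))) (hUopen : IsOpen U) (hUconn : IsConnected U)
    (f g : EuclideanSpace ℝ (Fin N) → ℝ) (hf : CRM M U f) (hg : CRM M U g)
    (K : Set (EuclideanSpace ℝ (Fin N))) (hKcpt : IsCompact K) (hKU : K ⊆ U)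
    (hincl : ∃ W₀ : Set (EuclideanSpace ℝ (Fin N)), IsOpen W₀ ∧ K ⊆ W₀ ∧ W₀ ⊆ U ∧
      ∀ x ∈ W₀, g x = 0 → f x = 0) :
    ∃ C : ℝ, 0 < C ∧ ∃ α : ℚ, 0 < α ∧
      ∃ W : Set (EuclideanSpace ℝ (Fin N)), IsOpen W ∧ K ⊆ W ∧ W ⊆ U ∧
        ∀ x ∈ W, C * |f x| ^ (α : ℝ) ≤ |g x| := by
  have : DenjoyCarleman.IsQuasianalyticWeight M :=
    { pos := hpos, monotone := hmono, zero := hM0, ratio_le_ratio_succ := hlog,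
      exists_ratio_root_le := hder, tsum_eq_top := hqa }
  obtain ⟨W₀, hW₀, hKW₀, -, hfg⟩ := hincl
  exact stmt11_general hUopen hf hg hKcpt hKU (eventually_nhdsSet_iff_exists.2 ⟨W₀, hW₀, hKW₀, hfg⟩)
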